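/- Let q = 2^f with f ≥ 4, and let G be a finite group satisfying the two-prime hypothesis with normal subgroups N ≤ M such that M/N ≅ PSL_2(q) and the centralizer of M/N in G/N is trivial. Let B_2 be the union, over all irreducible characters θ of N that are not M-invariant, of cd(G|θ) \ cd(G/N). Then |B_2| ≤ 5. -/

import Mathlib

open CategoryTheory

/-- The set of degrees of the complex irreducible characters of `G`. -/
def charDegrees (G : Type) [Group G] : Set ℕ :=
  {n | ∃ V : FDRep ℂ G, Simple V ∧ Module.finrank ℂ V = n}

/-- `G` satisfies the two-prime hypothesis: for any distinct irreducible character degrees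
`a`, `b`, the gcd `gcd a b` has at most two prime divisors counted with multiplicity. -/
def TwoPrimeHypothesis (G : Type) [Group G] : Prop :=
  ∀ a ∈ charDegrees G, ∀ b ∈ charDegrees G, a ≠ b →
    (Nat.gcd a b).primeFactorsList.length ≤ 2

/-- A character `θ` of a subgroup `N ⊴ G` is `M`-invariant if it is fixed by conjugation by
every element of `M`. -/
def IsMInvariant {G : Type} [Group G] {N : Subgroup G} (M : Subgroup G)
    (θ : FDRep ℂ N) : Prop :=
  ∀ m ∈ M, ∀ x : N, ∀ hx : m * (x : G) * m⁻¹ ∈ N,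
    θ.character ⟨m * (x : G) * m⁻¹, hx⟩ = θ.character x

/-- `cd(G|θ)`: the set of degrees of irreducible characters of `G` whose restriction to `N`
contains `θ` as a constituent (detected by a nonzero inner product of characters). -/
def charDegreesOver (G : Type) [Group G] (N : Subgroup G) (θ : FDRep ℂ N) : Set ℕ :=
  {n | ∃ V : FDRep ℂ G, Simple V ∧ Module.finrank ℂ V = n ∧
    (∑ᶠ x : N, V.character (x : G) * θ.character x⁻¹) ≠ 0}

/-- `PSL₂(F)`: the quotient of `SL₂(F)` by its center. -/
abbrev PSL2 (F : Type) [Field F] : Type :=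
  Matrix.SpecialLinearGroup (Fin 2) F ⧸
    Subgroup.center (Matrix.SpecialLinearGroup (Fin 2) F)

section PartA1
open CategoryTheory
open scoped Classical
set_option linter.unusedSectionVars false
set_option linter.unusedSimpArgs false
set_option linter.unusedVariables false

section RepBase
variable {K : Type} [Group K] [Fintype K]

noncomputable instance instInvK : Invertible (Nat.card K : ℂ) :=
  invertibleOfNonzero (by exact_mod_cast Nat.card_pos.ne')

theorem rep_trace_add {V : Type} [AddCommGroup V] [Module ℂ V] [FiniteDimensional ℂ V]
    (ρ : Representation ℂ K V) (A B : Subrepresentation ρ) (h : IsCompl A.toSubmodule B.toSubmodule)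
    (g : K) : ρ.character g = A.toRepresentation.character g + B.toRepresentation.character g := by
  have hIntl : DirectSum.IsInternal (fun b : Bool => cond b A.toSubmodule B.toSubmodule) := by
    rw [DirectSum.isInternal_submodule_iff_isCompl (i := true) (j := false)]
    · exact h
    · simp
    · ext b; cases b <;> simp
  have hm : ∀ b : Bool, Set.MapsTo (ρ g) (cond b A.toSubmodule B.toSubmodule : Submodule ℂ V)
      (cond b A.toSubmodule B.toSubmodule : Submodule ℂ V) := by
    intro b; cases b
    · intro v hv; exact B.apply_mem_toSubmodule g hv
    · intro v hv; exact A.apply_mem_toSubmodule g hv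
  have := LinearMap.trace_eq_sum_trace_restrict hIntl (f := ρ g) hm
  rw [Representation.character, this, Fintype.sum_bool]
  rfl

theorem rep_decomp (n : ℕ) : ∀ (V : Type) [AddCommGroup V] [Module ℂ V] [FiniteDimensional ℂ V]
    (ρ : Representation ℂ K V), Module.finrank ℂ V = n →
    ∃ l : List (FDRep ℂ K), (∀ W ∈ l, Simple W) ∧
      ∀ g, ρ.character g = (l.map (fun W => W.character g)).sum := by
  induction n using Nat.strong_induction_on with
  | _ n ih =>
  intro V _ _ _ ρ hn
  rcases Nat.eq_zero_or_pos n with h0 | hpos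
  · refine ⟨[], by simp, fun g => ?_⟩
    have : Subsingleton V := by
      apply Module.finrank_zero_iff (R := ℂ) |>.1; omega
    have : ρ g = 0 := Subsingleton.elim _ _
    simp [Representation.character, this]
  · have hnt : Nontrivial V := Module.nontrivial_of_finrank_pos (R := ℂ) (by omega)
    by_cases hirr : Representation.IsIrreducible ρ
    · refine ⟨[FDRep.of ρ], ?_, fun g => by simp; rfl⟩
      simp only [List.mem_singleton, forall_eq]
      rw [FDRep.simple_iff_char_is_norm_one]
      have := Representation.char_orthonormal ρ ρ
      rw [if_pos ⟨Representation.Equiv.refl ρ⟩] at this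
      have hc : (Nat.card K : ℂ) ≠ 0 := by exact_mod_cast Nat.card_pos.ne'
      rw [inv_mul_eq_iff_eq_mul₀ hc] at this
      rw [mul_one] at this
      exact this
    · have : ∃ A : Subrepresentation ρ, A ≠ ⊥ ∧ A ≠ ⊤ := by
        by_contra hcon
        push Not at hcon
        apply hirr
        have hne : (⊥ : Subrepresentation ρ) ≠ ⊤ := by
          intro h
          have := congrArg Subrepresentation.toSubmodule h
          exact bot_ne_top this
        exact { exists_pair_ne := ⟨⊥, ⊤, hne⟩
                eq_bot_or_eq_top := fun A => by
                  by_cases hA : A = ⊥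
                  · exact Or.inl hA
                  · exact Or.inr (hcon A hA) }
      obtain ⟨A, hA1, hA2⟩ := this
      have hss : Representation.IsSemisimpleRepresentation ρ := inferInstance
      obtain ⟨B, hAB⟩ := (hss : ComplementedLattice (Subrepresentation ρ)).exists_isCompl A
      have hc : IsCompl A.toSubmodule B.toSubmodule := by
        constructor
        · rw [disjoint_iff]
          have := congrArg Subrepresentation.toSubmodule hAB.inf_eq_bot
          exact this
        · rw [codisjoint_iff]
          have := congrArg Subrepresentation.toSubmodule hAB.sup_eq_top
          exact this
      have hfr := Submodule.finrank_add_eq_of_isCompl hc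
      have hA1' : A.toSubmodule ≠ ⊥ := fun h => hA1 (Subrepresentation.toSubmodule_injective h)
      have hA2' : A.toSubmodule ≠ ⊤ := fun h => hA2 (Subrepresentation.toSubmodule_injective h)
      have h1 : 0 < Module.finrank ℂ A.toSubmodule := by
        rw [Module.finrank_pos_iff]; exact Submodule.nontrivial_iff_ne_bot.2 hA1'
      have h2 := Submodule.finrank_lt hA2'
      obtain ⟨l1, hl1, hl1'⟩ := ih _ (by omega) A.toSubmodule A.toRepresentation rfl
      obtain ⟨l2, hl2, hl2'⟩ := ih (Module.finrank ℂ B.toSubmodule) (by omega) B.toSubmodule B.toRepresentation rfl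
      refine ⟨l1 ++ l2, ?_, fun g => ?_⟩
      · intro W hW; rcases List.mem_append.1 hW with h | h
        · exact hl1 W h
        · exact hl2 W h
      · rw [rep_trace_add ρ A B hc, hl1', hl2']; simp

theorem schur_scalar (V : FDRep ℂ K) (hV : Simple V) (T : V →ₗ[ℂ] V)
    (hT : ∀ g, T ∘ₗ V.ρ g = V.ρ g ∘ₗ T) : ∃ c : ℂ, T = c • LinearMap.id := by
  have h1 : Module.finrank ℂ (Representation.IntertwiningMap V.ρ V.ρ) = 1 := by
    have h := Representation.card_inv_mul_sum_char_mul_char_eq_finrank V.ρ V.ρ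
    have h2 := (FDRep.simple_iff_char_is_norm_one (V := V)).1 hV
    have h3 : ∑ g : K, Representation.character V.ρ g * Representation.character V.ρ g⁻¹ = Nat.card K := h2
    rw [h3, inv_mul_cancel₀ (by exact_mod_cast Nat.card_pos.ne')] at h
    exact_mod_cast h.symm
  have hid : Representation.IntertwiningMap.id V.ρ ≠ 0 := by
    intro h
    have h0 : ∀ f : Representation.IntertwiningMap V.ρ V.ρ, f = 0 := by
      intro f
      apply Representation.IntertwiningMap.ext
      have := congrArg Representation.IntertwiningMap.toLinearMap h
      ext v
      have h2 : v = 0 := LinearMap.congr_fun this v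
      subst h2; simp
    have : Subsingleton (Representation.IntertwiningMap V.ρ V.ρ) := ⟨fun a b => by rw [h0 a, h0 b]⟩
    rw [Module.finrank_zero_of_subsingleton] at h1
    omega
  obtain ⟨c, hc⟩ := (finrank_eq_one_iff_of_nonzero' _ hid).1 h1 ⟨T, fun g => hT g⟩
  refine ⟨c, ?_⟩
  have := congrArg Representation.IntertwiningMap.toLinearMap hc
  exact this.symm

theorem schur_char (V : FDRep ℂ K) (hV : Simple V) (f : K → ℂ)
    (hf : ∀ g x, f (g * x * g⁻¹) = f x) (y : K) :
    V.character 1 * ∑ x, f x⁻¹ * V.character (x * y) =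
      (∑ x, f x⁻¹ * V.character x) * V.character y := by
  have hcomm : ∀ g, (∑ x, f x⁻¹ • V.ρ x) ∘ₗ V.ρ g = V.ρ g ∘ₗ (∑ x, f x⁻¹ • V.ρ x) := by
    intro g
    show (∑ x, f x⁻¹ • V.ρ x) * V.ρ g = V.ρ g * (∑ x, f x⁻¹ • V.ρ x)
    rw [Finset.sum_mul, Finset.mul_sum]
    refine Fintype.sum_equiv (MulAut.conj g⁻¹).toEquiv _ _ fun x => ?_
    have hinv : (MulAut.conj g⁻¹ x)⁻¹ = g⁻¹ * x⁻¹ * g⁻¹⁻¹ := by simp [MulAut.conj_apply, mul_assoc]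
    show _ = V.ρ g * (f (MulAut.conj g⁻¹ x)⁻¹ • V.ρ (MulAut.conj g⁻¹ x))
    rw [hinv, hf, smul_mul_assoc, mul_smul_comm, ← map_mul, ← map_mul]
    simp [MulAut.conj_apply, mul_assoc]
  obtain ⟨c, hc⟩ := schur_scalar V hV _ hcomm
  have h1 : ∀ y, ∑ x, f x⁻¹ * V.character (x * y) = c * V.character y := by
    intro y
    have := congrArg (fun T => LinearMap.trace ℂ V (T * V.ρ y)) hc
    simp only [Finset.sum_mul, map_sum, smul_mul_assoc, ← map_mul, map_smul, smul_eq_mul] at this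
    exact this
  have h2 := h1 1
  simp only [mul_one] at h2
  rw [h1, h2]; ring

end RepBase
end PartA1

section PartA2
open CategoryTheory
open scoped Classical
set_option linter.unusedSectionVars false
set_option linter.unusedSimpArgs false
set_option linter.unusedVariables false

section CharBase
variable {G : Type} [Group G] [Fintype G]

/-- extension by zero of a function on a subgroup -/
noncomputable def ext0 (X : Subgroup G) (a : X → ℂ) (g : G) : ℂ :=
  if h : g ∈ X then a ⟨g, h⟩ else 0

def CharOn (X : Subgroup G) (χ : G → ℂ) : Prop :=
  ∃ V : FDRep ℂ X, χ = ext0 X V.character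

def IrrOn (X : Subgroup G) (χ : G → ℂ) : Prop :=
  ∃ V : FDRep ℂ X, Simple V ∧ χ = ext0 X V.character

noncomputable def ip (X : Subgroup G) (χ ψ : G → ℂ) : ℂ :=
  (Nat.card X : ℂ)⁻¹ * ∑ g, χ g * ψ g⁻¹

theorem ext0_mem {X : Subgroup G} {a : X → ℂ} {g : G} (h : g ∈ X) : ext0 X a g = a ⟨g, h⟩ := by
  simp [ext0, h]

theorem ext0_coe {X : Subgroup G} {a : X → ℂ} (g : X) : ext0 X a g = a g := by
  simp [ext0]

theorem ext0_not {X : Subgroup G} {a : X → ℂ} {g : G} (h : g ∉ X) : ext0 X a g = 0 := by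
  simp [ext0, h]

theorem sum_sub (X : Subgroup G) (F : G → ℂ) (hF : ∀ g, g ∉ X → F g = 0) :
    ∑ g, F g = ∑ x : X, F x := by
  trans ∑ g ∈ Finset.univ.filter (fun g => g ∈ X), F g
  · rw [Finset.sum_filter]
    refine Finset.sum_congr rfl fun g _ => ?_
    split_ifs with h
    · rfl
    · exact hF g h
  · exact Finset.sum_subtype _ (by simp) F

theorem cardne (X : Subgroup G) : (Nat.card X : ℂ) ≠ 0 := by exact_mod_cast Nat.card_pos.ne'

theorem CharOn.of_rep {X : Subgroup G} {V : Type} [AddCommGroup V] [Module ℂ V]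
    [FiniteDimensional ℂ V] (ρ : Representation ℂ X V) : CharOn X (ext0 X ρ.character) :=
  ⟨FDRep.of ρ, rfl⟩

theorem IrrOn.charOn {X : Subgroup G} {χ : G → ℂ} (h : IrrOn X χ) : CharOn X χ := by
  obtain ⟨V, _, h⟩ := h; exact ⟨V, h⟩

theorem CharOn.off {X : Subgroup G} {χ : G → ℂ} (h : CharOn X χ) {g : G} (hg : g ∉ X) : χ g = 0 := by
  obtain ⟨V, rfl⟩ := h; exact ext0_not hg

theorem CharOn.deg {X : Subgroup G} {χ : G → ℂ} (h : CharOn X χ) : ∃ n : ℕ, χ 1 = n := by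
  obtain ⟨V, rfl⟩ := h
  exact ⟨Module.finrank ℂ V, by rw [ext0_mem X.one_mem]; exact V.char_one⟩

theorem ip_ext0 (X : Subgroup G) (a b : X → ℂ) :
    ip X (ext0 X a) (ext0 X b) = (Nat.card X : ℂ)⁻¹ * ∑ x : X, a x * b x⁻¹ := by
  rw [ip, sum_sub X]
  · congr 1
    refine Finset.sum_congr rfl fun x _ => ?_
    rw [ext0_coe, ← Subgroup.coe_inv, ext0_coe]
  · intro g hg; rw [ext0_not hg, zero_mul]

theorem ip_nat {X : Subgroup G} {χ ψ : G → ℂ} (h1 : CharOn X χ) (h2 : CharOn X ψ) :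
    ∃ n : ℕ, ip X χ ψ = n := by
  obtain ⟨V, rfl⟩ := h1
  obtain ⟨W, rfl⟩ := h2
  rw [ip_ext0]
  exact ⟨_, Representation.card_inv_mul_sum_char_mul_char_eq_finrank W.ρ V.ρ⟩

theorem IrrOn.norm {X : Subgroup G} {χ : G → ℂ} (h : IrrOn X χ) : ip X χ χ = 1 := by
  obtain ⟨V, hV, rfl⟩ := h
  rw [ip_ext0]
  have := (FDRep.simple_iff_char_is_norm_one (V := V)).1 hV
  rw [this, inv_mul_cancel₀ (cardne X)]

theorem IrrOn.ortho {X : Subgroup G} {χ ψ : G → ℂ} (h : IrrOn X χ) (h' : IrrOn X ψ) (hne : χ ≠ ψ) :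
    ip X χ ψ = 0 := by
  obtain ⟨V, hV, rfl⟩ := h
  obtain ⟨W, hW, rfl⟩ := h'
  rw [ip_ext0]
  have := FDRep.char_orthonormal V W
  rw [if_neg] at this
  · rw [← this]
  · rintro ⟨i⟩
    apply hne
    rw [FDRep.char_iso i]

theorem IrrOn.ip_eq {X : Subgroup G} {χ ψ : G → ℂ} (h : IrrOn X χ) (h' : IrrOn X ψ) :
    ip X χ ψ = if χ = ψ then 1 else 0 := by
  split_ifs with hh
  · subst hh; exact h.norm
  · exact h.ortho h' hh

theorem CharOn.irr_of_norm {X : Subgroup G} {χ : G → ℂ} (h : CharOn X χ) (hn : ip X χ χ = 1) :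
    IrrOn X χ := by
  obtain ⟨V, rfl⟩ := h
  refine ⟨V, ?_, rfl⟩
  rw [FDRep.simple_iff_char_is_norm_one]
  rw [ip_ext0, inv_mul_eq_iff_eq_mul₀ (cardne X), mul_one] at hn
  exact hn

theorem IrrOn.deg {X : Subgroup G} {χ : G → ℂ} (h : IrrOn X χ) : ∃ n : ℕ, 0 < n ∧ χ 1 = n := by
  obtain ⟨V, hV, rfl⟩ := id h
  refine ⟨Module.finrank ℂ V, ?_, by rw [ext0_mem X.one_mem]; exact V.char_one⟩
  by_contra h0
  have h0 : Module.finrank ℂ V = 0 := by omega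
  have hs : Subsingleton V := Module.finrank_zero_iff (R := ℂ) |>.1 h0
  have := h.norm
  rw [ip_ext0] at this
  have h2 : ∀ x, V.character x = 0 := fun x => by
    have : V.ρ x = 0 := Subsingleton.elim _ _
    simp [FDRep.character, this]
  simp [h2] at this

theorem CharOn.decomp {X : Subgroup G} {χ : G → ℂ} (h : CharOn X χ) :
    ∃ l : List (G → ℂ), (∀ ψ ∈ l, IrrOn X ψ) ∧ χ = l.sum := by
  obtain ⟨V, rfl⟩ := h
  obtain ⟨l, hl, hl'⟩ := rep_decomp _ V V.ρ rfl
  refine ⟨l.map (fun W => ext0 X W.character), ?_, ?_⟩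
  · intro ψ hψ
    obtain ⟨W, hW, rfl⟩ := List.mem_map.1 hψ
    exact ⟨W, hl W hW, rfl⟩
  · have h1 : V.character = fun g => (l.map (fun W => W.character g)).sum := by
      ext g; exact hl' g
    rw [h1]
    clear h1 hl hl'
    induction l with
    | nil => ext g; simp [ext0]
    | cons W l ih =>
      simp only [List.map_cons, List.sum_cons]
      rw [← ih]
      ext g
      by_cases hg : g ∈ X
      · simp [ext0, hg]
      · simp [ext0, hg]

theorem CharOn.conj {X : Subgroup G} {χ : G → ℂ} (h : CharOn X χ) {g : G} (hg : g ∈ X) (x : G) :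
    χ (g * x * g⁻¹) = χ x := by
  by_cases hx : x ∈ X
  · obtain ⟨V, rfl⟩ := h
    rw [ext0_mem hx, ext0_mem (X.mul_mem (X.mul_mem hg hx) (X.inv_mem hg))]
    exact V.char_conj ⟨x, hx⟩ ⟨g, hg⟩
  · rw [h.off hx, h.off]
    intro h2
    apply hx
    have := X.mul_mem (X.mul_mem (X.inv_mem hg) h2) hg
    simpa [mul_assoc] using this

noncomputable def resF (X : Subgroup G) (χ : G → ℂ) (g : G) : ℂ := if g ∈ X then χ g else 0

theorem CharOn.res {X K : Subgroup G} {χ : G → ℂ} (h : CharOn K χ) (hX : X ≤ K) :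
    CharOn X (resF X χ) := by
  obtain ⟨V, rfl⟩ := h
  have := CharOn.of_rep (X := X) (MonoidHom.comp V.ρ (Subgroup.inclusion hX) : Representation ℂ X V)
  convert this using 1
  ext g
  by_cases hg : g ∈ X
  · simp only [resF, hg, if_true]
    rw [ext0_mem (hX hg), ext0_mem hg]; rfl
  · simp [resF, hg, ext0_not hg]

theorem ip_res {X : Subgroup G} {χ ψ : G → ℂ} (h : CharOn X ψ) : ip X (resF X χ) ψ = ip X χ ψ := by
  unfold ip
  congr 1
  refine Finset.sum_congr rfl fun g _ => ?_
  by_cases hg : g ∈ X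
  · simp [resF, hg]
  · rw [h.off (g := g⁻¹) (by simpa using hg)]; simp

theorem CharOn.conjBy {X : Subgroup G} {χ : G → ℂ} (h : CharOn X χ) (g : G)
    (hg : ∀ x, x ∈ X ↔ g * x * g⁻¹ ∈ X) : CharOn X (fun x => χ (g * x * g⁻¹)) := by
  obtain ⟨V, rfl⟩ := h
  let φ : X →* X :=
    { toFun := fun x => ⟨g * x * g⁻¹, (hg x).1 x.2⟩
      map_one' := by ext; simp
      map_mul' := fun a b => by ext; simp [mul_assoc] }
  have := CharOn.of_rep (X := X) (MonoidHom.comp V.ρ φ : Representation ℂ X V)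
  convert this using 1
  ext x
  by_cases hx : x ∈ X
  · rw [ext0_mem hx, ext0_mem ((hg x).1 hx)]; rfl
  · rw [ext0_not hx, ext0_not (fun h => hx ((hg x).2 h))]

theorem IrrOn.conjBy {X : Subgroup G} {χ : G → ℂ} (h : IrrOn X χ) (g : G)
    (hg : ∀ x, x ∈ X ↔ g * x * g⁻¹ ∈ X) : IrrOn X (fun x => χ (g * x * g⁻¹)) := by
  refine (h.charOn.conjBy g hg).irr_of_norm ?_
  rw [← h.norm]
  unfold ip
  congr 1
  refine Fintype.sum_equiv (MulAut.conj g).toEquiv _ _ fun x => ?_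
  simp [mul_assoc]

theorem CharOn.twist {X : Subgroup G} {χ : G → ℂ} (h : CharOn X χ) (μ : G → ℂ) (h1 : μ 1 = 1)
    (hμ : ∀ x ∈ X, ∀ y ∈ X, μ (x * y) = μ x * μ y) : CharOn X (fun x => μ x * χ x) := by
  obtain ⟨V, rfl⟩ := h
  let ρ : Representation ℂ X V :=
    { toFun := fun x => μ x • V.ρ x
      map_one' := by simp [h1]
      map_mul' := fun a b => by
        rw [smul_mul_smul_comm, ← map_mul, ← hμ a a.2 b b.2]; rfl }
  have := CharOn.of_rep (X := X) ρ
  convert this using 1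
  ext x
  by_cases hx : x ∈ X
  · rw [ext0_mem hx, ext0_mem hx]
    show _ = LinearMap.trace ℂ V (μ x • V.ρ ⟨x, hx⟩)
    rw [map_smul]; rfl
  · rw [ext0_not hx, ext0_not hx, mul_zero]

theorem IrrOn.twist {X : Subgroup G} {χ : G → ℂ} (h : IrrOn X χ) (μ : G → ℂ) (h1 : μ 1 = 1)
    (hμ : ∀ x ∈ X, ∀ y ∈ X, μ (x * y) = μ x * μ y) : IrrOn X (fun x => μ x * χ x) := by
  refine (h.charOn.twist μ h1 hμ).irr_of_norm ?_
  rw [← h.norm]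
  unfold ip
  congr 1
  refine Finset.sum_congr rfl fun x _ => ?_
  by_cases hx : x ∈ X
  · have := hμ x hx x⁻¹ (X.inv_mem hx)
    rw [mul_inv_cancel, h1] at this
    calc μ x * χ x * (μ x⁻¹ * χ x⁻¹) = (μ x * μ x⁻¹) * (χ x * χ x⁻¹) := by ring
      _ = _ := by rw [← this, one_mul]
  · simp [h.charOn.off hx]

theorem perm_rep {K Ω : Type} [Group K] [Fintype Ω] [MulAction K Ω] :
    ∃ ρ : Representation ℂ K (Ω → ℂ), ∀ g, ρ.character g = (Nat.card (MulAction.fixedBy Ω g) : ℂ) := by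
  let ρ : Representation ℂ K (Ω → ℂ) :=
    { toFun := fun g => LinearMap.funLeft ℂ ℂ (fun w => g⁻¹ • w)
      map_one' := by ext; simp [LinearMap.funLeft]
      map_mul' := fun a b => by ext; simp [LinearMap.funLeft, mul_smul] }
  refine ⟨ρ, fun g => ?_⟩
  rw [Representation.character, LinearMap.trace_eq_matrix_trace ℂ (Pi.basisFun ℂ Ω), Matrix.trace]
  have : ∀ i, ((LinearMap.toMatrix (Pi.basisFun ℂ Ω) (Pi.basisFun ℂ Ω)) (ρ g)).diag i
      = if g • i = i then 1 else 0 := by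
    intro i
    simp only [Matrix.diag, LinearMap.toMatrix_apply, Pi.basisFun_apply, Pi.basisFun_repr]
    show (Pi.single i 1 : Ω → ℂ) (g⁻¹ • i) = _
    rw [Pi.single_apply]
    rw [inv_smul_eq_iff]
    exact if_congr eq_comm rfl rfl
  simp only [this]
  rw [Finset.sum_ite, Finset.sum_const, Finset.sum_const_zero, add_zero, nsmul_eq_mul, mul_one]
  congr 1
  rw [Nat.card_eq_fintype_card, Fintype.card_subtype]
  rfl

theorem regular (X : Subgroup G) : CharOn X (fun g => if g = 1 then (Nat.card X : ℂ) else 0) := by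
  obtain ⟨ρ, hρ⟩ := perm_rep (K := X) (Ω := X)
  have := CharOn.of_rep ρ
  convert this using 1
  ext g
  by_cases hg : g ∈ X
  · rw [ext0_mem hg, hρ]
    split_ifs with h1
    · subst h1
      congr 1
      apply Nat.card_congr
      refine (Equiv.Set.univ X).symm.trans (Equiv.setCongr ?_)
      ext w
      simp only [Set.mem_univ, MulAction.mem_fixedBy, true_iff]
      exact one_smul X w
    · have : IsEmpty (MulAction.fixedBy X (⟨g, hg⟩ : X)) := by
        refine ⟨fun ⟨w, hw⟩ => h1 ?_⟩
        have h2 : (⟨g, hg⟩ : X) * w = w := hw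
        rw [mul_eq_right] at h2
        exact congrArg Subtype.val h2
      simp
  · rw [ext0_not hg, if_neg]
    rintro rfl; exact hg X.one_mem

theorem IrrOn.schur {X : Subgroup G} {χ : G → ℂ} (h : IrrOn X χ) (f : G → ℂ)
    (hf0 : ∀ g, g ∉ X → f g = 0) (hf : ∀ g ∈ X, ∀ x, f (g * x * g⁻¹) = f x) {y : G} (hy : y ∈ X) :
    χ 1 * ∑ x, f x⁻¹ * χ (x * y) = (∑ x, f x⁻¹ * χ x) * χ y := by
  obtain ⟨V, hV, rfl⟩ := h
  rw [sum_sub X, sum_sub X]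
  · have := schur_char V hV (fun x => f x) (fun g x => hf g g.2 x) ⟨y, hy⟩
    rw [ext0_mem X.one_mem, ext0_mem hy]
    have e1 : ∀ x : X, f (x : G)⁻¹ * ext0 X V.character (x * y) =
        f (x⁻¹ : X) * V.character (x * ⟨y, hy⟩) := fun x => by
      rw [ext0_mem (X.mul_mem x.2 hy)]; rfl
    have e2 : ∀ x : X, f (x : G)⁻¹ * ext0 X V.character x =
        f (x⁻¹ : X) * V.character x := fun x => by
      rw [ext0_coe]; rfl
    simp only [e1, e2]
    exact this
  · intro g hg; rw [hf0 _ (by simpa using hg), zero_mul]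
  · intro g hg; rw [hf0 _ (by simpa using hg), zero_mul]

/-- linear characters are multiplicative -/
theorem IrrOn.linear {X : Subgroup G} {χ : G → ℂ} (h : IrrOn X χ) (h1 : χ 1 = 1) :
    ∀ x ∈ X, ∀ y ∈ X, χ (x * y) = χ x * χ y := by
  obtain ⟨V, hV, rfl⟩ := h
  rw [ext0_mem X.one_mem] at h1
  have h2 : Module.finrank ℂ V = 1 := by
    have := V.char_one
    have h3 : (Module.finrank ℂ V : ℂ) = 1 := by rw [← this]; exact h1
    exact_mod_cast h3
  intro x hx y hy
  rw [ext0_mem hx, ext0_mem hy, ext0_mem (X.mul_mem hx hy)]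
  have key : ∀ T : V →ₗ[ℂ] V, T = LinearMap.trace ℂ V T • LinearMap.id := by
    intro T
    obtain ⟨v, hv, hv2⟩ := finrank_eq_one_iff'.1 h2
    obtain ⟨c, hc⟩ := hv2 (T v)
    have hT : T = c • LinearMap.id := by
      ext w
      obtain ⟨d, rfl⟩ := hv2 w
      simp [← hc, smul_smul, mul_comm]
    rw [hT]
    simp [h2]
  show LinearMap.trace ℂ V (V.ρ ((⟨x, hx⟩ : X) * ⟨y, hy⟩)) = _
  rw [map_mul, key (V.ρ ⟨x, hx⟩), smul_mul_assoc, map_smul]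
  rfl

theorem linear_irr {X : Subgroup G} (μ : G → ℂ) (h1 : μ 1 = 1) (h0 : ∀ x, x ∉ X → μ x = 0)
    (hμ : ∀ x ∈ X, ∀ y ∈ X, μ (x * y) = μ x * μ y) : IrrOn X μ := by
  have htriv : IrrOn X (ext0 X (fun _ => 1)) := by
    have : CharOn X (ext0 X (fun _ => 1)) := by
      have := CharOn.of_rep (Representation.trivial ℂ X ℂ)
      convert this using 2
      ext x
      simp [Representation.character]
    refine this.irr_of_norm ?_
    rw [ip_ext0]
    simp
  have := htriv.twist μ h1 hμ
  convert this using 1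
  ext x
  by_cases hx : x ∈ X
  · simp [ext0, hx]
  · simp [ext0, hx, h0 x hx]

end CharBase
end PartA2

section PartA3
open CategoryTheory
open scoped Classical
set_option linter.unusedSectionVars false
set_option linter.unusedSimpArgs false
set_option linter.unusedVariables false

section Clifford
variable {G : Type} [Group G] [Fintype G]

noncomputable def dg (χ : G → ℂ) : ℕ := ⌊(χ 1).re⌋₊
noncomputable def mu (X : Subgroup G) (χ ψ : G → ℂ) : ℕ := ⌊(ip X χ ψ).re⌋₊

theorem floor_cast {z : ℂ} (h : ∃ n : ℕ, z = n) : ((⌊z.re⌋₊ : ℕ) : ℂ) = z := by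
  obtain ⟨n, rfl⟩ := h; simp

theorem CharOn.dg_eq {X : Subgroup G} {χ : G → ℂ} (h : CharOn X χ) : (dg χ : ℂ) = χ 1 :=
  floor_cast h.deg

theorem IrrOn.dg_pos {X : Subgroup G} {χ : G → ℂ} (h : IrrOn X χ) : 0 < dg χ := by
  obtain ⟨n, hn, h2⟩ := h.deg
  have := h.charOn.dg_eq
  rw [h2] at this
  have : dg χ = n := by exact_mod_cast this
  omega

theorem CharOn.mu_eq {X K : Subgroup G} {χ ψ : G → ℂ} (h : CharOn K χ) (hX : X ≤ K)
    (h2 : CharOn X ψ) : (mu X χ ψ : ℂ) = ip X χ ψ := by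
  apply floor_cast
  rw [← ip_res h2]
  exact ip_nat (h.res hX) h2

theorem CharOn.mu_pos {X K : Subgroup G} {χ ψ : G → ℂ} (h : CharOn K χ) (hX : X ≤ K)
    (h2 : CharOn X ψ) : 0 < mu X χ ψ ↔ ip X χ ψ ≠ 0 := by
  rw [← h.mu_eq hX h2, Nat.cast_ne_zero, Nat.pos_iff_ne_zero]

theorem ip_add (X : Subgroup G) (a b ψ : G → ℂ) : ip X (a + b) ψ = ip X a ψ + ip X b ψ := by
  simp [ip, add_mul, Finset.sum_add_distrib, mul_add]

theorem ip_list (X : Subgroup G) (l : List (G → ℂ)) (ψ : G → ℂ) :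
    ip X l.sum ψ = (l.map (fun a => ip X a ψ)).sum := by
  induction l with
  | nil => simp [ip]
  | cons a l ih => simp [ip_add, ih]

theorem ip_count (X : Subgroup G) (l : List (G → ℂ)) (hl : ∀ φ ∈ l, IrrOn X φ) {ψ : G → ℂ}
    (h : IrrOn X ψ) : ip X l.sum ψ = l.count ψ := by
  rw [ip_list]
  induction l with
  | nil => simp
  | cons a l ih =>
    rw [List.map_cons, List.sum_cons, ih (fun φ hφ => hl φ (List.mem_cons_of_mem _ hφ)),
      (hl a List.mem_cons_self).ip_eq h, List.count_cons]
    by_cases hh : a = ψ <;> simp [hh, add_comm]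

/-- decomposition of a restricted character -/
theorem CharOn.resDecomp {X K : Subgroup G} {χ : G → ℂ} (h : CharOn K χ) (hX : X ≤ K) :
    ∃ l : List (G → ℂ), (∀ φ ∈ l, IrrOn X φ) ∧ resF X χ = l.sum ∧
      ∀ ψ, IrrOn X ψ → l.count ψ = mu X χ ψ := by
  obtain ⟨l, hl, hl'⟩ := (h.res hX).decomp
  refine ⟨l, hl, hl', fun ψ hψ => ?_⟩
  have := ip_count X l hl hψ
  rw [← hl', ip_res hψ.charOn, ← h.mu_eq hX hψ.charOn] at this
  exact_mod_cast this.symm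

theorem ip_sub_res {H T : Subgroup G} (hHT : H ≤ T) (χ : G → ℂ) {ψ : G → ℂ} (h : CharOn H ψ) :
    ip H (resF T χ) ψ = ip H χ ψ := by
  unfold ip
  congr 1
  refine Finset.sum_congr rfl fun g _ => ?_
  by_cases hg : g ∈ H
  · simp [resF, hHT hg]
  · rw [h.off (g := g⁻¹) (by simpa using hg)]; simp

theorem list_sum_le {l : List (G → ℂ)} {ξ : G → ℂ} (hξ : ξ ∈ l) (F : (G → ℂ) → ℕ) :
    F ξ ≤ (l.map F).sum :=
  List.single_le_sum (by simp) _ (List.mem_map_of_mem hξ)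

theorem mu_list {H T K : Subgroup G} {χ ψ : G → ℂ} (h : CharOn K χ) (hHT : H ≤ T) (hTK : T ≤ K)
    (hψ : IrrOn H ψ) {l : List (G → ℂ)} (hl : ∀ φ ∈ l, IrrOn T φ) (hl' : resF T χ = l.sum) :
    mu H χ ψ = (l.map (fun φ => mu H φ ψ)).sum := by
  have h1 := h.mu_eq (hHT.trans hTK) hψ.charOn
  rw [← ip_sub_res hHT χ hψ.charOn, hl', ip_list] at h1
  have h2 : (l.map (fun a => ip H a ψ)) = (l.map (fun φ => ((mu H φ ψ : ℕ) : ℂ))) := by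
    apply List.map_congr_left
    intro φ hφ
    exact ((hl φ hφ).charOn.mu_eq hHT hψ.charOn).symm
  rw [h2] at h1
  have : ((mu H χ ψ : ℕ) : ℂ) = (((l.map (fun φ => mu H φ ψ)).sum : ℕ) : ℂ) := by
    rw [h1, Nat.cast_list_sum, List.map_map]; rfl
  exact_mod_cast this

theorem mu_le {H T K : Subgroup G} {χ ψ ξ : G → ℂ} (h : CharOn K χ) (hHT : H ≤ T) (hTK : T ≤ K)
    (hψ : IrrOn H ψ) (hξ : IrrOn T ξ) (h1 : ip T χ ξ ≠ 0) : mu H ξ ψ ≤ mu H χ ψ := by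
  obtain ⟨l, hl, hl', hc⟩ := h.resDecomp hTK
  rw [mu_list h hHT hTK hψ hl hl']
  have : 0 < l.count ξ := by rw [hc ξ hξ]; exact (h.mu_pos hTK hξ.charOn).2 h1
  exact list_sum_le (List.count_pos_iff.1 this) (fun φ => mu H φ ψ)

theorem over_trans {H T K : Subgroup G} {χ ψ ξ : G → ℂ} (h : CharOn K χ) (hHT : H ≤ T) (hTK : T ≤ K)
    (hψ : IrrOn H ψ) (hξ : IrrOn T ξ) (h1 : ip T χ ξ ≠ 0) (h2 : ip H ξ ψ ≠ 0) : ip H χ ψ ≠ 0 := by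
  rw [← h.mu_pos (hHT.trans hTK) hψ.charOn]
  have := mu_le h hHT hTK hψ hξ h1
  have h3 := (hξ.charOn.mu_pos hHT hψ.charOn).2 h2
  omega

theorem exists_mid {H T K : Subgroup G} {χ ψ : G → ℂ} (h : CharOn K χ) (hHT : H ≤ T) (hTK : T ≤ K)
    (hψ : IrrOn H ψ) (h1 : ip H χ ψ ≠ 0) : ∃ ξ, IrrOn T ξ ∧ ip T χ ξ ≠ 0 ∧ ip H ξ ψ ≠ 0 := by
  obtain ⟨l, hl, hl', hc⟩ := h.resDecomp hTK
  have h2 := (h.mu_pos (hHT.trans hTK) hψ.charOn).2 h1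
  rw [mu_list h hHT hTK hψ hl hl'] at h2
  have : ∃ ξ ∈ l, 0 < mu H ξ ψ := by
    by_contra hcon
    push Not at hcon
    have : (l.map (fun φ => mu H φ ψ)).sum = 0 := by
      apply List.sum_eq_zero
      intro x hx
      obtain ⟨φ, hφ, rfl⟩ := List.mem_map.1 hx
      have := hcon φ hφ
      omega
    omega
  obtain ⟨ξ, hξ, hξ2⟩ := this
  refine ⟨ξ, hl ξ hξ, ?_, ?_⟩
  · rw [← h.mu_pos hTK (hl ξ hξ).charOn, ← hc ξ (hl ξ hξ)]
    exact List.count_pos_iff.2 hξ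
  · rwa [← (hl ξ hξ).charOn.mu_pos hHT hψ.charOn]

theorem ip_reg (X K : Subgroup G) (ψ : G → ℂ) :
    ip X (fun g => if g = 1 then (Nat.card K : ℂ) else 0) ψ =
      (Nat.card X : ℂ)⁻¹ * ((Nat.card K : ℂ) * ψ 1) := by
  unfold ip
  congr 1
  rw [Finset.sum_eq_single 1]
  · simp
  · intro b _ hb; simp [hb]
  · simp

theorem exists_over {H K : Subgroup G} {ψ : G → ℂ} (hHK : H ≤ K) (hψ : IrrOn H ψ) :
    ∃ χ, IrrOn K χ ∧ ip H χ ψ ≠ 0 := by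
  have h1 : ip H (fun g => if g = 1 then (Nat.card K : ℂ) else 0) ψ ≠ 0 := by
    rw [ip_reg, ← hψ.charOn.dg_eq]
    have := hψ.dg_pos
    have h2 : ((dg ψ : ℕ) : ℂ) ≠ 0 := by exact_mod_cast this.ne'
    exact mul_ne_zero (inv_ne_zero (cardne H)) (mul_ne_zero (cardne K) h2)
  obtain ⟨χ, hχ, _, h2⟩ := exists_mid (regular K) hHK le_rfl hψ h1
  exact ⟨χ, hχ, h2⟩

theorem frob_le {T K : Subgroup G} {χ ξ : G → ℂ} (hTK : T ≤ K) (hχ : IrrOn K χ) (hξ : IrrOn T ξ)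
    (h1 : ip T χ ξ ≠ 0) : dg χ * Nat.card T ≤ Nat.card K * dg ξ := by
  obtain ⟨l, hl, hl', hc⟩ := (regular K).resDecomp (le_refl K)
  have h2 := mu_list (regular K) hTK le_rfl hξ hl hl'
  have h3 := (regular K).mu_eq hTK hξ.charOn
  rw [ip_reg, ← hξ.charOn.dg_eq, ← div_eq_inv_mul, eq_div_iff (cardne T)] at h3
  have h3' : mu T (fun g => if g = 1 then (Nat.card K : ℂ) else 0) ξ * Nat.card T =
    Nat.card K * dg ξ := by exact_mod_cast h3
  have h4 := (regular K).mu_eq le_rfl hχ.charOn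
  rw [ip_reg, ← hχ.charOn.dg_eq, ← mul_assoc, inv_mul_cancel₀ (cardne K), one_mul] at h4
  have h4' : mu K (fun g => if g = 1 then (Nat.card K : ℂ) else 0) χ = dg χ := by exact_mod_cast h4
  rw [← hc χ hχ] at h4'
  have h5 : l.count χ * mu T χ ξ ≤ (l.map (fun φ => mu T φ ξ)).sum := by
    clear hc h4' h4 h3 h3' h2 hl' hl h1
    induction l with
    | nil => simp
    | cons a l ih =>
      rw [List.map_cons, List.sum_cons, List.count_cons]
      by_cases hh : a = χ
      · subst hh; simp; nlinarith
      · simp [hh]; omega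
  have h6 := (hχ.charOn.mu_pos hTK hξ.charOn).2 h1
  rw [← h3', ← h4', h2]
  have : l.count χ ≤ l.count χ * mu T χ ξ := Nat.le_mul_of_pos_right _ h6
  exact Nat.mul_le_mul_right _ (this.trans h5)

/-! conjugation -/

def cj (k : G) (ψ : G → ℂ) : G → ℂ := fun x => ψ (k * x * k⁻¹)

def stabIn (K : Subgroup G) (ψ : G → ℂ) : Subgroup G where
  carrier := {k | k ∈ K ∧ cj k ψ = ψ}
  one_mem' := ⟨K.one_mem, by ext; simp [cj]⟩
  mul_mem' := by
    rintro a b ⟨ha, ha'⟩ ⟨hb, hb'⟩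
    refine ⟨K.mul_mem ha hb, ?_⟩
    ext x
    have h1 := congrFun hb' x
    have h2 := congrFun ha' (b * x * b⁻¹)
    simp only [cj] at *
    rw [← h1, ← h2]; simp [mul_assoc]
  inv_mem' := by
    rintro a ⟨ha, ha'⟩
    refine ⟨K.inv_mem ha, ?_⟩
    ext x
    have h2 := congrFun ha' (a⁻¹ * x * a)
    simp only [cj] at *
    simp [mul_assoc] at h2 ⊢
    exact h2.symm

theorem mem_stabIn {K : Subgroup G} {ψ : G → ℂ} {k : G} :
    k ∈ stabIn K ψ ↔ k ∈ K ∧ ∀ x, ψ (k * x * k⁻¹) = ψ x :=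
  ⟨fun h => ⟨h.1, congrFun h.2⟩, fun h => ⟨h.1, funext h.2⟩⟩

theorem stabIn_le (K : Subgroup G) (ψ : G → ℂ) : stabIn K ψ ≤ K := fun k h => h.1

theorem cj_cj (a b : G) (ψ : G → ℂ) : cj b (cj a ψ) = cj (a * b) ψ := by
  ext x; simp [cj, mul_assoc]

noncomputable def orb (K : Subgroup G) (ψ : G → ℂ) : Finset (G → ℂ) :=
  (Finset.univ.filter (fun k => k ∈ K)).image (fun k => cj k ψ)

theorem mem_orb {K : Subgroup G} {ψ φ : G → ℂ} : φ ∈ orb K ψ ↔ ∃ k ∈ K, cj k ψ = φ := by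
  simp [orb]

theorem card_filter_mem (K : Subgroup G) : (Finset.univ.filter (fun k => k ∈ K)).card = Nat.card K := by
  rw [Nat.card_eq_fintype_card, Fintype.card_subtype]

theorem orb_card (K : Subgroup G) (ψ : G → ℂ) :
    (orb K ψ).card * Nat.card (stabIn K ψ) = Nat.card K := by
  rw [← card_filter_mem K, ← card_filter_mem (stabIn K ψ)]
  rw [Finset.card_eq_sum_card_fiberwise (f := fun k => cj k ψ) (t := orb K ψ)
    (s := Finset.univ.filter (fun k => k ∈ K))]
  · symm
    apply Finset.sum_const_nat
    intro φ hφ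
    obtain ⟨k0, hk0, rfl⟩ := mem_orb.1 hφ
    refine Finset.card_bij (fun k _ => k * k0⁻¹) ?_ ?_ ?_
    · intro k hk
      simp only [Finset.mem_filter, Finset.mem_univ, true_and] at hk ⊢
      refine ⟨K.mul_mem hk.1 (K.inv_mem hk0), ?_⟩
      rw [← cj_cj, hk.2, cj_cj]; ext; simp [cj]
    · intro a _ b _ h; simpa using h
    · intro b hb
      simp only [Finset.mem_filter, Finset.mem_univ, true_and] at hb
      refine ⟨b * k0, ?_, by simp⟩
      simp only [Finset.mem_filter, Finset.mem_univ, true_and]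
      refine ⟨K.mul_mem hb.1 hk0, ?_⟩
      rw [← cj_cj, hb.2]
  · intro k hk
    have hk' : k ∈ K := by simpa using hk
    exact mem_orb.2 ⟨k, hk', rfl⟩

theorem conv0 {H : Subgroup G} {ψ ψ' : G → ℂ} (h : IrrOn H ψ) (h' : IrrOn H ψ') (hne : ψ ≠ ψ')
    (y : G) : ∑ x, ψ' x⁻¹ * ψ (x * y) = 0 := by
  by_cases hy : y ∈ H
  · have h1 := h.schur ψ' (fun g hg => h'.charOn.off hg) (fun g hg x => h'.charOn.conj hg x) hy
    have h2 := h.ortho h' hne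
    rw [ip, mul_eq_zero] at h2
    have h3 := h2.resolve_left (inv_ne_zero (cardne H))
    have h4 : ∑ x, ψ' x⁻¹ * ψ x = 0 := by rw [← h3]; exact Finset.sum_congr rfl fun _ _ => mul_comm _ _
    rw [h4, zero_mul, mul_eq_zero] at h1
    refine h1.resolve_left ?_
    rw [← h.charOn.dg_eq]; exact_mod_cast h.dg_pos.ne'
  · refine Finset.sum_eq_zero fun x _ => ?_
    by_cases hx : x ∈ H
    · rw [h.charOn.off (g := x * y), mul_zero]
      intro h2
      exact hy (by simpa using H.mul_mem (H.inv_mem hx) h2)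
    · rw [h'.charOn.off (g := x⁻¹) (by simpa using hx), zero_mul]

/-- `K` normalizes `H` -/
def Nrm (K H : Subgroup G) : Prop := ∀ k ∈ K, ∀ x, x ∈ H ↔ k * x * k⁻¹ ∈ H

theorem nrm_of_normal (K H : Subgroup G) [H.Normal] : Nrm K H := by
  intro k _ x
  refine ⟨fun h => Subgroup.Normal.conj_mem ‹_› x h k, fun h => ?_⟩
  have := Subgroup.Normal.conj_mem ‹H.Normal› _ h k⁻¹
  simpa [mul_assoc] using this

theorem Nrm.mono {K K' H : Subgroup G} (h : Nrm K H) (hK : K' ≤ K) : Nrm K' H :=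
  fun k hk => h k (hK hk)

theorem ip_cj {K H : Subgroup G} {χ ψ : G → ℂ} (hχ : CharOn K χ) {k : G} (hk : k ∈ K) :
    ip H χ (cj k ψ) = ip H χ ψ := by
  unfold ip
  congr 1
  refine Fintype.sum_equiv (MulAut.conj k).toEquiv _ _ fun x => ?_
  have := hχ.conj hk x
  simp [cj, mul_assoc] at this ⊢
  exact Or.inl this.symm

noncomputable def csum (K : Subgroup G) (ψ : G → ℂ) : G → ℂ :=
  fun x => ∑ k ∈ Finset.univ.filter (fun k => k ∈ K), cj k ψ x

theorem csum_class (K : Subgroup G) (ψ : G → ℂ) (g : G) (hg : g ∈ K) (x : G) :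
    csum K ψ (g * x * g⁻¹) = csum K ψ x := by
  unfold csum
  refine Finset.sum_bij (fun k _ => k * g) ?_ ?_ ?_ ?_
  · intro k hk; simp only [Finset.mem_filter, Finset.mem_univ, true_and] at hk ⊢
    exact K.mul_mem hk hg
  · intro a _ b _ h; simpa using h
  · intro b hb
    simp only [Finset.mem_filter, Finset.mem_univ, true_and] at hb
    refine ⟨b * g⁻¹, ?_, by simp⟩
    simp only [Finset.mem_filter, Finset.mem_univ, true_and]
    exact K.mul_mem hb (K.inv_mem hg)
  · intro k _; simp [cj, mul_assoc]

theorem csum_ip {K H : Subgroup G} {χ ψ : G → ℂ} (hχ : CharOn K χ) :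
    ∑ x, csum K ψ x⁻¹ * χ x = (Nat.card K : ℂ) * ((Nat.card H : ℂ) * ip H χ ψ) := by
  unfold csum
  simp_rw [Finset.sum_mul]
  rw [Finset.sum_comm]
  rw [Finset.sum_congr rfl (g := fun _ => (Nat.card H : ℂ) * ip H χ ψ), Finset.sum_const,
    card_filter_mem, nsmul_eq_mul]
  intro k hk
  simp only [Finset.mem_filter, Finset.mem_univ, true_and] at hk
  rw [← ip_cj hχ hk, ip, ← mul_assoc, mul_inv_cancel₀ (cardne H), one_mul]
  exact Finset.sum_congr rfl fun _ _ => mul_comm _ _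

theorem clifford_conj {K H : Subgroup G} {χ ψ ψ' : G → ℂ} (hHK : H ≤ K) (hn : Nrm K H)
    (hχ : IrrOn K χ) (hψ : IrrOn H ψ) (hψ' : IrrOn H ψ') (h1 : ip H χ ψ ≠ 0) (h2 : ip H χ ψ' ≠ 0) :
    ψ' ∈ orb K ψ := by
  by_contra hcon
  have hcj : ∀ φ, IrrOn H φ → ∀ k ∈ K, IrrOn H (cj k φ) := fun φ hφ k hk => hφ.conjBy k (hn k hk)
  have hoff : ∀ φ, IrrOn H φ → ∀ g, g ∉ H → csum K φ g = 0 := by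
    intro φ hφ g hg
    refine Finset.sum_eq_zero fun k hk => ?_
    simp only [Finset.mem_filter, Finset.mem_univ, true_and] at hk
    exact (hcj φ hφ k hk).charOn.off hg
  have hA : ∀ φ, ip H χ φ ≠ 0 → ∑ x, csum K φ x⁻¹ * χ x ≠ 0 := by
    intro φ h
    rw [csum_ip (H := H) hχ.charOn]
    exact mul_ne_zero (cardne K) (mul_ne_zero (cardne H) h)
  have hne : ∀ k ∈ K, ∀ k' ∈ K, cj k ψ ≠ cj k' ψ' := by
    intro k hk k' hk' h
    apply hcon
    refine mem_orb.2 ⟨k * k'⁻¹, K.mul_mem hk (K.inv_mem hk'), ?_⟩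
    rw [← cj_cj, h, cj_cj]; ext; simp [cj]
  have hconv : ∀ w, ∑ y, csum K ψ' y⁻¹ * csum K ψ (y * w) = 0 := by
    intro w
    have : ∀ y, csum K ψ' y⁻¹ * csum K ψ (y * w) =
        ∑ k' ∈ Finset.univ.filter (fun k => k ∈ K), ∑ k ∈ Finset.univ.filter (fun k => k ∈ K),
          cj k' ψ' y⁻¹ * cj k ψ (y * w) := by
      intro y
      rw [csum, csum, Finset.sum_mul_sum]
    simp_rw [this]
    rw [Finset.sum_comm]
    refine Finset.sum_eq_zero fun k' hk' => ?_
    rw [Finset.sum_comm]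
    refine Finset.sum_eq_zero fun k hk => ?_
    simp only [Finset.mem_filter, Finset.mem_univ, true_and] at hk hk'
    exact conv0 (hcj ψ hψ k hk) (hcj ψ' hψ' k' hk') (hne k hk k' hk') w
  have hS : ∀ y, csum K ψ' y⁻¹ * (χ 1 * ∑ x, csum K ψ x⁻¹ * χ (x * y)) =
      csum K ψ' y⁻¹ * ((∑ x, csum K ψ x⁻¹ * χ x) * χ y) := by
    intro y
    by_cases hy : y ∈ H
    · rw [hχ.schur (csum K ψ) (fun g hg => hoff ψ hψ g (fun h => hg (hHK h)))
        (fun g hg x => csum_class K ψ g hg x) (hHK hy)]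
    · rw [hoff ψ' hψ' y⁻¹ (by simpa using hy), zero_mul, zero_mul]
  have hS2 := Finset.sum_congr (rfl : (Finset.univ : Finset G) = Finset.univ) (fun y _ => hS y)
  have hL : ∑ y, csum K ψ' y⁻¹ * (χ 1 * ∑ x, csum K ψ x⁻¹ * χ (x * y)) = 0 := by
    have e1 : ∀ y, csum K ψ' y⁻¹ * (χ 1 * ∑ x, csum K ψ x⁻¹ * χ (x * y)) =
        ∑ z, χ 1 * χ z * (csum K ψ' y⁻¹ * csum K ψ (y * z⁻¹)) := by
      intro y
      rw [Finset.mul_sum, Finset.mul_sum]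
      refine Fintype.sum_equiv (Equiv.mulRight y) _ _ fun x => ?_
      simp; ring
    simp_rw [e1]
    rw [Finset.sum_comm]
    refine Finset.sum_eq_zero fun z _ => ?_
    rw [← Finset.mul_sum, hconv, mul_zero]
  rw [hL] at hS2
  have hR : ∑ y, csum K ψ' y⁻¹ * ((∑ x, csum K ψ x⁻¹ * χ x) * χ y) =
      (∑ x, csum K ψ x⁻¹ * χ x) * ∑ y, csum K ψ' y⁻¹ * χ y := by
    rw [Finset.mul_sum]; exact Finset.sum_congr rfl fun _ _ => by ring
  rw [hR] at hS2
  exact mul_ne_zero (hA ψ h1) (hA ψ' h2) hS2.symm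

theorem clifford {K H : Subgroup G} {χ ψ : G → ℂ} (hHK : H ≤ K) (hn : Nrm K H)
    (hχ : IrrOn K χ) (hψ : IrrOn H ψ) (h1 : ip H χ ψ ≠ 0) :
    resF H χ = (mu H χ ψ : ℂ) • ∑ φ ∈ orb K ψ, φ := by
  obtain ⟨l, hl, hl', hc⟩ := hχ.charOn.resDecomp hHK
  have hO : ∀ φ ∈ orb K ψ, IrrOn H φ ∧ mu H χ φ = mu H χ ψ := by
    intro φ hφ
    obtain ⟨k, hk, rfl⟩ := mem_orb.1 hφ
    exact ⟨hψ.conjBy k (hn k hk), by rw [mu, mu, ip_cj hχ.charOn hk]⟩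
  have hpos := (hχ.charOn.mu_pos hHK hψ.charOn).2 h1
  have hset : l.toFinset = orb K ψ := by
    ext φ
    rw [List.mem_toFinset]
    constructor
    · intro h
      refine clifford_conj hHK hn hχ hψ (hl φ h) h1 ?_
      rw [← hχ.charOn.mu_pos hHK (hl φ h).charOn, ← hc φ (hl φ h)]
      exact List.count_pos_iff.2 h
    · intro h
      obtain ⟨h2, h3⟩ := hO φ h
      rw [← List.count_pos_iff, hc φ h2, h3]; exact hpos
  rw [hl', Finset.sum_list_count, hset, Finset.smul_sum]
  refine Finset.sum_congr rfl fun φ hφ => ?_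
  obtain ⟨h2, h3⟩ := hO φ hφ
  rw [hc φ h2, h3]
  simp only [Nat.cast_smul_eq_nsmul]

theorem clifford_deg {K H : Subgroup G} {χ ψ : G → ℂ} (hHK : H ≤ K) (hn : Nrm K H)
    (hχ : IrrOn K χ) (hψ : IrrOn H ψ) (h1 : ip H χ ψ ≠ 0) :
    dg χ = mu H χ ψ * (orb K ψ).card * dg ψ := by
  have h := congrFun (clifford hHK hn hχ hψ h1) 1
  simp only [resF, H.one_mem, if_true, Pi.smul_apply, Finset.sum_apply, smul_eq_mul] at h
  rw [Finset.sum_congr rfl (g := fun _ => (dg ψ : ℂ)), Finset.sum_const, nsmul_eq_mul,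
    ← hχ.charOn.dg_eq, ← mul_assoc] at h
  · exact_mod_cast h
  · intro φ hφ
    obtain ⟨k, hk, rfl⟩ := mem_orb.1 hφ
    rw [hψ.charOn.dg_eq]; simp [cj]

theorem clifford_dvd {K H : Subgroup G} {χ ψ : G → ℂ} (hHK : H ≤ K) (hn : Nrm K H)
    (hχ : IrrOn K χ) (hψ : IrrOn H ψ) (h1 : ip H χ ψ ≠ 0) : dg ψ ∣ dg χ := by
  rw [clifford_deg hHK hn hχ hψ h1]; exact dvd_mul_left _ _

theorem clifford_norm {K H : Subgroup G} {χ ψ : G → ℂ} (hHK : H ≤ K) (hn : Nrm K H)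
    (hχ : IrrOn K χ) (hψ : IrrOn H ψ) (h1 : ip H χ ψ ≠ 0) :
    ip H (resF H χ) (resF H χ) = ((mu H χ ψ ^ 2 * (orb K ψ).card : ℕ) : ℂ) := by
  have hadd : ∀ (a : G → ℂ) (c : ℂ) (s : Finset (G → ℂ)), ip H a (c • ∑ φ ∈ s, φ) = c * ∑ φ ∈ s, ip H a φ := by
    intro a c s
    simp only [ip, Pi.smul_apply, Finset.sum_apply, smul_eq_mul]
    rw [← Finset.mul_sum, Finset.sum_comm, mul_left_comm]
    congr 1
    rw [Finset.mul_sum]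
    refine Finset.sum_congr rfl fun g _ => ?_
    rw [← Finset.mul_sum]; ring
  conv_lhs => rw [clifford hHK hn hχ hψ h1, hadd]
  rw [← clifford hHK hn hχ hψ h1]
  rw [Finset.sum_congr rfl (g := fun _ => (mu H χ ψ : ℂ)), Finset.sum_const, nsmul_eq_mul]
  · push_cast; ring
  · intro φ hφ
    obtain ⟨k, hk, rfl⟩ := mem_orb.1 hφ
    have hk2 : CharOn H (cj k ψ) := (hψ.conjBy k (hn k hk)).charOn
    rw [ip_res hk2, ip_cj hχ.charOn hk, hχ.charOn.mu_eq hHK hψ.charOn]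

theorem le_stabIn {K H : Subgroup G} {ψ : G → ℂ} (hHK : H ≤ K) (hψ : CharOn H ψ) :
    H ≤ stabIn K ψ := fun h hh => mem_stabIn.2 ⟨hHK hh, fun x => hψ.conj hh x⟩

theorem orb_eq_singleton {T : Subgroup G} {ψ : G → ℂ} (h : ∀ t ∈ T, cj t ψ = ψ) : orb T ψ = {ψ} := by
  ext φ
  rw [mem_orb, Finset.mem_singleton]
  constructor
  · rintro ⟨k, hk, rfl⟩; exact h k hk
  · rintro rfl; exact ⟨1, T.one_mem, by ext; simp [cj]⟩

/-- Clifford correspondence (degrees) -/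
theorem clifford_corr {K H : Subgroup G} {χ ψ ξ : G → ℂ} (hHK : H ≤ K) (hn : Nrm K H)
    (hχ : IrrOn K χ) (hψ : IrrOn H ψ) (hξ : IrrOn (stabIn K ψ) ξ) (h1 : ip (stabIn K ψ) χ ξ ≠ 0)
    (h2 : ip H ξ ψ ≠ 0) : dg χ = (orb K ψ).card * dg ξ := by
  have hHT := le_stabIn hHK hψ.charOn
  have hTK := stabIn_le K ψ
  have h3 := over_trans hχ.charOn hHT hTK hψ hξ h1 h2
  have d1 := clifford_deg hHK hn hχ hψ h3
  have d2 := clifford_deg hHT (hn.mono hTK) hξ hψ h2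
  rw [orb_eq_singleton (T := stabIn K ψ) (fun t ht => ht.2), Finset.card_singleton, mul_one] at d2
  have hle := mu_le hχ.charOn hHT hTK hψ hξ h1
  have hge := frob_le hTK hχ hξ h1
  rw [← orb_card K ψ] at hge
  have hc : 0 < Nat.card (stabIn K ψ) := Nat.card_pos
  have hge' : dg χ ≤ (orb K ψ).card * dg ξ := by
    by_contra hlt
    push Not at hlt
    have := Nat.mul_lt_mul_of_pos_right hlt hc
    nlinarith
  refine le_antisymm hge' ?_
  rw [d1, d2]
  calc (orb K ψ).card * (mu H ξ ψ * dg ψ) = mu H ξ ψ * ((orb K ψ).card * dg ψ) := by ring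
    _ ≤ mu H χ ψ * ((orb K ψ).card * dg ψ) := Nat.mul_le_mul_right _ hle
    _ = _ := by ring

end Clifford
end PartA3

section PartA4
open CategoryTheory
open scoped Classical
set_option linter.unusedSectionVars false
set_option linter.unusedSimpArgs false
set_option linter.unusedVariables false

section Dual
variable {G : Type} [Group G] [Fintype G]

instance dual_finite (A : Type) [CommGroup A] [Finite A] : Finite (A →* ℂˣ) := by
  have := Nat.card_pos (α := A)
  rw [← CommGroup.card_monoidHom_of_hasEnoughRootsOfUnity A ℂ] at this
  exact Nat.finite_of_card_ne_zero this.ne'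

noncomputable instance dual_fintype (A : Type) [CommGroup A] [Finite A] : Fintype (A →* ℂˣ) :=
  Fintype.ofFinite _

theorem dual_sum (A : Type) [CommGroup A] [Finite A] (a : A) :
    ∑ l : A →* ℂˣ, ((l a : ℂˣ) : ℂ) = if a = 1 then (Nat.card A : ℂ) else 0 := by
  split_ifs with h
  · subst h
    have := CommGroup.card_monoidHom_of_hasEnoughRootsOfUnity A ℂ
    simp [← this]
  · obtain ⟨m, hm⟩ := CommGroup.exists_apply_ne_one_of_hasEnoughRootsOfUnity A ℂ h
    have h1 : ((m a : ℂˣ) : ℂ) * ∑ l : A →* ℂˣ, ((l a : ℂˣ) : ℂ) = ∑ l : A →* ℂˣ, ((l a : ℂˣ) : ℂ) := by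
      rw [Finset.mul_sum]
      refine Fintype.sum_equiv (Equiv.mulLeft m) _ _ fun l => by simp
    have h2 : ((m a : ℂˣ) : ℂ) ≠ 1 := fun h => hm (Units.ext h)
    by_contra h3
    exact h2 (mul_right_cancel₀ h3 (by rw [h1, one_mul]))

/-- the function on `G` attached to a linear character of a quotient of `K` -/
noncomputable def lam {K : Subgroup G} {A : Type} [CommGroup A] (p : K →* A) (l : A →* ℂˣ) : G → ℂ :=
  ext0 K (fun k => ((l (p k) : ℂˣ) : ℂ))

theorem lam_one {K : Subgroup G} {A : Type} [CommGroup A] (p : K →* A) (l : A →* ℂˣ) :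
    lam p l 1 = 1 := by
  rw [lam, ext0_mem K.one_mem]
  have : (⟨1, K.one_mem⟩ : K) = 1 := rfl
  rw [this]; simp

theorem lam_mul {K : Subgroup G} {A : Type} [CommGroup A] (p : K →* A) (l : A →* ℂˣ) :
    ∀ x ∈ K, ∀ y ∈ K, lam p l (x * y) = lam p l x * lam p l y := by
  intro x hx y hy
  rw [lam, ext0_mem hx, ext0_mem hy, ext0_mem (K.mul_mem hx hy)]
  have : (⟨x * y, K.mul_mem hx hy⟩ : K) = ⟨x, hx⟩ * ⟨y, hy⟩ := rfl
  rw [this, map_mul, map_mul, Units.val_mul]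

/-- twisting by a linear character -/
noncomputable def tw {K : Subgroup G} {A : Type} [CommGroup A] (p : K →* A) (l : A →* ℂˣ)
    (χ : G → ℂ) : G → ℂ := fun x => lam p l x * χ x

theorem tw_irr {K : Subgroup G} {A : Type} [CommGroup A] (p : K →* A) (l : A →* ℂˣ)
    {χ : G → ℂ} (h : IrrOn K χ) : IrrOn K (tw p l χ) :=
  h.twist _ (lam_one p l) (lam_mul p l)

theorem tw_tw {K : Subgroup G} {A : Type} [CommGroup A] (p : K →* A) (l m : A →* ℂˣ)
    (χ : G → ℂ) : tw p l (tw p m χ) = tw p (l * m) χ := by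
  ext x
  simp only [tw, ← mul_assoc]
  congr 1
  by_cases hx : x ∈ K
  · simp [lam, ext0_mem hx]
  · simp [lam, ext0_not hx]

theorem tw_one {K : Subgroup G} {A : Type} [CommGroup A] (p : K →* A)
    {χ : G → ℂ} (h : CharOn K χ) : tw p 1 χ = χ := by
  ext x
  by_cases hx : x ∈ K
  · simp [tw, lam, ext0_mem hx]
  · simp [tw, lam, ext0_not hx, h.off hx]

def twStab {K : Subgroup G} {A : Type} [CommGroup A] (p : K →* A)
    {χ : G → ℂ} (h : CharOn K χ) : Subgroup (A →* ℂˣ) where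
  carrier := {l | tw p l χ = χ}
  one_mem' := tw_one p h
  mul_mem' := by
    intro a b ha hb
    show tw p (a * b) χ = χ
    rw [← tw_tw, hb, ha]
  inv_mem' := by
    intro a ha
    show tw p a⁻¹ χ = χ
    conv_lhs => rw [← (show tw p a χ = χ from ha)]
    rw [tw_tw, show a⁻¹ * a = 1 from inv_mul_cancel a, tw_one p h]

theorem twStab_card {K H : Subgroup G} {A : Type} [CommGroup A] [Finite A] (p : K →* A)
    (hp : Function.Surjective p) (hHK : H ≤ K) (hker : ∀ k : K, p k = 1 ↔ (k : G) ∈ H)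
    {χ : G → ℂ} (h : IrrOn K χ) :
    (Nat.card (twStab p h.charOn) : ℂ) = ip H (resF H χ) (resF H χ) := by
  have hcard : Nat.card K = Nat.card A * Nat.card H := by
    have h1 := Subgroup.card_mul_index p.ker
    have h2 := Subgroup.index_ker p
    rw [MonoidHom.range_eq_top.2 hp] at h2
    have h3 : Nat.card p.ker = Nat.card H := by
      refine Nat.card_congr ⟨fun x => ⟨x.1, (hker x.1).1 x.2⟩,
        fun x => ⟨⟨x.1, hHK x.2⟩, (hker _).2 x.2⟩, fun x => rfl, fun x => rfl⟩
    rw [h2, h3] at h1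
    rw [← h1]
    simp [mul_comm]
  have e1 : (Nat.card (twStab p h.charOn) : ℂ) = ∑ l : A →* ℂˣ, ip K (tw p l χ) χ := by
    have : ∀ l : A →* ℂˣ, ip K (tw p l χ) χ = if l ∈ twStab p h.charOn then 1 else 0 := fun l => by
      rw [(tw_irr p l h).ip_eq h]
      exact if_congr Iff.rfl rfl rfl
    simp_rw [this]
    rw [Finset.sum_boole, Nat.card_eq_fintype_card, Fintype.card_subtype]
  rw [e1]
  have e2 : ∀ g, (∑ l : A →* ℂˣ, lam p l g) = if g ∈ H then (Nat.card A : ℂ) else 0 := by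
    intro g
    by_cases hg : g ∈ K
    · simp only [lam, ext0_mem hg]
      rw [dual_sum]
      have := hker ⟨g, hg⟩
      by_cases hh : g ∈ H
      · rw [if_pos (this.2 hh), if_pos hh]
      · rw [if_neg (fun h => hh (this.1 h)), if_neg hh]
    · simp only [lam, ext0_not hg]
      rw [if_neg (fun h => hg (hHK h))]
      simp
  have hA : (Nat.card A : ℂ) ≠ 0 := by exact_mod_cast Nat.card_pos.ne'
  simp only [ip, tw]
  rw [← Finset.mul_sum, Finset.sum_comm, hcard]
  push_cast
  have e3 : ∑ y, ∑ x : A →* ℂˣ, lam p x y * χ y * χ y⁻¹ =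
      (Nat.card A : ℂ) * ∑ g, resF H χ g * resF H χ g⁻¹ := by
    rw [Finset.mul_sum]
    refine Finset.sum_congr rfl fun g _ => ?_
    rw [← Finset.sum_mul, ← Finset.sum_mul, e2]
    by_cases hg : g ∈ H
    · simp [resF, hg]; ring
    · simp [resF, hg]
  rw [e3, mul_inv]
  field_simp

theorem nrm_of_ker {K H : Subgroup G} {A : Type} [CommGroup A] (p : K →* A)
    (hHK : H ≤ K) (hker : ∀ k : K, p k = 1 ↔ (k : G) ∈ H) : Nrm K H := by
  intro k hk x
  have key : ∀ k : K, ∀ x : G, x ∈ H → (k : G) * x * (k : G)⁻¹ ∈ H := by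
    intro k x hx
    have h1 := (hker ⟨x, hHK hx⟩).2 hx
    have h2 := (hker (k * ⟨x, hHK hx⟩ * k⁻¹)).1 (by simp [h1])
    exact h2
  refine ⟨fun h => key ⟨k, hk⟩ x h, fun h => ?_⟩
  have := key ⟨k, hk⟩⁻¹ _ h
  simpa [mul_assoc] using this

theorem twStab_card' {K H : Subgroup G} {A : Type} [CommGroup A] [Finite A] (p : K →* A)
    (hp : Function.Surjective p) (hHK : H ≤ K) (hker : ∀ k : K, p k = 1 ↔ (k : G) ∈ H)
    {χ ψ : G → ℂ} (h : IrrOn K χ) (hψ : IrrOn H ψ) (h1 : ip H χ ψ ≠ 0) :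
    Nat.card (twStab p h.charOn) = mu H χ ψ ^ 2 * (orb K ψ).card := by
  have := twStab_card p hp hHK hker h
  rw [clifford_norm hHK (nrm_of_ker p hHK hker) h hψ h1] at this
  exact_mod_cast this

theorem clifford_abel {K H : Subgroup G} {A : Type} [CommGroup A] [Finite A] (p : K →* A)
    (hp : Function.Surjective p) (hHK : H ≤ K) (hker : ∀ k : K, p k = 1 ↔ (k : G) ∈ H)
    {χ ψ : G → ℂ} (h : IrrOn K χ) (hψ : IrrOn H ψ) (h1 : ip H χ ψ ≠ 0) :
    mu H χ ψ ^ 2 * (orb K ψ).card ∣ Nat.card A := by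
  rw [← twStab_card' p hp hHK hker h hψ h1, ← CommGroup.card_monoidHom_of_hasEnoughRootsOfUnity A ℂ]
  exact Subgroup.card_subgroup_dvd_card _

/-! link with the statement -/

theorem ext0_eval_one {X : Subgroup G} (V : FDRep ℂ X) : dg (ext0 X V.character) = Module.finrank ℂ V := by
  have h := (show CharOn X (ext0 X V.character) from ⟨V, rfl⟩).dg_eq
  rw [ext0_mem X.one_mem] at h
  have h2 : V.character ⟨1, X.one_mem⟩ = Module.finrank ℂ V := V.char_one
  rw [h2] at h
  exact_mod_cast h

theorem FDRep_comp_simple {K L : Type} [Group K] [Group L] [Fintype K] [Fintype L] (e : K ≃* L)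
    (V : FDRep ℂ L) (hV : Simple V) : ∃ W : FDRep ℂ K, Simple W ∧ Module.finrank ℂ W = Module.finrank ℂ V
      ∧ ∀ k, W.character k = V.character (e k) := by
  refine ⟨FDRep.of (MonoidHom.comp V.ρ e.toMonoidHom : Representation ℂ K V), ?_, rfl, fun k => rfl⟩
  rw [FDRep.simple_iff_char_is_norm_one] at hV ⊢
  rw [Nat.card_congr e.toEquiv, ← hV]
  refine Fintype.sum_equiv e.toEquiv _ _ fun x => ?_
  show V.character (e x) * V.character (e x⁻¹) = V.character (e x) * V.character (e x)⁻¹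
  rw [map_inv]

theorem irr_top_mem {χ : G → ℂ} (h : IrrOn (⊤ : Subgroup G) χ) : dg χ ∈ charDegrees G := by
  obtain ⟨V, hV, rfl⟩ := h
  obtain ⟨W, hW, hd, -⟩ := FDRep_comp_simple (Subgroup.topEquiv (G := G)).symm V hV
  exact ⟨W, hW, by rw [hd, ext0_eval_one]⟩

theorem irr_of_top (V : FDRep ℂ G) (hV : Simple V) : IrrOn (⊤ : Subgroup G) V.character ∧
    dg V.character = Module.finrank ℂ V := by
  obtain ⟨W, hW, hd, hc⟩ := FDRep_comp_simple (Subgroup.topEquiv (G := G)) V hV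
  have : V.character = ext0 ⊤ W.character := by
    ext g
    rw [ext0_mem (Subgroup.mem_top g), hc]; rfl
  refine ⟨⟨W, hW, this⟩, ?_⟩
  rw [this, ext0_eval_one, hd]

theorem over_iff {N : Subgroup G} (V : FDRep ℂ G) (θ : FDRep ℂ N) :
    (∑ᶠ x : N, V.character (x : G) * θ.character x⁻¹) ≠ 0 ↔
      ip N V.character (ext0 N θ.character) ≠ 0 := by
  rw [ip, sum_sub N, finsum_eq_sum_of_fintype]
  · have : ∀ x : N, V.character (x : G) * ext0 N θ.character (x : G)⁻¹ = V.character (x : G) * θ.character x⁻¹ := by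
      intro x
      rw [← Subgroup.coe_inv, ext0_coe]
    simp_rw [this]
    rw [Ne, Ne, mul_eq_zero, not_or]
    exact ⟨fun h => ⟨inv_ne_zero (cardne N), h⟩, fun h => h.2⟩
  · intro g hg
    rw [ext0_not (by simpa using hg), mul_zero]

theorem ip_symm (X : Subgroup G) (a b : G → ℂ) : ip X a b = ip X b a := by
  unfold ip
  congr 1
  refine Fintype.sum_equiv (Equiv.inv G) _ _ fun x => ?_
  simp [mul_comm]

theorem one_irr : IrrOn (⊤ : Subgroup G) (fun _ => (1 : ℂ)) :=
  linear_irr _ rfl (fun x hx => absurd (Subgroup.mem_top x) hx) (by simp)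

theorem two_trans_burnside {K Ω : Type} [Group K] [Fintype K] [Fintype Ω] [MulAction K Ω]
    (h2 : ∀ a b c d : Ω, a ≠ b → c ≠ d → ∃ k : K, k • a = c ∧ k • b = d)
    (hq : 3 ≤ Fintype.card Ω) :
    ∑ g : K, Nat.card (MulAction.fixedBy Ω g) = Nat.card K ∧
    ∑ g : K, Nat.card (MulAction.fixedBy Ω g) ^ 2 = 2 * Nat.card K := by
  have hnt : Nontrivial Ω := Fintype.one_lt_card_iff_nontrivial.1 (by omega)
  have htr : ∀ a b : Ω, ∃ k : K, k • a = b := by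
    intro a b
    obtain ⟨a', ha'⟩ := exists_ne a
    obtain ⟨b', hb'⟩ := exists_ne b
    obtain ⟨k, hk, -⟩ := h2 a a' b b' ha'.symm hb'.symm
    exact ⟨k, hk⟩
  constructor
  · have := MulAction.sum_card_fixedBy_eq_card_orbits_mul_card_group K Ω
    simp only [← Nat.card_eq_fintype_card] at this
    rw [this]
    have h1 : Nat.card (Quotient (MulAction.orbitRel K Ω)) = 1 := by
      rw [Nat.card_eq_one_iff_unique]
      refine ⟨⟨fun a b => ?_⟩, ⟨Quotient.mk _ (Classical.arbitrary Ω)⟩⟩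
      induction a using Quotient.inductionOn
      induction b using Quotient.inductionOn
      apply Quotient.sound
      obtain ⟨k, hk⟩ := htr _ _
      exact ⟨k, hk⟩
    rw [h1, one_mul]
  · have := MulAction.sum_card_fixedBy_eq_card_orbits_mul_card_group K (Ω × Ω)
    simp only [← Nat.card_eq_fintype_card] at this
    have h1 : Nat.card (Quotient (MulAction.orbitRel K (Ω × Ω))) = 2 := by
      rw [Nat.card_eq_two_iff]
      obtain ⟨a, b, hab⟩ := exists_pair_ne Ω
      refine ⟨Quotient.mk _ (a, a), Quotient.mk _ (a, b), ?_, ?_⟩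
      · intro h
        have h' := Quotient.exact h
        obtain ⟨k, hk⟩ := h'
        simp only [Prod.smul_mk, Prod.mk.injEq] at hk
        exact hab (smul_left_cancel k (hk.1.trans hk.2.symm))
      · ext x
        simp only [Set.mem_insert_iff, Set.mem_singleton_iff, Set.mem_univ, iff_true]
        induction x using Quotient.inductionOn with
        | h x =>
        obtain ⟨c, d⟩ := x
        by_cases hcd : c = d
        · left
          subst hcd
          apply Quotient.sound
          obtain ⟨k, hk⟩ := htr a c
          exact ⟨k, by simp [hk]⟩
        · right
          apply Quotient.sound
          obtain ⟨k, hk, hk'⟩ := h2 a b c d hab hcd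
          exact ⟨k, by simp [hk, hk']⟩
    rw [h1] at this
    rw [← this]
    refine Finset.sum_congr rfl fun g _ => ?_
    rw [sq, ← Nat.card_prod]
    refine Nat.card_congr ⟨fun x => ⟨(x.1.1, x.2.1), ?_⟩, fun x => (⟨x.1.1, ?_⟩, ⟨x.1.2, ?_⟩),
      fun x => rfl, fun x => rfl⟩
    · show g • (x.1.1, x.2.1) = _
      rw [Prod.smul_mk]
      exact Prod.ext x.1.2 x.2.2
    · exact congrArg Prod.fst (show g • x.1 = x.1 from x.2)
    · exact congrArg Prod.snd (show g • x.1 = x.1 from x.2)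

/-- 2-transitive actions give a degree -/
theorem two_trans_degree {K Ω : Type} [Group K] [Finite K] [Fintype Ω] [MulAction K Ω]
    (h2 : ∀ a b c d : Ω, a ≠ b → c ≠ d → ∃ k : K, k • a = c ∧ k • b = d) (q : ℕ)
    (hq : Fintype.card Ω = q + 1) (hq2 : 2 ≤ q) : q ∈ charDegrees K := by
  have : Fintype K := Fintype.ofFinite K
  obtain ⟨ρ, hρ⟩ := perm_rep (K := K) (Ω := Ω)
  obtain ⟨hb1, hb2⟩ := two_trans_burnside h2 (by omega)
  let P : K → ℂ := fun g => (Nat.card (MulAction.fixedBy Ω g) : ℂ)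
  have hP : CharOn (⊤ : Subgroup K) P := by
    have := CharOn.of_rep (X := (⊤ : Subgroup K)) (MonoidHom.comp ρ (Subgroup.subtype ⊤) :
      Representation ℂ (⊤ : Subgroup K) (Ω → ℂ))
    convert this using 1
    ext g
    rw [ext0_mem (Subgroup.mem_top g)]
    exact (hρ g).symm
  have hPinv : ∀ g, P g⁻¹ = P g := by
    intro g
    show ((Nat.card (MulAction.fixedBy Ω g⁻¹) : ℕ) : ℂ) = Nat.card (MulAction.fixedBy Ω g)
    have hset : MulAction.fixedBy Ω g⁻¹ = MulAction.fixedBy Ω g := by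
      ext w; simp [MulAction.mem_fixedBy, inv_smul_eq_iff, eq_comm]
    rw [hset]
  have hc : (Nat.card K : ℂ) ≠ 0 := by exact_mod_cast Nat.card_pos.ne'
  have hct : Nat.card (⊤ : Subgroup K) = Nat.card K := Nat.card_congr Subgroup.topEquiv.toEquiv
  have i1 : ip ⊤ P (fun _ => 1) = 1 := by
    simp only [ip, mul_one, P, hct]
    rw [← Nat.cast_sum, hb1, inv_mul_cancel₀ hc]
  have i2 : ip ⊤ P P = 2 := by
    simp only [ip, hct]
    simp_rw [hPinv]
    have : ∑ x, P x * P x = ((2 * Nat.card K : ℕ) : ℂ) := by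
      rw [← hb2]; push_cast
      exact Finset.sum_congr rfl fun x _ => (sq (P x)).symm
    rw [this]; push_cast; field_simp
  have hP1 : P 1 = q + 1 := by
    show ((Nat.card (MulAction.fixedBy Ω (1 : K)) : ℕ) : ℂ) = q + 1
    rw [MulAction.fixedBy_one_eq_univ, Nat.card_univ, Nat.card_eq_fintype_card, hq]; push_cast; rfl
  obtain ⟨l, hl, hl'⟩ := hP.decomp
  have c1 := ip_count ⊤ l hl one_irr
  rw [← hl', i1] at c1
  have c1' : l.count (fun _ => 1) = 1 := by exact_mod_cast c1.symm
  have hmem : (fun _ => (1 : ℂ)) ∈ l := List.count_pos_iff.1 (by omega)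
  have hperm := List.perm_cons_erase hmem
  set l' := l.erase (fun _ => (1 : ℂ)) with hl'def
  have hsum : P = (fun _ => (1 : ℂ)) + l'.sum := by
    rw [hl', hperm.sum_eq]; simp
  have hl2 : ∀ φ ∈ l', IrrOn ⊤ φ := fun φ hφ => hl φ (List.mem_of_mem_erase hφ)
  have j1 : ip ⊤ l'.sum (fun _ => 1) = 0 := by
    have h := i1
    rw [hsum, ip_add, one_irr.norm] at h
    linear_combination h
  have j2 : ip ⊤ l'.sum l'.sum = 1 := by
    have h := i2
    rw [hsum, ip_add, ip_symm, ip_add, one_irr.norm, j1, ip_symm, ip_add, ip_symm, j1] at h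
    linear_combination h
  have j3 : ip ⊤ l'.sum l'.sum = ((l'.map (fun a => l'.count a)).sum : ℕ) := by
    rw [ip_list, Nat.cast_list_sum, List.map_map]
    congr 1
    apply List.map_congr_left
    intro a ha
    rw [ip_symm, ip_count ⊤ l' hl2 (hl2 a ha)]; rfl
  rw [j2] at j3
  have j4 : (l'.map (fun a => l'.count a)).sum = 1 := by exact_mod_cast j3.symm
  have j5 : l'.length ≤ (l'.map (fun a => l'.count a)).sum := by
    have := List.length_le_sum_of_one_le (l'.map (fun a => l'.count a)) (by
      intro i hi
      obtain ⟨a, ha, rfl⟩ := List.mem_map.1 hi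
      exact List.count_pos_iff.2 ha)
    simpa using this
  have hP1' := congrFun hsum 1
  rw [hP1] at hP1'
  match hl'' : l' with
  | [] =>
    simp at hP1'
    omega
  | [χ] =>
    have hχ : IrrOn ⊤ χ := hl2 χ (by simp)
    have := hχ.charOn.dg_eq
    simp at hP1'
    have h3 : (dg χ : ℂ) = q := by rw [this]; linear_combination -hP1'
    have h4 : dg χ = q := by exact_mod_cast h3
    rw [← h4]; exact irr_top_mem hχ
  | a :: b :: c => simp at j5 j4; omega

end Dual
end PartA4

section PartB1
open scoped Classical
set_option linter.unusedSectionVars false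
set_option linter.unusedSimpArgs false
set_option linter.unusedVariables false

section SLtwo
abbrev SL2 (F : Type) [Field F] := Matrix.SpecialLinearGroup (Fin 2) F

variable {F : Type} [Field F]

theorem sl_ext {g h : SL2 F} (h00 : g.1 0 0 = h.1 0 0) (h01 : g.1 0 1 = h.1 0 1)
    (h10 : g.1 1 0 = h.1 1 0) (h11 : g.1 1 1 = h.1 1 1) : g = h := by
  apply Subtype.ext
  ext i j
  fin_cases i <;> fin_cases j <;> assumption

theorem sl_mul (g h : SL2 F) (i j) : (g * h).1 i j = g.1 i 0 * h.1 0 j + g.1 i 1 * h.1 1 j := by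
  show (g.1 * h.1) i j = _
  rw [Matrix.mul_apply, Fin.sum_univ_two]

theorem sl_inv00 (g : SL2 F) : (g⁻¹).1 0 0 = g.1 1 1 := by
  rw [Matrix.SpecialLinearGroup.SL2_inv_expl]; simp
theorem sl_inv01 (g : SL2 F) : (g⁻¹).1 0 1 = - g.1 0 1 := by
  rw [Matrix.SpecialLinearGroup.SL2_inv_expl]; simp
theorem sl_inv10 (g : SL2 F) : (g⁻¹).1 1 0 = - g.1 1 0 := by
  rw [Matrix.SpecialLinearGroup.SL2_inv_expl]; simp
theorem sl_inv11 (g : SL2 F) : (g⁻¹).1 1 1 = g.1 0 0 := by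
  rw [Matrix.SpecialLinearGroup.SL2_inv_expl]; simp
theorem sl_det (g : SL2 F) : g.1 0 0 * g.1 1 1 - g.1 0 1 * g.1 1 0 = 1 := by
  have := g.2; rwa [Matrix.det_fin_two] at this
theorem sl_one (i j) : (1 : SL2 F).1 i j = if i = j then 1 else 0 := by
  show (1 : Matrix _ _ F) i j = _
  rw [Matrix.one_apply]

def mkS (a b c d : F) (h : a * d - b * c = 1) : SL2 F := ⟨!![a, b; c, d], by
  rw [Matrix.det_fin_two_of]; exact h⟩
@[simp] theorem mkS00 (a b c d : F) (h) : (mkS a b c d h).1 0 0 = a := rfl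
@[simp] theorem mkS01 (a b c d : F) (h) : (mkS a b c d h).1 0 1 = b := rfl
@[simp] theorem mkS10 (a b c d : F) (h) : (mkS a b c d h).1 1 0 = c := rfl
@[simp] theorem mkS11 (a b c d : F) (h) : (mkS a b c d h).1 1 1 = d := rfl

def uu (a : F) : SL2 F := mkS 1 a 0 1 (by ring)
@[simp] theorem uu00 (a : F) : (uu a).1 0 0 = 1 := rfl
@[simp] theorem uu01 (a : F) : (uu a).1 0 1 = a := rfl
@[simp] theorem uu10 (a : F) : (uu a).1 1 0 = 0 := rfl
@[simp] theorem uu11 (a : F) : (uu a).1 1 1 = 1 := rfl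

theorem uu_add (a b : F) : uu (a + b) = uu a * uu b := by
  apply sl_ext <;> simp [sl_mul, -Matrix.SpecialLinearGroup.coe_mul]; ring
theorem uu_zero : uu (0 : F) = 1 := by
  apply sl_ext <;> simp [sl_one, -Matrix.SpecialLinearGroup.coe_one]
theorem uu_inj {a b : F} (h : uu a = uu b) : a = b := by
  have := congrArg (fun g : SL2 F => g.1 0 1) h; simpa using this
theorem uu_neg (a : F) : uu (-a) = (uu a)⁻¹ := by
  rw [eq_inv_iff_mul_eq_one, ← uu_add, neg_add_cancel, uu_zero]

/-- Borel subgroup -/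
def bor (F : Type) [Field F] : Subgroup (SL2 F) where
  carrier := {g | g.1 1 0 = 0}
  one_mem' := by simp
  mul_mem' := by
    intro a b ha hb
    simp only [Set.mem_setOf_eq] at *
    rw [sl_mul, ha, hb]; simp
  inv_mem' := by
    intro a ha
    simp only [Set.mem_setOf_eq] at *
    rw [sl_inv10, ha, neg_zero]
theorem mem_bor {g : SL2 F} : g ∈ bor F ↔ g.1 1 0 = 0 := Iff.rfl

theorem bor_ne {g : SL2 F} (h : g ∈ bor F) : g.1 0 0 * g.1 1 1 = 1 := by
  have := sl_det g
  rw [mem_bor.1 h] at this; simpa using this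

/-- unipotent -/
def uni (F : Type) [Field F] : Subgroup (SL2 F) where
  carrier := {g | ∃ a, g = uu a}
  one_mem' := ⟨0, uu_zero.symm⟩
  mul_mem' := by
    rintro _ _ ⟨a, rfl⟩ ⟨b, rfl⟩
    exact ⟨a + b, (uu_add a b).symm⟩
  inv_mem' := by
    rintro _ ⟨a, rfl⟩
    exact ⟨-a, (uu_neg a).symm⟩
theorem mem_uni {g : SL2 F} : g ∈ uni F ↔ ∃ a, g = uu a := Iff.rfl
theorem uu_mem (a : F) : uu a ∈ uni F := ⟨a, rfl⟩
theorem uu_mem_bor (a : F) : uu a ∈ bor F := rfl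
theorem uni_le_bor : uni F ≤ bor F := by rintro _ ⟨a, rfl⟩; rfl

/-- the torus hom on the Borel -/
def del (F : Type) [Field F] : bor F →* Fˣ where
  toFun g := ⟨g.1.1 0 0, g.1.1 1 1, bor_ne g.2, by rw [mul_comm]; exact bor_ne g.2⟩
  map_one' := by ext; simp
  map_mul' := by
    intro a b
    ext
    show (a.1 * b.1).1 0 0 = _
    rw [sl_mul, mem_bor.1 b.2]; simp
theorem del_val (g : bor F) : ((del F g : Fˣ) : F) = g.1.1 0 0 := rfl

theorem del_ker (g : bor F) : del F g = 1 ↔ (g : SL2 F) ∈ uni F := by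
  constructor
  · intro h
    have h0 : g.1.1 0 0 = 1 := by rw [← del_val, h]; rfl
    have := bor_ne g.2
    rw [h0, one_mul] at this
    exact ⟨g.1.1 0 1, sl_ext h0 rfl (mem_bor.1 g.2) this⟩
  · rintro ⟨a, ha⟩
    ext
    rw [del_val, ha]; rfl

theorem mem_bor_conj_uu {h : SL2 F} (hh : h ∈ bor F) (a : F) :
    h * uu a * h⁻¹ = uu (h.1 0 0 ^ 2 * a) := by
  have hd := bor_ne hh
  have hc := mem_bor.1 hh
  apply sl_ext
  · rw [sl_mul, sl_mul, sl_mul, sl_inv00, sl_inv10, hc]; simp [hd]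
  · rw [sl_mul, sl_mul, sl_mul, sl_inv01, sl_inv11]; simp; ring
  · rw [sl_mul, sl_mul, sl_mul, sl_inv00, sl_inv10, hc]; simp
  · rw [sl_mul, sl_mul, sl_mul, sl_inv01, sl_inv11, hc]; simp; rw [mul_comm]; exact hd

theorem conj_uu10 (h : SL2 F) (a : F) : (h * uu a * h⁻¹).1 1 0 = - (h.1 1 0 ^ 2 * a) := by
  rw [sl_mul, sl_mul, sl_mul, sl_inv00, sl_inv10]; simp; ring
theorem conj_uu_tr (h : SL2 F) (a : F) :
    (h * uu a * h⁻¹).1 0 0 + (h * uu a * h⁻¹).1 1 1 = 2 := by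
  have hd := sl_det h
  simp only [sl_mul, sl_inv00, sl_inv01, sl_inv10, sl_inv11]; simp
  linear_combination 2 * hd

variable [Fintype F]

theorem card_uni : Nat.card (uni F) = Nat.card F := by
  refine Nat.card_congr ⟨fun g => g.1.1 0 1, fun a => ⟨uu a, a, rfl⟩, ?_, fun a => rfl⟩
  rintro ⟨_, a, rfl⟩; rfl

theorem card_bor : Nat.card (bor F) = Nat.card F * (Nat.card F - 1) := by
  have : Nat.card (bor F) = Nat.card (F × Fˣ) := by
    refine Nat.card_congr ⟨fun g => (g.1.1 0 1, del F g), fun a => ⟨mkS a.2 a.1 0 (a.2⁻¹ : Fˣ) (by simp), rfl⟩, ?_, ?_⟩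
    · intro g
      apply Subtype.ext
      exact sl_ext rfl rfl (mem_bor.1 g.2).symm rfl
    · intro a
      refine Prod.ext rfl ?_
      ext; rfl
  rw [this, Nat.card_prod, Nat.card_units]

theorem card_sl : Nat.card (SL2 F) = Nat.card F * (Nat.card F ^ 2 - 1) := by
  have h1 : Nat.card {g : SL2 F // g.1 1 0 ≠ 0} = Nat.card (F × F × Fˣ) := by
    refine Nat.card_congr ⟨fun g => (g.1.1 0 0, g.1.1 1 1, Units.mk0 _ g.2),
      fun a => ⟨mkS a.1 ((a.1 * a.2.1 - 1) * (a.2.2⁻¹ : Fˣ)) a.2.2 a.2.1 (by simp), a.2.2.ne_zero⟩, ?_, ?_⟩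
    · rintro ⟨g, hg⟩
      apply Subtype.ext
      refine sl_ext rfl ?_ rfl rfl
      have := sl_det g
      simp
      field_simp
      linear_combination this
    · intro a
      refine Prod.ext rfl (Prod.ext rfl ?_)
      ext; rfl
  have h2 : Nat.card (SL2 F) = Nat.card {g : SL2 F // g.1 1 0 = 0} + Nat.card {g : SL2 F // g.1 1 0 ≠ 0} := by
    rw [← Nat.card_sum]
    exact Nat.card_congr (Equiv.sumCompl _).symm
  have h3 : Nat.card {g : SL2 F // g.1 1 0 = 0} = _ := card_bor (F := F)
  rw [h2, h1, h3, Nat.card_prod, Nat.card_prod, Nat.card_units]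
  have : 1 ≤ Nat.card F := Nat.card_pos
  obtain ⟨q, hq⟩ := Nat.exists_eq_add_of_le this
  rw [hq]
  have : (1 + q) ^ 2 - 1 = q ^ 2 + 2 * q := by
    rw [show (1 + q)^2 = q^2 + 2*q + 1 by ring]; rfl
  rw [this]; simp; ring

end SLtwo
end PartB1

section PartB2
open scoped Classical
set_option linter.unusedSectionVars false
set_option linter.unusedSimpArgs false
set_option linter.unusedVariables false

section SLtwoB
variable {F : Type} [Field F]

/-- conjugate subgroup -/
def cjS {L : Type} [Group L] (x : L) (H : Subgroup L) : Subgroup L := H.comap (MulAut.conj x⁻¹).toMonoidHom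
theorem mem_cjS {L : Type} [Group L] {x : L} {H : Subgroup L} {g : L} : g ∈ cjS x H ↔ x⁻¹ * g * x ∈ H := by
  show (MulAut.conj x⁻¹) g ∈ H ↔ _
  rw [MulAut.conj_apply, inv_inv]
theorem cjS_mem {L : Type} [Group L] {x : L} {H : Subgroup L} {g : L} (h : g ∈ H) : x * g * x⁻¹ ∈ cjS x H := by
  rw [mem_cjS]; convert h using 1; group
theorem card_cjS {L : Type} [Group L] (x : L) (H : Subgroup L) : Nat.card (cjS x H) = Nat.card H := by
  refine Nat.card_congr ⟨fun g => ⟨x⁻¹ * g * x, mem_cjS.1 g.2⟩, fun g => ⟨x * g * x⁻¹, cjS_mem g.2⟩, ?_, ?_⟩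
  · intro g; ext1; simp; group
  · intro g; ext1; simp; group

def AA (H : Subgroup (SL2 F)) : AddSubgroup F where
  carrier := {a | uu a ∈ H}
  zero_mem' := by show uu 0 ∈ H; rw [uu_zero]; exact H.one_mem
  add_mem' := by
    intro a b ha hb
    show uu (a + b) ∈ H
    rw [uu_add]; exact H.mul_mem ha hb
  neg_mem' := by
    intro a ha
    show uu (-a) ∈ H
    rw [uu_neg]; exact H.inv_mem ha
theorem mem_AA {H : Subgroup (SL2 F)} {a : F} : a ∈ AA H ↔ uu a ∈ H := Iff.rfl

def ZZ (H : Subgroup (SL2 F)) : Subgroup Fˣ := (H.subgroupOf (bor F)).map (del F)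
theorem mem_ZZ {H : Subgroup (SL2 F)} {z : Fˣ} : z ∈ ZZ H ↔ ∃ g ∈ H, g.1 1 0 = 0 ∧ g.1 0 0 = (z : F) := by
  constructor
  · rintro ⟨g, hg, rfl⟩
    exact ⟨g.1, hg, g.2, rfl⟩
  · rintro ⟨g, hg, hb, h⟩
    exact ⟨⟨g, hb⟩, hg, Units.ext h⟩

theorem card_AA_inf (H : Subgroup (SL2 F)) : Nat.card (AA H) = Nat.card (H ⊓ uni F : Subgroup (SL2 F)) := by
  refine Nat.card_congr ⟨fun a => ⟨uu a, a.2, uu_mem _⟩, fun g => ⟨g.1.1 0 1, ?_⟩, ?_, ?_⟩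
  · obtain ⟨g, hg, a, rfl⟩ := g
    exact hg
  · intro a; rfl
  · rintro ⟨g, hg, a, rfl⟩; rfl

variable [Fintype F]

theorem card_hb (H : Subgroup (SL2 F)) :
    Nat.card (H ⊓ bor F : Subgroup (SL2 F)) = Nat.card (AA H) * Nat.card (ZZ H) := by
  let φ : (H.subgroupOf (bor F)) →* Fˣ := (del F).comp (Subgroup.subtype _)
  have h1 : φ.range = ZZ H := by
    rw [MonoidHom.range_comp, Subgroup.range_subtype]; rfl
  have h2 : Nat.card φ.ker = Nat.card (AA H) := by
    rw [card_AA_inf]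
    refine Nat.card_congr ⟨fun g => ⟨g.1.1.1, g.1.2, (del_ker _).1 g.2⟩,
      fun g => ⟨⟨⟨g.1, uni_le_bor g.2.2⟩, g.2.1⟩, (del_ker _).2 g.2.2⟩, fun g => rfl, fun g => rfl⟩
  have h3 := Subgroup.card_eq_card_quotient_mul_card_subgroup φ.ker
  rw [Nat.card_congr (QuotientGroup.quotientKerEquivRange φ).toEquiv, h1, h2] at h3
  rw [mul_comm, ← h3]
  exact Nat.card_congr ⟨fun g => ⟨⟨g.1, g.2.2⟩, g.2.1⟩, fun g => ⟨g.1.1, g.2, g.1.2⟩, fun g => rfl, fun g => rfl⟩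

theorem ZZ_dvd (H : Subgroup (SL2 F)) : Nat.card (ZZ H) ∣ Nat.card F - 1 := by
  rw [← Nat.card_units]; exact Subgroup.card_subgroup_dvd_card _

theorem ZZ_smul {H : Subgroup (SL2 F)} {z : Fˣ} (hz : z ∈ ZZ H) {a : F} (ha : a ∈ AA H) :
    (z : F) ^ 2 * a ∈ AA H := by
  obtain ⟨g, hg, h1, h2⟩ := mem_ZZ.1 hz
  rw [mem_AA, ← h2, ← mem_bor_conj_uu h1]
  exact H.mul_mem (H.mul_mem hg ha) (H.inv_mem hg)

variable [CharP F 2]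

theorem sq_inj2 {a b : F} (h : a ^ 2 = b ^ 2) : a = b := by
  have : (a - b) ^ 2 = 0 := by
    have h2 : (2 : F) = 0 := CharP.cast_eq_zero F 2
    linear_combination h - (a * b - b^2) * h2 
  exact sub_eq_zero.1 (pow_eq_zero_iff (two_ne_zero)|>.1 this)

theorem ZZ_le (H : Subgroup (SL2 F)) (hA : 2 ≤ Nat.card (AA H)) :
    Nat.card (ZZ H) ≤ Nat.card (AA H) - 1 := by
  have : Nontrivial (AA H) := (Finite.one_lt_card_iff_nontrivial).1 (by omega)
  obtain ⟨a, ha⟩ := exists_ne (0 : AA H)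
  have ha' : (a : F) ≠ 0 := fun h => ha (Subtype.ext h)
  have h1 : Nat.card {b : AA H // b ≠ 0} = Nat.card (AA H) - 1 := by
    rw [Nat.card_eq_fintype_card, Nat.card_eq_fintype_card, Fintype.card_subtype_compl]; simp
  rw [← h1]
  refine Nat.card_le_card_of_injective (fun z : ZZ H => (⟨⟨(z.1 : F) ^ 2 * a, ZZ_smul z.2 a.2⟩, ?_⟩ : {b : AA H // b ≠ 0})) ?_
  · intro h
    have : (z.1 : F) ^ 2 * a = 0 := congrArg Subtype.val h
    simp [ha'] at this
  · intro z z' h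
    have : (z.1 : F) ^ 2 * a = (z'.1 : F) ^ 2 * a := congrArg (fun x => ((x.1 : AA H) : F)) h
    exact Subtype.ext (Units.ext (sq_inj2 (mul_right_cancel₀ ha' this)))

/-- 2-Sylow conjugation -/
theorem sylow_conj (f : ℕ) (hf : 1 ≤ f) (hF : Nat.card F = 2 ^ f) (H : Subgroup (SL2 F)) :
    ∃ x : SL2 F, ∃ n, Odd n ∧ Nat.card H = Nat.card (AA (cjS x H)) * n := by
  have hodd : Odd (Nat.card F ^ 2 - 1) := by
    rw [hF, ← pow_mul]
    exact Nat.Even.sub_odd Nat.one_le_two_pow (by rw [Nat.even_pow]; exact ⟨even_two, by omega⟩) odd_one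
  have h2 : Fact (Nat.Prime 2) := ⟨Nat.prime_two⟩
  have hfac : (Nat.card (SL2 F)).factorization 2 = f := by
    rw [card_sl, Nat.factorization_mul (by rw [hF]; positivity) hodd.pos.ne', hF]
    simp [Nat.Prime.factorization_pow, Nat.prime_two]
    rw [← hF]; apply Nat.factorization_eq_zero_of_not_dvd; exact Odd.not_two_dvd_nat hodd
  let S : Sylow 2 (SL2 F) := Sylow.ofCard (uni F) (by rw [hfac, card_uni, hF])
  obtain ⟨P⟩ : Nonempty (Sylow 2 H) := inferInstance
  obtain ⟨Q, hQ⟩ := (P.2.map H.subtype).exists_le_sylow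
  obtain ⟨g, hg⟩ := MulAction.exists_smul_eq (SL2 F) Q S
  have key : ∀ p ∈ P, g * (p : SL2 F) * g⁻¹ ∈ uni F := by
    intro p hp
    have h1 : (p : SL2 F) ∈ (Q : Subgroup (SL2 F)) := hQ ⟨p, hp, rfl⟩
    have : g * (p : SL2 F) * g⁻¹ ∈ ((g • Q : Sylow 2 (SL2 F)) : Subgroup (SL2 F)) := by
      rw [Sylow.coe_subgroup_smul]
      exact ⟨p, h1, rfl⟩
    rw [hg] at this
    exact this
  refine ⟨g, ?_⟩
  -- card P | card (AA) | card H, both two powers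
  have hle : Nat.card P ≤ Nat.card (AA (cjS g H)) := by
    rw [card_AA_inf]
    refine Nat.card_le_card_of_injective (fun p => ⟨g * (p.1 : SL2 F) * g⁻¹, cjS_mem p.1.2, key p.1 p.2⟩) ?_
    intro p p' h
    have := congrArg Subtype.val h
    simp at this
    exact this
  have hdvd : Nat.card (AA (cjS g H)) ∣ Nat.card H := by
    rw [card_AA_inf, ← card_cjS g H]
    exact Subgroup.card_dvd_of_le inf_le_left
  have hpow : Nat.card (AA (cjS g H)) ∣ 2 ^ f := by
    rw [card_AA_inf, ← hF, ← card_uni (F := F)]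
    exact Subgroup.card_dvd_of_le inf_le_right
  obtain ⟨j, hj, hj'⟩ := (Nat.dvd_prime_pow Nat.prime_two).1 hpow
  have hP : Nat.card P = 2 ^ ((Nat.card H).factorization 2) := Sylow.card_eq_multiplicity P
  have hcH : Nat.card H ≠ 0 := Nat.card_pos.ne'
  have hj2 : j ≤ (Nat.card H).factorization 2 := by
    rw [hj'] at hdvd
    exact (Nat.prime_two.pow_dvd_iff_le_factorization hcH).1 hdvd
  have : Nat.card (AA (cjS g H)) = 2 ^ ((Nat.card H).factorization 2) := by
    apply le_antisymm _ (hP ▸ hle)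
    rw [hj']; exact Nat.pow_le_pow_right (by norm_num) hj2
  rw [this]
  refine ⟨Nat.card H / 2 ^ ((Nat.card H).factorization 2), ?_, (Nat.ordProj_mul_ordCompl_eq_self _ 2).symm⟩
  rw [← Nat.not_even_iff_odd, even_iff_two_dvd]
  exact Nat.not_dvd_ordCompl Nat.prime_two hcH

end SLtwoB
end PartB2

section PartB3
open scoped Classical
set_option linter.unusedSectionVars false
set_option linter.unusedSimpArgs false
set_option linter.unusedVariables false

section SLtwoC
variable {F : Type} [Field F] [Fintype F] [CharP F 2]

theorem two0 : (2 : F) = 0 := CharP.cast_eq_zero F 2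

theorem core_inj (H : Subgroup (SL2 F)) (h0 : SL2 F) (h0H : h0 ∈ H) (h0B : h0.1 1 0 ≠ 0)
    (hA : 2 ≤ Nat.card (AA H)) :
    Nat.card (ZZ H) = Nat.card (AA H) - 1 ∧
    ∀ y ∈ H, y.1 1 0 ≠ 0 → (y.1 0 0 + y.1 1 1) / y.1 1 0 ∈ AA H := by
  let X := {g : SL2 F // g ∈ H ∧ g.1 1 0 ≠ 0}
  let A0 := {a : AA H // a ≠ 0}
  let HB := (H ⊓ bor F : Subgroup (SL2 F))
  have hr0 : ∀ x : SL2 F, ∃ r : SL2 F, (∃ h a, h ∈ H ∧ h.1 1 0 ≠ 0 ∧ x = h * uu a * h⁻¹) →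
      (∃ a, r ∈ H ∧ r.1 1 0 ≠ 0 ∧ x = r * uu a * r⁻¹) := by
    intro x
    by_cases h : ∃ h a, h ∈ H ∧ h.1 1 0 ≠ 0 ∧ x = h * uu a * h⁻¹
    · obtain ⟨h, a, h1⟩ := h
      exact ⟨h, fun _ => ⟨a, h1⟩⟩
    · exact ⟨1, fun h' => absurd h' h⟩
  choose r hr using hr0
  let xx : X × A0 × AA H → SL2 F := fun p => p.1.1 * uu (p.2.1.1 : F) * p.1.1⁻¹
  have hxx : ∀ p, xx p ∈ H ∧ (xx p).1 1 0 ≠ 0 ∧ (xx p).1 0 0 + (xx p).1 1 1 = 0 := by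
    intro p
    refine ⟨H.mul_mem (H.mul_mem p.1.2.1 p.2.1.1.2) (H.inv_mem p.1.2.1), ?_, ?_⟩
    · rw [conj_uu10]
      have h1 : (p.2.1.1 : F) ≠ 0 := fun h => p.2.1.2 (Subtype.ext h)
      simp [h1, p.1.2.2]
    · rw [conj_uu_tr, two0]
  have hrx : ∀ p, r (xx p) ∈ H ∧ ((r (xx p))⁻¹ * p.1.1).1 1 0 = 0 := by
    intro p
    obtain ⟨a, h1, h2, h3⟩ := hr (xx p) ⟨p.1.1, p.2.1.1, p.1.2.1, p.1.2.2, rfl⟩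
    refine ⟨h1, ?_⟩
    set k := (r (xx p))⁻¹ * p.1.1 with hk
    have h4 : k * uu (p.2.1.1 : F) * k⁻¹ = uu a := by
      have : p.1.1 * uu (p.2.1.1 : F) * p.1.1⁻¹ = r (xx p) * uu a * (r (xx p))⁻¹ := h3
      rw [hk]
      calc _ = (r (xx p))⁻¹ * (p.1.1 * uu (p.2.1.1 : F) * p.1.1⁻¹) * r (xx p) := by group
        _ = _ := by rw [this]; group
    have h5 := conj_uu10 k (p.2.1.1 : F)
    rw [h4] at h5
    have h6 : (p.2.1.1 : F) ≠ 0 := fun h => p.2.1.2 (Subtype.ext h)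
    simpa [h6] using h5.symm
  have hmul10 : ∀ (g : SL2 F) (b : F), (g * uu b).1 1 0 = g.1 1 0 := by
    intro g b; rw [sl_mul]; simp
  have hmultr : ∀ (g : SL2 F) (b : F), (g * uu b).1 0 0 + (g * uu b).1 1 1 =
      g.1 0 0 + g.1 1 1 + g.1 1 0 * b := by
    intro g b; simp only [sl_mul]; simp; ring
  let Φ : X × A0 × AA H → X × HB := fun p =>
    (⟨xx p * uu (p.2.2 : F), H.mul_mem (hxx p).1 p.2.2.2, by rw [hmul10]; exact (hxx p).2.1⟩,
     ⟨(r (xx p))⁻¹ * p.1.1, H.mul_mem (H.inv_mem (hrx p).1) p.1.2.1, (hrx p).2⟩)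
  have hinj : Function.Injective Φ := by
    intro p p' h
    have e1 : xx p * uu (p.2.2 : F) = xx p' * uu (p'.2.2 : F) := congrArg (fun x => x.1.1) h
    have e2 : (r (xx p))⁻¹ * p.1.1 = (r (xx p'))⁻¹ * p'.1.1 := congrArg (fun x => x.2.1) h
    have t := hmultr (xx p) p.2.2
    have t' := hmultr (xx p') p'.2.2
    rw [(hxx p).2.2] at t
    rw [← e1, (hxx p').2.2, t] at t'
    have s : (xx p).1 1 0 = (xx p').1 1 0 := by
      rw [← hmul10 (xx p) p.2.2, e1, hmul10]
    rw [zero_add, zero_add, s] at t'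
    have hb := mul_left_cancel₀ (hxx p').2.1 t'
    rw [hb] at e1
    have ex := mul_right_cancel e1
    rw [ex] at e2
    have eh := mul_left_cancel e2
    have ea : uu (p.2.1.1 : F) = uu (p'.2.1.1 : F) := by
      have : p.1.1 * uu (p.2.1.1 : F) * p.1.1⁻¹ = p'.1.1 * uu (p'.2.1.1 : F) * p'.1.1⁻¹ := ex
      rw [eh] at this
      exact mul_left_cancel (mul_right_cancel this)
    have ea := uu_inj ea
    exact Prod.ext (Subtype.ext eh) (Prod.ext (Subtype.ext (Subtype.ext ea)) (Subtype.ext hb))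
  have cA0 : Nat.card A0 = Nat.card (AA H) - 1 := by
    rw [Nat.card_eq_fintype_card, Nat.card_eq_fintype_card, Fintype.card_subtype_compl]; simp
  have c1 : Nat.card (X × A0 × AA H) = Nat.card X * ((Nat.card (AA H) - 1) * Nat.card (AA H)) := by
    rw [Nat.card_prod, Nat.card_prod, cA0]
  have c2 : Nat.card (X × HB) = Nat.card X * (Nat.card (AA H) * Nat.card (ZZ H)) := by
    rw [Nat.card_prod, card_hb]
  have hle := Nat.card_le_card_of_injective Φ hinj
  have hX : 0 < Nat.card X := by
    have : Nonempty X := ⟨⟨h0, h0H, h0B⟩⟩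
    exact Nat.card_pos
  rw [c1, c2] at hle
  have hle := Nat.le_of_mul_le_mul_left hle hX
  rw [mul_comm] at hle
  have hle := Nat.le_of_mul_le_mul_left hle (by omega)
  have heq : Nat.card (ZZ H) = Nat.card (AA H) - 1 := le_antisymm (ZZ_le H hA) hle
  refine ⟨heq, ?_⟩
  intro y hy hyB
  have hbij : Function.Bijective Φ := by
    rw [Nat.bijective_iff_injective_and_card]
    refine ⟨hinj, ?_⟩
    rw [c1, c2, heq, mul_comm (Nat.card (AA H))]
  obtain ⟨p, hp⟩ := hbij.2 (⟨y, hy, hyB⟩, 1)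
  have e : xx p * uu (p.2.2 : F) = y := congrArg (fun x => x.1.1) hp
  rw [← e, hmultr, hmul10, (hxx p).2.2, zero_add, mul_div_cancel_left₀ _ (hxx p).2.1]
  exact p.2.2.2

/-- order of H in the non-Borel case -/
theorem core_card (H : Subgroup (SL2 F)) (h0 : SL2 F) (h0H : h0 ∈ H) (h0B : h0.1 1 0 ≠ 0)
    (hA : 4 ≤ Nat.card (AA H)) :
    Nat.card H = Nat.card (H ⊓ bor F : Subgroup (SL2 F)) * (Nat.card (AA H) + 1) := by
  obtain ⟨hz, htr⟩ := core_inj H h0 h0H h0B (by omega)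
  have : Nontrivial (ZZ H) := (Finite.one_lt_card_iff_nontrivial).1 (by omega)
  obtain ⟨α, hα⟩ := exists_ne (1 : ZZ H)
  obtain ⟨d, hd, hd1, hd2⟩ := mem_ZZ.1 α.2
  have hα1 : (α.1 : F) + 1 ≠ 0 := by
    intro h
    apply hα
    apply Subtype.ext; apply Units.ext
    show (α.1 : F) = 1
    linear_combination h - two0 (F := F)
  have hα2 : (α.1 : F) ^ 2 + 1 ≠ 0 := by
    have : (α.1 : F)^2 + 1 = ((α.1 : F) + 1) ^ 2 := by linear_combination -(α.1 : F) * two0 (F := F)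
    rw [this]; exact pow_ne_zero _ hα1
  set t : F := Units.val α.1 with ht
  have ht0 : t ≠ 0 := α.1.ne_zero
  -- multiplication by t^2+1 is a bijection of AA H
  have hbij : ∀ a ∈ AA H, ∃ b ∈ AA H, (t ^ 2 + 1) * b = a := by
    intro a ha
    let m : AA H → AA H := fun b => ⟨t ^ 2 * b + b, (AA H).add_mem (ZZ_smul α.2 b.2) b.2⟩
    have hm : Function.Injective m := by
      intro b b' h
      have : t ^ 2 * (b : F) + b = t ^ 2 * b' + b' := congrArg Subtype.val h
      apply Subtype.ext
      apply mul_left_cancel₀ hα2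
      linear_combination this
    obtain ⟨b, hb⟩ := (Finite.injective_iff_surjective.1 hm) ⟨a, ha⟩
    refine ⟨b, b.2, ?_⟩
    have : t ^ 2 * (b : F) + b = a := congrArg Subtype.val hb
    linear_combination this
  set β := d.1 0 1 with hβ
  let κ : F := t * β / (t ^ 2 + 1)
  have hdet : t * d.1 1 1 = 1 := by rw [← hd2]; exact bor_ne hd1
  have hpt : ∀ y ∈ H, y.1 1 0 ≠ 0 → y.1 0 0 / y.1 1 0 - κ ∈ AA H := by
    intro y hy hyB
    have e1 := htr y hy hyB
    have e10 : (d * y).1 1 0 = d.1 1 1 * y.1 1 0 := by rw [sl_mul, hd1]; ring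
    have hd11 : d.1 1 1 ≠ 0 := by intro h; rw [h] at hdet; simp at hdet
    have e2 := htr (d * y) (H.mul_mem hd hy) (by rw [e10]; exact mul_ne_zero hd11 hyB)
    obtain ⟨b, hb, hb'⟩ := hbij _ ((AA H).sub_mem e2 e1)
    convert hb using 1
    apply mul_left_cancel₀ hα2
    rw [hb', e10]
    simp only [sl_mul, hd1, hd2, ← hβ]
    have : d.1 1 1 = t⁻¹ := by field_simp; linear_combination hdet
    rw [this]
    simp only [κ]
    field_simp
    linear_combination (y.1 0 0 - t * β * y.1 1 0) * two0 (F := F)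
  -- bijection
  let X := {g : SL2 F // g ∈ H ∧ g.1 1 0 ≠ 0}
  have hpt2 : ∀ a ∈ AA H, ∃ y, y ∈ H ∧ y.1 1 0 ≠ 0 ∧ y.1 0 0 / y.1 1 0 = a + κ := by
    intro a ha
    have e := hpt h0 h0H h0B
    refine ⟨uu (a - (h0.1 0 0 / h0.1 1 0 - κ)) * h0, H.mul_mem ((AA H).sub_mem ha e) h0H, ?_, ?_⟩
    · rw [sl_mul]; simpa using h0B
    · simp only [sl_mul]; simp; field_simp; ring
  choose! s hs using hpt2
  have hstab : ∀ y y' : SL2 F, y.1 1 0 ≠ 0 → y'.1 1 0 ≠ 0 → y.1 0 0 / y.1 1 0 = y'.1 0 0 / y'.1 1 0 →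
      (y'⁻¹ * y).1 1 0 = 0 := by
    intro y y' h h' e
    rw [sl_mul, sl_inv10, sl_inv11]
    field_simp at e
    linear_combination -e
  have hstab2 : ∀ y b : SL2 F, y.1 1 0 ≠ 0 → b.1 1 0 = 0 → 
      (y * b).1 1 0 ≠ 0 ∧ (y * b).1 0 0 / (y * b).1 1 0 = y.1 0 0 / y.1 1 0 := by
    intro y b hy hb
    have := bor_ne (g := b) hb
    have hb0 : b.1 0 0 ≠ 0 := by intro h; rw [h] at this; simp at this
    simp only [sl_mul, hb]
    simp only [mul_zero, add_zero]
    exact ⟨mul_ne_zero hy hb0, by field_simp⟩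
  have cX : Nat.card X = Nat.card (AA H × (H ⊓ bor F : Subgroup (SL2 F))) := by
    refine Nat.card_congr ⟨fun y => (⟨_, hpt y.1 y.2.1 y.2.2⟩,
        ⟨(s (y.1.1 0 0 / y.1.1 1 0 - κ))⁻¹ * y.1, ?_, ?_⟩),
      fun p => ⟨s p.1 * p.2.1, ?_, ?_⟩, ?_, ?_⟩
    · have := hs _ (hpt y.1 y.2.1 y.2.2)
      exact H.mul_mem (H.inv_mem this.1) y.2.1
    · have := hs _ (hpt y.1 y.2.1 y.2.2)
      apply hstab _ _ y.2.2 this.2.1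
      rw [this.2.2]; ring
    · exact H.mul_mem (hs _ p.1.2).1 p.2.2.1
    · exact (hstab2 _ _ (hs _ p.1.2).2.1 p.2.2.2).1
    · intro y; apply Subtype.ext; simp
    · intro p
      have h1 := (hstab2 _ _ (hs _ p.1.2).2.1 p.2.2.2).2
      rw [(hs _ p.1.2).2.2] at h1
      have h2 : ((s p.1 * p.2.1).1 0 0 / (s p.1 * p.2.1).1 1 0 - κ) = p.1 := by
        rw [h1]; ring
      refine Prod.ext (Subtype.ext h2) (Subtype.ext ?_)
      show (s ((s p.1 * p.2.1).1 0 0 / (s p.1 * p.2.1).1 1 0 - κ))⁻¹ * (s p.1 * p.2.1) = p.2.1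
      rw [h2]; group
  have cH : Nat.card H = Nat.card (H ⊓ bor F : Subgroup (SL2 F)) + Nat.card X := by
    rw [← Nat.card_sum]
    refine Nat.card_congr ((Equiv.sumCompl (fun g : H => g.1.1 1 0 = 0)).symm.trans (Equiv.sumCongr ?_ ?_))
    · exact ⟨fun g => ⟨g.1.1, g.1.2, g.2⟩, fun g => ⟨⟨g.1, g.2.1⟩, g.2.2⟩, fun g => rfl, fun g => rfl⟩
    · exact ⟨fun g => ⟨g.1.1, g.1.2, g.2⟩, fun g => ⟨⟨g.1, g.2.1⟩, g.2.2⟩, fun g => rfl, fun g => rfl⟩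
  rw [cH, cX, Nat.card_prod]; ring

end SLtwoC
end PartB3

section PartB4
open scoped Classical
set_option linter.unusedSectionVars false
set_option linter.unusedSimpArgs false
set_option linter.unusedVariables false

section SLtwoD
variable {F : Type} [Field F] [Fintype F] [CharP F 2]

theorem bruhat_top (H : Subgroup (SL2 F)) (hB : bor F ≤ H) (h0 : SL2 F) (h0H : h0 ∈ H)
    (h0B : h0.1 1 0 ≠ 0) : H = ⊤ := by
  rw [eq_top_iff]
  intro g _
  by_cases hg : g.1 1 0 = 0
  · exact hB hg
  · set k := uu (g.1 0 0 / g.1 1 0 - h0.1 0 0 / h0.1 1 0) * h0 with hk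
    have hkH : k ∈ H := H.mul_mem (hB (uu_mem_bor _)) h0H
    have : (k⁻¹ * g) ∈ H := by
      apply hB
      rw [mem_bor, sl_mul, sl_inv10, sl_inv11, hk]
      simp only [sl_mul]; simp; field_simp; ring
    have := H.mul_mem hkH this
    rwa [mul_inv_cancel_left] at this

theorem bor_le_of_card (H : Subgroup (SL2 F)) (h1 : Nat.card (AA H) = Nat.card F)
    (h2 : Nat.card (ZZ H) = Nat.card F - 1) : bor F ≤ H := by
  have h3 := card_hb H
  rw [h1, h2, ← card_bor] at h3
  have : H ⊓ bor F = bor F := Subgroup.eq_of_le_of_card_ge inf_le_right h3.ge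
  exact inf_eq_right.1 this

theorem claimC_core (f : ℕ) (hf : 4 ≤ f) (hF : Nat.card F = 2 ^ f) (H : Subgroup (SL2 F))
    (hH : H ≠ ⊤) (hdiv : Nat.card F ∣ 4 * Nat.card (AA H)) :
    H ≤ bor F ∨ (Nat.card F = 16 ∧ Nat.card H = 60 ∧ Nat.card (AA H) = 4 ∧
      Nat.card (H ⊓ bor F : Subgroup (SL2 F)) = 12) := by
  by_cases hle : H ≤ bor F
  · exact Or.inl hle
  right
  obtain ⟨h0, h0H, h0B⟩ := SetLike.not_le_iff_exists.1 hle
  have hpow : Nat.card (AA H) ∣ 2 ^ f := by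
    rw [card_AA_inf, ← hF, ← card_uni (F := F)]
    exact Subgroup.card_dvd_of_le inf_le_right
  obtain ⟨j, hj, hj'⟩ := (Nat.dvd_prime_pow Nat.prime_two).1 hpow
  have hjf : f ≤ j + 2 := by
    rw [hF, hj'] at hdiv
    have : 2 ^ f ∣ 2 ^ (j + 2) := by rw [pow_add]; rwa [mul_comm] at hdiv
    exact (Nat.pow_dvd_pow_iff_le_right (by norm_num)).1 this
  have hj4 : 4 ≤ Nat.card (AA H) := by
    rw [hj']
    calc 4 = 2 ^ 2 := rfl
      _ ≤ 2 ^ j := Nat.pow_le_pow_right (by norm_num) (by omega)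
  obtain ⟨hz, -⟩ := core_inj H h0 h0H h0B (by omega)
  have hcard := core_card H h0 h0H h0B hj4
  have hzd := ZZ_dvd H
  rw [hz, hF, hj'] at hzd
  have hcase : j = f ∨ j + 1 = f ∨ j + 2 = f := by omega
  have hm : 4 ≤ 2 ^ j := hj' ▸ hj4
  rcases hcase with rfl | rfl | rfl
  · exact absurd (bruhat_top H (bor_le_of_card H (by rw [hj', hF]) (by rw [hz, hj', hF])) h0 h0H h0B) hH
  · exfalso
    have : 2 ^ j - 1 ∣ 1 := by
      have e : 2 ^ (j + 1) - 1 = 2 * (2 ^ j - 1) + 1 := by rw [pow_succ]; omega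
      rw [e] at hzd
      exact (Nat.dvd_add_right (Dvd.intro_left _ rfl)).1 hzd
    have := Nat.le_of_dvd one_pos this
    omega
  · have : 2 ^ j - 1 ∣ 3 := by
      have e : 2 ^ (j + 2) - 1 = 4 * (2 ^ j - 1) + 3 := by rw [pow_add]; omega
      rw [e] at hzd
      exact (Nat.dvd_add_right (Dvd.intro_left _ rfl)).1 hzd
    have := Nat.le_of_dvd (by norm_num) this
    have hj4' : 2 ^ j = 4 := by omega
    have hA4 : Nat.card (AA H) = 4 := by omega
    have h12 : Nat.card (H ⊓ bor F : Subgroup (SL2 F)) = 12 := by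
      rw [card_hb, hz, hA4]
    exact ⟨by rw [hF, pow_add, hj4']; norm_num, by rw [hcard, h12, hA4], hA4, h12⟩

theorem cjS_ne_top {L : Type} [Group L] {x : L} {H : Subgroup L} (h : H ≠ ⊤) : cjS x H ≠ ⊤ := by
  intro h'
  apply h
  rw [eq_top_iff]
  intro g _
  have : x * g * x⁻¹ ∈ cjS x H := by rw [h']; trivial
  rw [mem_cjS] at this
  convert this using 1; group

theorem order3 (H : Subgroup (SL2 F)) (h60 : Nat.card H = 60) (hA : Nat.card (AA H) = 4)
    (h12 : Nat.card (H ⊓ bor F : Subgroup (SL2 F)) = 12) (t : SL2 F) (ht : t ∈ H) (ht3 : t ^ 3 = 1) :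
    ∃ x, t ∈ cjS x (bor F) ∧ ∃ v ∈ H, v ≠ 1 ∧ v ∈ cjS x (uni F) := by
  let K : Subgroup H := (bor F).subgroupOf H
  have cK : Nat.card K = 12 := by
    rw [← h12]
    exact Nat.card_congr ⟨fun g => ⟨g.1.1, g.1.2, g.2⟩, fun g => ⟨⟨g.1, g.2.1⟩, g.2.2⟩, fun g => rfl, fun g => rfl⟩
  have c5 : Nat.card (H ⧸ K) = 5 := by
    have := Subgroup.card_eq_card_quotient_mul_card_subgroup K
    rw [h60, cK] at this; omega
  let t' : H := ⟨t, ht⟩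
  have ht' : t' ^ 3 = 1 := Subtype.ext ht3
  have h3 : Fact (Nat.Prime 3) := ⟨Nat.prime_three⟩
  have hp : IsPGroup 3 (Subgroup.zpowers t') := by
    rintro ⟨g, n, rfl⟩
    refine ⟨1, Subtype.ext ?_⟩
    show (t' ^ n) ^ (3 ^ 1) = 1
    rw [pow_one, ← zpow_natCast, ← zpow_mul, mul_comm, zpow_mul, zpow_natCast, ht', one_zpow]
  have hm := hp.card_modEq_card_fixedPoints (H ⧸ K)
  rw [c5] at hm
  have hne : Nonempty (MulAction.fixedPoints (Subgroup.zpowers t') (H ⧸ K)) := by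
    by_contra h
    rw [not_nonempty_iff] at h
    rw [Nat.card_of_isEmpty] at hm
    exact absurd hm (by decide)
  obtain ⟨⟨c, hc⟩⟩ := hne
  obtain ⟨g, rfl⟩ := QuotientGroup.mk_surjective c
  have hfix := hc ⟨t', Subgroup.mem_zpowers _⟩
  have hfix : (QuotientGroup.mk (t' * g) : H ⧸ K) = QuotientGroup.mk g := hfix
  have hfix' := QuotientGroup.eq.1 hfix.symm
  refine ⟨g.1, ?_, ?_⟩
  · rw [mem_cjS]
    have : g.1⁻¹ * (t * g.1) ∈ bor F := hfix'
    rwa [mul_assoc]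
  · have : Nontrivial (AA H) := (Finite.one_lt_card_iff_nontrivial).1 (by omega)
    obtain ⟨a, ha⟩ := exists_ne (0 : AA H)
    refine ⟨g.1 * uu (a : F) * g.1⁻¹, H.mul_mem (H.mul_mem g.2 a.2) (H.inv_mem g.2), ?_, cjS_mem (uu_mem _)⟩
    intro h
    rw [mul_inv_eq_one, mul_eq_left, ← uu_zero] at h
    exact ha (Subtype.ext (uu_inj h))

theorem cjS_cjS {L : Type} [Group L] (x y : L) (H : Subgroup L) : cjS x (cjS y H) = cjS (x * y) H := by
  ext g; simp only [mem_cjS]; rw [show (x * y)⁻¹ * g * (x * y) = y⁻¹ * (x⁻¹ * g * x) * y by group]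

theorem claimC (f : ℕ) (hf : 4 ≤ f) (hF : Nat.card F = 2 ^ f) (H : Subgroup (SL2 F))
    (hH : H ≠ ⊤) (hdiv : Nat.card F ∣ 4 * Nat.card H) :
    ∃ x n, Odd n ∧ Nat.card H = Nat.card (AA (cjS x H)) * n ∧ (cjS x H ≤ bor F ∨ (Nat.card F = 16 ∧ Nat.card H = 60 ∧ ∀ t ∈ H, t ^ 3 = 1 →
      ∃ x, t ∈ cjS x (bor F) ∧ ∃ v ∈ H, v ≠ 1 ∧ v ∈ cjS x (uni F))) := by
  obtain ⟨x, n, hn, hx⟩ := sylow_conj f (by omega) hF H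
  refine ⟨x, n, hn, hx, ?_⟩
  have hd : Nat.card F ∣ 4 * Nat.card (AA (cjS x H)) := by
    rw [hx, ← mul_assoc] at hdiv
    refine Nat.Coprime.dvd_of_dvd_mul_right ?_ hdiv
    rw [hF]
    exact Nat.Coprime.pow_left _ (Nat.coprime_two_left.2 hn)
  rcases claimC_core f hf hF (cjS x H) (cjS_ne_top hH) hd with h | ⟨h16, h60, hA, h12⟩
  · exact Or.inl h
  · refine Or.inr ⟨h16, by rw [← card_cjS x H, h60], fun t ht ht3 => ?_⟩
    obtain ⟨y, hy, v, hv, hv1, hv2⟩ := order3 (cjS x H) h60 hA h12 (x * t * x⁻¹) (cjS_mem ht) (by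
      rw [conj_pow, ht3]; group)
    refine ⟨x⁻¹ * y, ?_, x⁻¹ * v * x, mem_cjS.1 hv, ?_, ?_⟩
    · rw [← cjS_cjS, mem_cjS, inv_inv]; exact hy
    · intro h
      apply hv1
      calc v = x * (x⁻¹ * v * x) * x⁻¹ := by group
        _ = 1 := by rw [h]; group
    · rw [← cjS_cjS, mem_cjS, inv_inv]
      convert hv2 using 1; group

/-- index is divisible by q+1 -/
theorem index_dvd (f : ℕ) (hf : 4 ≤ f) (hF : Nat.card F = 2 ^ f) (H : Subgroup (SL2 F))
    (hH : H ≠ ⊤) (hdiv : Nat.card F ∣ 4 * Nat.card H) : Nat.card F + 1 ∣ H.index := by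
  obtain ⟨x, -, -, -, h | ⟨h16, h60, -⟩⟩ := claimC f hf hF H hH hdiv
  · have h1 : Nat.card H ∣ Nat.card (bor F) := by
      rw [← card_cjS x H]; exact Subgroup.card_dvd_of_le h
    obtain ⟨k, hk⟩ := h1
    have h2 := Subgroup.card_mul_index H
    have h3 : Nat.card F ^ 2 - 1 = (Nat.card F - 1) * (Nat.card F + 1) := by
      have := Nat.sq_sub_sq (Nat.card F) 1
      rw [one_pow] at this; rw [this, mul_comm]
    rw [card_sl, h3, ← mul_assoc, ← card_bor, hk, mul_assoc] at h2
    have := Nat.eq_of_mul_eq_mul_left Nat.card_pos h2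
    rw [this]; exact Dvd.intro_left _ rfl
  · have h2 := Subgroup.card_mul_index H
    rw [card_sl, h60, h16] at h2
    rw [h16]
    exact ⟨4, by omega⟩

/-- if H ≤ B and |A| = q/2 then z = 1 -/
theorem half_z (H : Subgroup (SL2 F)) (h : Nat.card F = 2 * Nat.card (AA H)) : Nat.card (ZZ H) = 1 := by
  by_contra hne
  obtain ⟨s, hs, hsd⟩ := Nat.exists_prime_and_dvd hne
  have : Fact s.Prime := ⟨hs⟩
  obtain ⟨α, hα⟩ := exists_prime_orderOf_dvd_card' s hsd
  let act : MulAction (Subgroup.zpowers α) (AA H) := 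
    { smul := fun z a => ⟨((z.1.1 : Fˣ) : F) ^ 2 * a, ZZ_smul z.1.2 a.2⟩
      one_smul := fun a => Subtype.ext (by show (1 : F) ^ 2 * a = a; simp)
      mul_smul := fun z z' a => Subtype.ext (by
        show (((z.1.1 : Fˣ) : F) * ((z'.1.1 : Fˣ) : F)) ^ 2 * a = ((z.1.1 : Fˣ) : F) ^ 2 * (((z'.1.1 : Fˣ) : F) ^ 2 * a)
        ring) }
  have hp : IsPGroup s (Subgroup.zpowers α) := IsPGroup.of_card (n := 1) (by
    rw [Nat.card_zpowers, hα, pow_one])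
  have hm := hp.card_modEq_card_fixedPoints (AA H)
  have hf1 : Nat.card (MulAction.fixedPoints (Subgroup.zpowers α) (AA H)) = 1 := by
    rw [Nat.card_eq_one_iff_unique]
    refine ⟨⟨?_⟩, ⟨⟨0, fun z => Subtype.ext (by show ((z.1.1 : Fˣ) : F) ^ 2 * 0 = 0; simp)⟩⟩⟩
    have : ∀ a : MulAction.fixedPoints (Subgroup.zpowers α) (AA H), a.1 = 0 := by
      intro a
      have h1 := congrArg Subtype.val (a.2 ⟨α, Subgroup.mem_zpowers _⟩)
      have h1 : ((α.1 : Fˣ) : F) ^ 2 * (a.1 : F) = a.1 := h1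
      apply Subtype.ext
      by_contra h0
      have h0 : ((a.1 : AA H) : F) ≠ 0 := h0
      have : ((α.1 : Fˣ) : F) ^ 2 = 1 ^ 2 := by
        rw [one_pow]; exact mul_right_cancel₀ h0 (by rw [h1, one_mul])
      have := sq_inj2 this
      have : α = 1 := Subtype.ext (Units.ext this)
      rw [this, orderOf_one] at hα
      exact hs.one_lt.ne hα
    intro a b
    exact Subtype.ext ((this a).trans (this b).symm)
  rw [hf1] at hm
  have h1 : Nat.card F ≡ 1 [MOD s] := by
    have := hsd.trans (ZZ_dvd H)
    exact ((Nat.modEq_iff_dvd' Nat.card_pos).2 this).symm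
  have h2 : Nat.card F ≡ 2 * 1 [MOD s] := by rw [h]; exact hm.mul_left 2
  have := (Nat.modEq_iff_dvd' (by norm_num)).1 (h1.symm.trans h2)
  exact hs.one_lt.ne' (Nat.dvd_one.1 this)

end SLtwoD
end PartB4

section PartC1
open scoped Classical
set_option linter.unusedSectionVars false
set_option linter.unusedSimpArgs false
set_option linter.unusedVariables false

section AutSL
open scoped Pointwise
variable {F : Type} [Field F] [Fintype F] [CharP F 2]

theorem exists_sq2 (a : F) : ∃ b, b ^ 2 = a :=
  (Finite.injective_iff_surjective.1 (fun x y h => sq_inj2 h : Function.Injective (fun x : F => x ^ 2))) a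

theorem sl_factor (f : ℕ) (hf : 1 ≤ f) (hF : Nat.card F = 2 ^ f) :
    (Nat.card (SL2 F)).factorization 2 = f := by
  have hodd : Odd (Nat.card F ^ 2 - 1) := by
    rw [hF, ← pow_mul]
    exact Nat.Even.sub_odd Nat.one_le_two_pow (by rw [Nat.even_pow]; exact ⟨even_two, by omega⟩) odd_one
  rw [card_sl, Nat.factorization_mul (by rw [hF]; positivity) hodd.pos.ne', hF]
  simp [Nat.Prime.factorization_pow, Nat.prime_two]
  rw [← hF]; apply Nat.factorization_eq_zero_of_not_dvd; exact Odd.not_two_dvd_nat hodd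

def sylU (f : ℕ) (hf : 1 ≤ f) (hF : Nat.card F = 2 ^ f) : Sylow 2 (SL2 F) :=
  haveI : Fact (Nat.Prime 2) := ⟨Nat.prime_two⟩
  Sylow.ofCard (uni F) (by rw [sl_factor f hf hF, card_uni, hF])

theorem norm_uni : Subgroup.normalizer (uni F : Set (SL2 F)) = bor F := by
  ext g
  rw [Subgroup.mem_normalizer_iff]
  constructor
  · intro h
    have h1 := (h (uu 1)).1 (uu_mem 1)
    have h2 := conj_uu10 g 1
    have h3 := uni_le_bor h1
    rw [mem_bor, h2] at h3
    rw [mem_bor]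
    simpa using h3
  · intro h x
    constructor
    · rintro ⟨a, rfl⟩
      rw [mem_bor_conj_uu h]; exact uu_mem _
    · rintro ⟨a, ha⟩
      have := mem_bor_conj_uu ((bor F).inv_mem h) a
      rw [← ha] at this
      have e : x = g⁻¹ * (g * x * g⁻¹) * g⁻¹⁻¹ := by group
      rw [e, this]; exact uu_mem _

def w0 : SL2 F := mkS 0 1 1 0 (by linear_combination - two0 (F := F))
@[simp] theorem w000 : (w0 : SL2 F).1 0 0 = 0 := rfl
@[simp] theorem w001 : (w0 : SL2 F).1 0 1 = 1 := rfl
@[simp] theorem w010 : (w0 : SL2 F).1 1 0 = 1 := rfl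
@[simp] theorem w011 : (w0 : SL2 F).1 1 1 = 0 := rfl

/-- standard position of two distinct Sylow subgroups -/
theorem syl_pos (f : ℕ) (hf : 1 ≤ f) (hF : Nat.card F = 2 ^ f) (a b : Sylow 2 (SL2 F)) (hab : a ≠ b) :
    ∃ l : SL2 F, l • a = sylU f hf hF ∧ l • b = (w0 : SL2 F) • sylU f hf hF := by
  have : Fact (Nat.Prime 2) := ⟨Nat.prime_two⟩
  obtain ⟨x, hx⟩ := MulAction.exists_smul_eq (SL2 F) a (sylU f hf hF)
  obtain ⟨y, hy⟩ := MulAction.exists_smul_eq (SL2 F) (sylU f hf hF) (x • b)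
  have hst : ∀ k : SL2 F, k ∈ bor F → k • sylU f hf hF = sylU f hf hF := by
    intro k hk
    rw [Sylow.smul_eq_iff_mem_normalizer]
    show k ∈ Subgroup.normalizer (uni F : Set (SL2 F))
    rw [norm_uni]; exact hk
  have hy0 : y.1 1 0 ≠ 0 := by
    intro h
    rw [hst y h] at hy
    rw [← hx] at hy
    exact hab (smul_left_cancel x hy)
  refine ⟨uu (- (y.1 0 0 / y.1 1 0)) * x, ?_, ?_⟩
  · rw [mul_smul, hx, hst _ (uu_mem_bor _)]
  · rw [mul_smul, ← hy, ← mul_smul]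
    have : uu (- (y.1 0 0 / y.1 1 0)) * y = w0 * (w0⁻¹ * (uu (- (y.1 0 0 / y.1 1 0)) * y)) := by group
    rw [this, mul_smul, hst]
    rw [mem_bor, sl_mul, sl_inv10, sl_inv11, sl_mul]
    simp; field_simp; ring

theorem degree_q (f : ℕ) (hf : 1 ≤ f) (hF : Nat.card F = 2 ^ f) {K : Type} [Group K] [Finite K]
    (c : K →* MulAut (SL2 F)) (hc : ∀ l, ∃ k, c k = MulAut.conj l) : Nat.card F ∈ charDegrees K := by
  have : Fact (Nat.Prime 2) := ⟨Nat.prime_two⟩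
  let _inst : MulAction K (Sylow 2 (SL2 F)) := MulAction.compHom _ c
  have hact : ∀ l : SL2 F, ∃ k : K, ∀ P : Sylow 2 (SL2 F), k • P = l • P := by
    intro l
    obtain ⟨k, hk⟩ := hc l
    refine ⟨k, fun P => ?_⟩
    show c k • P = l • P
    rw [hk]; rfl
  let _inst : Fintype (Sylow 2 (SL2 F)) := Fintype.ofFinite _
  refine two_trans_degree (Ω := Sylow 2 (SL2 F)) ?_ _ ?_ ?_
  · intro a b x d hab hcd
    obtain ⟨l, h1, h2⟩ := syl_pos f hf hF a b hab
    obtain ⟨l', h1', h2'⟩ := syl_pos f hf hF x d hcd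
    obtain ⟨k, hk⟩ := hact (l'⁻¹ * l)
    refine ⟨k, ?_, ?_⟩
    · rw [hk, mul_smul, h1, ← h1', inv_smul_smul]
    · rw [hk, mul_smul, h2, ← h2', inv_smul_smul]
  · have := Sylow.card_eq_index_normalizer (sylU f hf hF)
    have e : Subgroup.normalizer (sylU f hf hF : Set (SL2 F)) = bor F := norm_uni
    rw [e] at this
    rw [← Nat.card_eq_fintype_card, this]
    have h2 := Subgroup.card_mul_index (bor F)
    have h3 : Nat.card F ^ 2 - 1 = (Nat.card F - 1) * (Nat.card F + 1) := by
      have := Nat.sq_sub_sq (Nat.card F) 1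
      rw [one_pow] at this; rw [this, mul_comm]
    rw [card_sl, h3, ← mul_assoc, ← card_bor] at h2
    exact Nat.eq_of_mul_eq_mul_left Nat.card_pos h2
  · rw [hF]; calc 2 = 2 ^ 1 := rfl
      _ ≤ 2 ^ f := Nat.pow_le_pow_right (by norm_num) hf

/-! ### automorphisms -/
def dd (y : Fˣ) : SL2 F := mkS y 0 0 (y⁻¹ : Fˣ) (by simp)
@[simp] theorem dd00 (y : Fˣ) : (dd y).1 0 0 = y := rfl
@[simp] theorem dd01 (y : Fˣ) : (dd y).1 0 1 = 0 := rfl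
@[simp] theorem dd10 (y : Fˣ) : (dd y).1 1 0 = 0 := rfl
@[simp] theorem dd11 (y : Fˣ) : (dd y).1 1 1 = (y⁻¹ : Fˣ) := rfl
theorem dd_bor (y : Fˣ) : dd y ∈ bor F := rfl
def ll (x : F) : SL2 F := mkS 1 0 x 1 (by ring)
@[simp] theorem ll00 (y : F) : (ll y).1 0 0 = 1 := rfl
@[simp] theorem ll01 (y : F) : (ll y).1 0 1 = 0 := rfl
@[simp] theorem ll10 (y : F) : (ll y).1 1 0 = y := rfl
@[simp] theorem ll11 (y : F) : (ll y).1 1 1 = 1 := rfl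
theorem w0_conj (g : SL2 F) : (w0⁻¹ * g * w0).1 0 0 = g.1 1 1 ∧ (w0⁻¹ * g * w0).1 0 1 = g.1 1 0 ∧
   (w0⁻¹ * g * w0).1 1 0 = g.1 0 1 ∧ (w0⁻¹ * g * w0).1 1 1 = g.1 0 0 := by
  have h2 := two0 (F := F)
  simp only [sl_mul, sl_inv00, sl_inv01, sl_inv10, sl_inv11]
  simp
  have e : ∀ x : F, -x = x := fun x => by linear_combination -x * h2
  exact ⟨e _, e _, e _, e _⟩

theorem mem_w0_uni (g : SL2 F) : g ∈ cjS w0 (uni F) ↔ ∃ x, g = ll x := by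
  rw [mem_cjS]
  obtain ⟨h1, h2, h3, h4⟩ := w0_conj g
  constructor
  · rintro ⟨a, ha⟩
    rw [ha] at h1 h2 h3 h4
    exact ⟨a, sl_ext h4.symm h3.symm h2.symm h1.symm⟩
  · rintro ⟨a, rfl⟩
    exact ⟨a, sl_ext h1 h2 h3 h4⟩

theorem mem_w0_bor (g : SL2 F) : g ∈ cjS w0 (bor F) ↔ g.1 0 1 = 0 := by
  rw [mem_cjS, mem_bor, (w0_conj g).2.2.1]

/-- the subgroup of automorphisms in standard position -/
def GamF (F : Type) [Field F] [Fintype F] [CharP F 2] : Subgroup (MulAut (SL2 F)) where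
  carrier := {α | (∀ g, g ∈ uni F ↔ α g ∈ uni F) ∧ (∀ g, g ∈ cjS w0 (uni F) ↔ α g ∈ cjS w0 (uni F)) ∧
    α (uu 1) = uu 1}
  one_mem' := ⟨fun g => Iff.rfl, fun g => Iff.rfl, rfl⟩
  mul_mem' := by
    rintro a b ⟨h1, h2, h3⟩ ⟨h1', h2', h3'⟩
    refine ⟨fun g => (h1' g).trans (h1 _), fun g => (h2' g).trans (h2 _), ?_⟩
    show a (b _) = _
    rw [h3', h3]
  inv_mem' := by
    rintro a ⟨h1, h2, h3⟩
    refine ⟨fun g => ?_, fun g => ?_, ?_⟩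
    · rw [h1 (a⁻¹ g), MulAut.apply_inv_self]
    · rw [h2 (a⁻¹ g), MulAut.apply_inv_self]
    · nth_rw 1 [← h3]; rw [MulAut.inv_apply_self]

theorem gam_bor {α : MulAut (SL2 F)} (h : α ∈ GamF F) (g : SL2 F) (hg : g ∈ bor F) : α g ∈ bor F := by
  rw [← norm_uni, Subgroup.mem_normalizer_iff] at hg ⊢
  intro x
  obtain ⟨y, rfl⟩ := α.surjective x
  have h1 := hg y
  have h2 := h.1 y
  have h3 := h.1 (g * y * g⁻¹)
  rw [map_mul, map_mul, map_inv] at h3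
  exact (h2.symm.trans h1).trans h3

theorem norm_uni' : Subgroup.normalizer (cjS w0 (uni F) : Set (SL2 F)) = cjS w0 (bor F) := by
  ext g
  rw [mem_cjS, ← norm_uni, Subgroup.mem_normalizer_iff, Subgroup.mem_normalizer_iff]
  constructor
  · intro h x
    have := h (w0 * x * w0⁻¹)
    rw [mem_cjS, mem_cjS] at this
    convert this using 2 <;> group
  · intro h x
    have := h (w0⁻¹ * x * w0)
    show x ∈ cjS w0 (uni F) ↔ _ ∈ cjS w0 (uni F)
    rw [mem_cjS, mem_cjS]
    convert this using 2; group

theorem gam_bor' {α : MulAut (SL2 F)} (h : α ∈ GamF F) (g : SL2 F) (hg : g ∈ cjS w0 (bor F)) :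
    α g ∈ cjS w0 (bor F) := by
  rw [← norm_uni', Subgroup.mem_normalizer_iff] at hg ⊢
  intro x
  obtain ⟨y, rfl⟩ := α.surjective x
  have h1 := hg y
  have h2 := h.2.1 y
  have h3 := h.2.1 (g * y * g⁻¹)
  rw [map_mul, map_mul, map_inv] at h3
  exact (h2.symm.trans h1).trans h3

/-- field map -/
noncomputable def phiF (α : MulAut (SL2 F)) (x : F) : F := (α (uu x)).1 0 1
noncomputable def tauF (α : MulAut (SL2 F)) (y : Fˣ) : F := (α (dd y)).1 0 0

theorem phiF_spec {α : MulAut (SL2 F)} (h : α ∈ GamF F) (x : F) : α (uu x) = uu (phiF α x) := by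
  obtain ⟨a, ha⟩ := (h.1 (uu x)).1 (uu_mem x)
  unfold phiF; rw [ha]; rfl

theorem tauF_spec {α : MulAut (SL2 F)} (h : α ∈ GamF F) (y : Fˣ) :
    (α (dd y)).1 0 1 = 0 ∧ (α (dd y)).1 1 0 = 0 ∧ (α (dd y)).1 0 0 = tauF α y ∧ tauF α y * (α (dd y)).1 1 1 = 1 := by
  have h1 := gam_bor h _ (dd_bor y)
  have h2 := gam_bor' h (dd y) ((mem_w0_bor _).2 rfl)
  exact ⟨(mem_w0_bor _).1 h2, h1, rfl, bor_ne h1⟩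

theorem phiF_add {α : MulAut (SL2 F)} (h : α ∈ GamF F) (x y : F) : phiF α (x + y) = phiF α x + phiF α y := by
  apply uu_inj
  rw [uu_add, ← phiF_spec h, ← phiF_spec h, ← phiF_spec h, uu_add, map_mul]

theorem phiF_one {α : MulAut (SL2 F)} (h : α ∈ GamF F) : phiF α 1 = 1 := by
  unfold phiF; rw [h.2.2]; rfl

theorem phiF_sq {α : MulAut (SL2 F)} (h : α ∈ GamF F) (y : Fˣ) (x : F) :
    phiF α ((y : F) ^ 2 * x) = tauF α y ^ 2 * phiF α x := by
  apply uu_inj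
  have h1 := mem_bor_conj_uu (dd_bor y) x
  rw [dd00] at h1
  rw [← phiF_spec h, ← h1, map_mul, map_mul, map_inv, phiF_spec h,
    mem_bor_conj_uu (gam_bor h _ (dd_bor y))]
  rfl

theorem phiF_mul {α : MulAut (SL2 F)} (h : α ∈ GamF F) (x y : F) : phiF α (x * y) = phiF α x * phiF α y := by
  obtain ⟨b, rfl⟩ := exists_sq2 x
  have h0 : phiF α 0 = 0 := by
    have := phiF_add h 0 0
    rw [add_zero] at this
    exact left_eq_add.1 this
  by_cases hb : b = 0
  · subst hb; simp [h0]
  · have h1 := phiF_sq h (Units.mk0 b hb) y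
    have h2 := phiF_sq h (Units.mk0 b hb) 1
    rw [phiF_one h, mul_one, mul_one] at h2
    simp only [Units.val_mk0] at h1 h2
    rw [h1, h2]

theorem phiF_comp {α β : MulAut (SL2 F)} (h : α ∈ GamF F) (h' : β ∈ GamF F) (x : F) :
    phiF (α * β) x = phiF α (phiF β x) := by
  apply uu_inj
  rw [← phiF_spec ((GamF F).mul_mem h h'), ← phiF_spec h, ← phiF_spec h']; rfl

/-- trivial field map implies trivial automorphism -/
theorem phiF_ker {α : MulAut (SL2 F)} (h : α ∈ GamF F) (hφ : ∀ x, phiF α x = x) : α = 1 := by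
  let E : Subgroup (SL2 F) := 
    { carrier := {g | α g = g}
      one_mem' := map_one α
      mul_mem' := by intro a b (ha : α a = a) (hb : α b = b); show α (a * b) = _; rw [map_mul, ha, hb]
      inv_mem' := by intro a (ha : α a = a); show α a⁻¹ = _; rw [map_inv, ha] }
  have hU : ∀ a, α (uu a) = uu a := fun a => by rw [phiF_spec h, hφ]
  have hD : ∀ y, α (dd y) = dd y := by
    intro y
    obtain ⟨h1, h2, h3, h4⟩ := tauF_spec h y
    have h5 : tauF α y = y := by
      have := phiF_sq h y 1
      rw [hφ, hφ, mul_one, mul_one] at this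
      exact (sq_inj2 this).symm
    refine sl_ext (h3.trans h5) h1 h2 ?_
    rw [h5] at h4
    rw [dd11]
    have := y.ne_zero
    apply mul_left_cancel₀ this
    rw [h4]; simp
  have hB : bor F ≤ E := by
    intro g hg
    show α g = g
    have : g = uu (g.1 0 1 * g.1 0 0) * dd (del F ⟨g, hg⟩) := by
      have hb := bor_ne hg
      have e : ((del F ⟨g, hg⟩)⁻¹ : Fˣ).1 = g.1 1 1 := rfl
      apply sl_ext <;> rw [sl_mul] <;> simp [e, del_val]
      · rw [mul_assoc, hb, mul_one]
      · exact hg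
    rw [this, map_mul, hU, hD]
  have hl : α (ll 1) = ll 1 := by
    obtain ⟨x, hx⟩ := (mem_w0_uni _).1 ((h.2.1 (ll 1)).1 ((mem_w0_uni _).2 ⟨1, rfl⟩))
    have h3 : ∀ x : F, ((uu 1 * ll x) ^ 3).1 0 1 = x ^ 2 + 4 * x + 3 := by
      intro x
      rw [pow_three]; simp only [sl_mul]; simp; ring
    have h4 : (uu 1 * ll 1 : SL2 F) ^ 3 = 1 := by
      have h2 := two0 (F := F)
      apply sl_ext <;> rw [pow_three] <;> simp only [sl_mul] <;> simp
      · linear_combination 6 * h2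
      · linear_combination 4 * h2
      · linear_combination 4 * h2
      · linear_combination 2 * h2
    have h5 := congrArg α h4
    rw [map_pow, map_mul, hU, hx, map_one] at h5
    have h6 := h3 x
    rw [h5] at h6
    have h8 : (0 : F) = x ^ 2 + 4 * x + 3 := h6
    have h9 : (x + 1) ^ 2 = 0 := by linear_combination -h8 - (x + 1) * two0 (F := F)
    have h10 := pow_eq_zero_iff (two_ne_zero) |>.1 h9
    have h11 : x = 1 := by linear_combination h10 - two0 (F := F)
    rw [hx, h11]
  have := bruhat_top E hB (ll 1) hl (by simp)
  ext1 g
  have hg : g ∈ E := by rw [this]; trivial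
  exact hg

end AutSL
end PartC1

section PartC2
open scoped Classical
set_option linter.unusedSectionVars false
set_option linter.unusedSimpArgs false
set_option linter.unusedVariables false

section Setup
open scoped Pointwise
variable {F : Type} [Field F] [Fintype F] [CharP F 2]
variable {G : Type} [Group G] {N M : Subgroup G} [hNn : N.Normal] [hMn : M.Normal]

/-- projection data -/
structure Stp (F : Type) [Field F] {G : Type} [Group G] (N M : Subgroup G) [hMn : M.Normal] where
  pr : ↥M →* SL2 F
  surj : Function.Surjective pr
  ker : ∀ m : M, pr m = 1 ↔ (m : G) ∈ N
  cent : ∀ g : G, (∀ m : M, pr (MulAut.conjNormal g m) = pr m) → g ∈ N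

namespace Stp
variable (S : Stp F N M)

theorem conj_eq (g : G) {m m' : M} (h : S.pr m = S.pr m') :
    S.pr (MulAut.conjNormal g m) = S.pr (MulAut.conjNormal g m') := by
  have h1 : S.pr (m⁻¹ * m') = 1 := by rw [map_mul, map_inv, h, inv_mul_cancel]
  have h2 := (S.ker _).1 h1
  have h3 : ((MulAut.conjNormal g (m⁻¹ * m') : M) : G) ∈ N := by
    rw [MulAut.conjNormal_apply]; exact hNn.conj_mem _ h2 g
  have h4 := (S.ker _).2 h3
  rw [map_mul, map_mul, map_inv, map_inv, inv_mul_eq_one] at h4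
  exact h4

noncomputable def cf (g : G) (x : SL2 F) : SL2 F := S.pr (MulAut.conjNormal g (Function.surjInv S.surj x))

theorem cf_pr (g : G) (m : M) : S.cf g (S.pr m) = S.pr (MulAut.conjNormal g m) := by
  apply S.conj_eq
  exact Function.surjInv_eq S.surj _

theorem cf_mul (g h : G) (x : SL2 F) : S.cf (g * h) x = S.cf g (S.cf h x) := by
  obtain ⟨m, rfl⟩ := S.surj x
  rw [cf_pr, cf_pr, cf_pr, map_mul]; rfl

theorem cf_one (x : SL2 F) : S.cf 1 x = x := by
  obtain ⟨m, rfl⟩ := S.surj x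
  rw [cf_pr, map_one]; rfl

noncomputable def c : G →* MulAut (SL2 F) where
  toFun g := 
    { toFun := S.cf g
      invFun := S.cf g⁻¹
      left_inv := fun x => by rw [← cf_mul, inv_mul_cancel, cf_one]
      right_inv := fun x => by rw [← cf_mul, mul_inv_cancel, cf_one]
      map_mul' := fun x y => by
        obtain ⟨m, rfl⟩ := S.surj x
        obtain ⟨m', rfl⟩ := S.surj y
        rw [← map_mul, cf_pr, cf_pr, cf_pr, map_mul, map_mul] }
  map_one' := by ext1 x; exact S.cf_one x
  map_mul' g h := by ext1 x; exact S.cf_mul g h x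

theorem c_pr (g : G) (m : M) : S.c g (S.pr m) = S.pr (MulAut.conjNormal g m) := S.cf_pr g m

theorem c_mem (m : M) : S.c (m : G) = MulAut.conj (S.pr m) := by
  ext1 x
  obtain ⟨k, rfl⟩ := S.surj x
  rw [c_pr, MulAut.conj_apply, ← map_mul, ← map_inv, ← map_mul]
  congr 1

theorem c_ker {g : G} (h : S.c g = 1) : g ∈ N := by
  apply S.cent
  intro m
  rw [← c_pr, h]; rfl

theorem c_N {g : G} (hNM : N ≤ M) (h : g ∈ N) : S.c g = 1 := by
  have := S.c_mem ⟨g, hNM h⟩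
  rw [this, (S.ker _).2 h, map_one]

theorem degG (S : Stp F N M) [Finite G] (f : ℕ) (hf : 1 ≤ f) (hF : Nat.card F = 2 ^ f) : Nat.card F ∈ charDegrees G := by
  refine degree_q f hf hF S.c fun l => ?_
  obtain ⟨m, rfl⟩ := S.surj l
  exact ⟨m, S.c_mem m⟩

theorem degGN (S : Stp F N M) [Finite G] (hNM : N ≤ M) (f : ℕ) (hf : 1 ≤ f) (hF : Nat.card F = 2 ^ f) :
    Nat.card F ∈ charDegrees (G ⧸ N) := by
  refine degree_q f hf hF (QuotientGroup.lift N S.c fun g hg => S.c_N hNM hg) fun l => ?_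
  obtain ⟨m, rfl⟩ := S.surj l
  exact ⟨QuotientGroup.mk (m : G), S.c_mem m⟩

/-- conjugated projection -/
def conj (x : SL2 F) : Stp F N M where
  pr := (MulAut.conj x).toMonoidHom.comp S.pr
  surj := (MulAut.conj x).surjective.comp S.surj
  ker m := by
    rw [← S.ker]
    show MulAut.conj x (S.pr m) = 1 ↔ _
    exact map_eq_one_iff _ (MulAut.conj x).injective
  cent g h := S.cent g fun m => (MulAut.conj x).injective (h m)

theorem conj_pr (x : SL2 F) (m : M) : (S.conj x).pr m = x * S.pr m * x⁻¹ := rfl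

/-- every coset of M meets the standard subgroup -/
theorem exists_std (S : Stp F N M) (f : ℕ) (hf : 1 ≤ f) (hF : Nat.card F = 2 ^ f) (g : G) :
    ∃ m ∈ M, S.c (m * g) ∈ GamF F := by
  have : Fact (Nat.Prime 2) := ⟨Nat.prime_two⟩
  let U := sylU (F := F) f hf hF
  have hne : U ≠ (w0 : SL2 F) • U := by
    intro h
    have := (Sylow.smul_eq_iff_mem_normalizer (P := U)).1 h.symm
    have h2 : (w0 : SL2 F) ∈ Subgroup.normalizer (uni F : Set (SL2 F)) := this
    rw [norm_uni, mem_bor] at h2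
    simp at h2
  have hne2 : S.c g • U ≠ S.c g • ((w0 : SL2 F) • U) := fun h => hne (smul_left_cancel _ h)
  obtain ⟨l, h1, h2⟩ := syl_pos f hf hF _ _ hne2
  have e1 : (MulAut.conj l * S.c g) • U = U := by rw [mul_smul]; exact h1
  have e2 : (MulAut.conj l * S.c g) • ((w0 : SL2 F) • U) = (w0 : SL2 F) • U := by rw [mul_smul]; exact h2
  have hU1 : ∀ (β : MulAut (SL2 F)), β • U = U → ∀ g, g ∈ uni F ↔ β g ∈ uni F := by
    intro β hβ g
    have hh : ∀ x : SL2 F, x ∈ β • U ↔ β⁻¹ x ∈ uni F := by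
      intro x
      show x ∈ (β • U : Subgroup (SL2 F)) ↔ _
      rw [Subgroup.mem_pointwise_smul_iff_inv_smul_mem]
      rfl
    have := hh (β g)
    rw [hβ, MulAut.inv_apply_self] at this
    exact this.symm
  have hwU : ∀ x : SL2 F, x ∈ (w0 : SL2 F) • U ↔ x ∈ cjS w0 (uni F) := by
    intro x
    show x ∈ ((MulAut.conj (w0 : SL2 F)) • U : Subgroup (SL2 F)) ↔ _
    rw [Subgroup.mem_pointwise_smul_iff_inv_smul_mem, mem_cjS]
    show (MulAut.conj (w0 : SL2 F))⁻¹ x ∈ uni F ↔ _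
    rw [MulAut.conj_inv_apply]
  have hU2 : ∀ (β : MulAut (SL2 F)), β • ((w0 : SL2 F) • U) = (w0 : SL2 F) • U →
      ∀ g, g ∈ cjS w0 (uni F) ↔ β g ∈ cjS w0 (uni F) := by
    intro β hβ g
    have hh : ∀ x : SL2 F, x ∈ β • ((w0 : SL2 F) • U) ↔ β⁻¹ x ∈ cjS w0 (uni F) := by
      intro x
      rw [← hwU]
      show x ∈ (β • ((w0 : SL2 F) • U : Sylow 2 (SL2 F)) : Subgroup (SL2 F)) ↔ _
      rw [Subgroup.mem_pointwise_smul_iff_inv_smul_mem]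
      rfl
    have := hh (β g)
    rw [hβ, MulAut.inv_apply_self, hwU] at this
    exact this.symm
  set β := MulAut.conj l * S.c g with hβ
  obtain ⟨y, hy⟩ := (hU1 β e1 (uu 1)).1 (uu_mem 1)
  have hy0 : y ≠ 0 := by
    rintro rfl
    rw [uu_zero, ← map_one β] at hy
    have := β.injective hy
    rw [← uu_zero] at this
    exact one_ne_zero (uu_inj this)
  obtain ⟨z, hz⟩ := exists_sq2 y⁻¹
  have hz0 : z ≠ 0 := by
    rintro rfl
    simp at hz
    exact hy0 hz.symm
  let d : SL2 F := dd (Units.mk0 z hz0)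
  obtain ⟨m, hm⟩ := S.surj (d * l)
  refine ⟨m, m.2, ?_⟩
  have hc : S.c (m * g) = MulAut.conj d * β := by
    rw [map_mul, c_mem, hm, map_mul, hβ, mul_assoc]
  rw [hc]
  refine ⟨?_, ?_, ?_⟩
  · intro g
    rw [hU1 β e1 g]
    have := (Subgroup.mem_normalizer_iff (H := uni F)).1 (by rw [norm_uni]; exact dd_bor (Units.mk0 z hz0)) (β g)
    exact this
  · intro g
    rw [hU2 β e2 g]
    have := (Subgroup.mem_normalizer_iff (H := cjS w0 (uni F))).1 (by rw [norm_uni']; exact (mem_w0_bor (dd (Units.mk0 z hz0))).2 rfl) (β g)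
    exact this
  · show d * β (uu 1) * d⁻¹ = uu 1
    rw [hy, mem_bor_conj_uu (dd_bor _)]
    show uu (z ^ 2 * y) = uu 1
    rw [hz, inv_mul_cancel₀ hy0]

noncomputable def galHom [Algebra (ZMod 2) F] : (GamF F) →* (F ≃ₐ[ZMod 2] F) where
  toFun α := AlgEquiv.ofRingEquiv (f :=
    { toFun := phiF α.1
      invFun := phiF (α⁻¹).1
      left_inv := fun x => by
        rw [← phiF_comp (α⁻¹).2 α.2]
        have : (α⁻¹).1 * α.1 = 1 := inv_mul_cancel _
        rw [this]; rfl
      right_inv := fun x => by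
        rw [← phiF_comp α.2 (α⁻¹).2]
        have : α.1 * (α⁻¹).1 = 1 := mul_inv_cancel _
        rw [this]; rfl
      map_mul' := phiF_mul α.2
      map_add' := phiF_add α.2 }) (by
      intro r
      let ψ : F →+* F :=
      { toFun := phiF α.1
        map_one' := phiF_one α.2
        map_mul' := phiF_mul α.2
        map_add' := phiF_add α.2
        map_zero' := by
          have := phiF_add α.2 0 0
          rw [add_zero] at this
          exact left_eq_add.1 this }
      exact congrArg (fun h : ZMod 2 →+* F => h r)
        (Subsingleton.elim (ψ.comp (algebraMap (ZMod 2) F)) (algebraMap (ZMod 2) F)))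
  map_one' := by ext x; rfl
  map_mul' a b := by ext x; exact phiF_comp a.2 b.2 x

theorem quot_abel (S : Stp F N M) [Finite G] (hNM : N ≤ M) (f : ℕ) (hf : 1 ≤ f) (hF : Nat.card F = 2 ^ f) :
    (∀ g h : G, g * h * g⁻¹ * h⁻¹ ∈ M) ∧ Nat.card (G ⧸ M) ∣ f := by
  let _alg : Algebra (ZMod 2) F := ZMod.algebra F 2
  have hcyc : IsCyclic (F ≃ₐ[ZMod 2] F) := inferInstance
  have hcard : Nat.card (F ≃ₐ[ZMod 2] F) = f := by
    rw [IsGalois.card_aut_eq_finrank]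
    have := Module.natCard_eq_pow_finrank (K := ZMod 2) (V := F)
    rw [hF, Nat.card_zmod] at this
    exact (Nat.pow_right_injective le_rfl this).symm
  let G0 : Subgroup G := (GamF F).comap S.c
  let c0 : G0 →* GamF F := (S.c.comp G0.subtype).codRestrict (GamF F) (fun g => g.2)
  let φ : G0 →* (F ≃ₐ[ZMod 2] F) := galHom.comp c0
  have hker : ∀ g : G0, φ g = 1 → (g : G) ∈ N := by
    intro g hg
    apply S.c_ker
    refine phiF_ker g.2 fun x => ?_
    exact congrArg (fun e : F ≃ₐ[ZMod 2] F => e x) hg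
  have hcomm : ∀ a b : F ≃ₐ[ZMod 2] F, a * b = b * a := fun a b =>
    (IsCyclic.commGroup (α := F ≃ₐ[ZMod 2] F)).mul_comm a b
  have hG0 : ∀ g h : G0, (g : G) * h * (g : G)⁻¹ * (h : G)⁻¹ ∈ M := by
    intro g h
    apply hNM
    refine hker (g * h * g⁻¹ * h⁻¹) ?_
    simp only [map_mul, map_inv]
    rw [hcomm (φ g) (φ h)]; group
  have hmod : ∀ g : G, ∃ h : G0, (QuotientGroup.mk (h : G) : G ⧸ M) = QuotientGroup.mk g := by
    intro g
    obtain ⟨m, hm, h⟩ := S.exists_std f hf hF g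
    refine ⟨⟨m * g, h⟩, ?_⟩
    show (QuotientGroup.mk (m * g) : G ⧸ M) = _
    rw [QuotientGroup.mk_mul, (QuotientGroup.eq_one_iff m).2 hm, one_mul]
  constructor
  · intro g h
    rw [← QuotientGroup.eq_one_iff]
    obtain ⟨g0, hg0⟩ := hmod g
    obtain ⟨h0, hh0⟩ := hmod h
    have := (QuotientGroup.eq_one_iff _).2 (hG0 g0 h0)
    simp only [QuotientGroup.mk_mul, QuotientGroup.mk_inv] at this ⊢
    rw [hg0, hh0] at this
    exact this
  · let ψ : G0 →* G ⧸ M := (QuotientGroup.mk' M).comp G0.subtype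
    have hψ : Function.Surjective ψ := by
      intro x
      obtain ⟨g, rfl⟩ := QuotientGroup.mk_surjective x
      exact hmod g
    have hle : φ.ker ≤ ψ.ker := by
      intro g hg
      exact (QuotientGroup.eq_one_iff _).2 (hNM (hker g hg))
    have h1 : Nat.card (G ⧸ M) = ψ.ker.index := by
      rw [Subgroup.index_ker, MonoidHom.range_eq_top.2 hψ]
      exact (Nat.card_congr Subgroup.topEquiv.toEquiv).symm
    rw [h1]
    refine (Subgroup.index_dvd_of_le hle).trans ?_
    rw [Subgroup.index_ker, ← hcard]
    exact Subgroup.card_subgroup_dvd_card _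

end Stp

/-- existence of the setup -/
theorem exists_stp (hNM : N ≤ M)
    (hiso : Nonempty ((M.map (QuotientGroup.mk' N)) ≃* PSL2 F))
    (hcent : Subgroup.centralizer ((M.map (QuotientGroup.mk' N)) : Set (G ⧸ N)) = ⊥) :
    Nonempty (Stp F N M) := by
  obtain ⟨e⟩ := hiso
  have hc : Subgroup.center (SL2 F) = ⊥ := by
    rw [eq_bot_iff]
    intro g hg
    obtain ⟨r, hr, hr'⟩ := Matrix.SpecialLinearGroup.mem_center_iff.1 hg
    have hr1 : r = 1 := by
      have : r ^ 2 = 1 ^ 2 := by rw [one_pow]; simpa using hr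
      exact sq_inj2 this
    rw [Subgroup.mem_bot]
    apply Subtype.ext
    rw [← hr', hr1]; simp
  let e2 : PSL2 F ≃* SL2 F := (QuotientGroup.quotientMulEquivOfEq hc).trans QuotientGroup.quotientBot
  let r : M →* (M.map (QuotientGroup.mk' N)) := (QuotientGroup.mk' N).subgroupMap M
  have hr : Function.Surjective r := (QuotientGroup.mk' N).subgroupMap_surjective M
  have hinj : Function.Injective (e.trans e2) := (e.trans e2).injective
  refine ⟨⟨(e.trans e2).toMonoidHom.comp r, (e.trans e2).surjective.comp hr, ?_, ?_⟩⟩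
  · intro m
    show (e.trans e2) (r m) = 1 ↔ _
    rw [map_eq_one_iff _ hinj, ← QuotientGroup.eq_one_iff]
    exact Subtype.ext_iff
  · intro g hg
    have : (QuotientGroup.mk g : G ⧸ N) ∈ Subgroup.centralizer ((M.map (QuotientGroup.mk' N)) : Set (G ⧸ N)) := by
      rw [Subgroup.mem_centralizer_iff]
      rintro _ ⟨m, hm, rfl⟩
      have h1 := hinj (hg ⟨m, hm⟩)
      have h2 : (QuotientGroup.mk (g * m * g⁻¹) : G ⧸ N) = QuotientGroup.mk m := congrArg Subtype.val h1
      show (QuotientGroup.mk m : G ⧸ N) * QuotientGroup.mk g = QuotientGroup.mk g * QuotientGroup.mk m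
      rw [QuotientGroup.mk_mul, QuotientGroup.mk_mul, QuotientGroup.mk_inv, mul_inv_eq_iff_eq_mul] at h2
      exact h2.symm
    rw [hcent, Subgroup.mem_bot, QuotientGroup.eq_one_iff] at this
    exact this

end Setup
end PartC2

section PartE1
open scoped Classical
set_option linter.unusedSectionVars false
set_option linter.unusedSimpArgs false
set_option linter.unusedVariables false

section Numerics

/-- number of prime factors with multiplicity -/
def Om (n : ℕ) : ℕ := n.primeFactorsList.length

theorem Om_eq (n : ℕ) : Om n = ArithmeticFunction.cardFactors n := (ArithmeticFunction.cardFactors_apply).symm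

theorem Om_mul {a b : ℕ} (ha : a ≠ 0) (hb : b ≠ 0) : Om (a * b) = Om a + Om b := by
  rw [Om_eq, Om_eq, Om_eq, ArithmeticFunction.cardFactors_mul ha hb]

theorem Om_le {a b : ℕ} (hb : b ≠ 0) (h : a ∣ b) : Om a ≤ Om b := by
  obtain ⟨c, rfl⟩ := h
  rw [Om_mul (by rintro rfl; simp at hb) (by rintro rfl; simp at hb)]; omega

theorem Om_pos {a : ℕ} (h : 1 < a) : 1 ≤ Om a := by
  unfold Om
  rw [Nat.one_le_iff_ne_zero, Ne, List.length_eq_zero_iff, Nat.primeFactorsList_eq_nil]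
  omega

theorem Om_prime {a : ℕ} (h : 0 < a) (h1 : Om a = 1) : a.Prime := by
  rw [Om_eq] at h1
  exact ArithmeticFunction.cardFactors_eq_one_iff_prime.1 h1

theorem Om_of_prime {a : ℕ} (h : a.Prime) : Om a = 1 := by
  rw [Om_eq]
  exact ArithmeticFunction.cardFactors_eq_one_iff_prime.2 h

theorem Om_one : Om 1 = 0 := by simp [Om]

theorem tp {G : Type} [Group G] (hG : TwoPrimeHypothesis G) {a b d : ℕ} (ha : a ∈ charDegrees G)
    (hb : b ∈ charDegrees G) (hne : a ≠ b) (h0 : a ≠ 0) (h1 : d ∣ a) (h2 : d ∣ b) : Om d ≤ 2 :=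
  (Om_le (by simp [h0]) (Nat.dvd_gcd h1 h2)).trans (hG a ha b hb hne)

theorem pow_split {f k n h : ℕ} (hd : 2 ^ f ∣ n * h) (hn : ¬ 2 ^ (k + 1) ∣ n) (h0 : n ≠ 0) :
    2 ^ f ∣ 2 ^ k * h := by
  obtain ⟨a, m, hm, rfl⟩ := Nat.exists_eq_two_pow_mul_odd h0
  have ha : a ≤ k := by
    by_contra hc
    exact hn (Dvd.dvd.mul_right (pow_dvd_pow 2 (by omega)) _)
  have h1 : 2 ^ f ∣ m * (2 ^ a * h) := by convert hd using 1; ring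
  have h2 : Nat.Coprime (2 ^ f) m := Nat.Coprime.pow_left _ (Nat.coprime_two_left.2 hm)
  exact (h2.dvd_of_dvd_mul_left h1).trans (mul_dvd_mul_right (pow_dvd_pow 2 ha) h)

theorem Om_sq {f : ℕ} (hf : 4 ≤ f) : 3 ≤ Om ((2 ^ f + 1) * (2 ^ f - 1)) := by
  have h16 : 16 ≤ 2 ^ f := (Nat.pow_le_pow_right (by norm_num) hf : 2 ^ 4 ≤ 2 ^ f)
  rw [Om_mul (by omega) (by omega)]
  have h1 : 1 ≤ Om (2 ^ f + 1) := Om_pos (by omega)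
  have h2 : 1 ≤ Om (2 ^ f - 1) := Om_pos (by omega)
  by_contra hc
  have p1 : (2 ^ f + 1).Prime := Om_prime (by omega) (by omega)
  have p2 : (2 ^ f - 1).Prime := Om_prime (by omega) (by omega)
  -- one of three consecutive numbers is divisible by 3
  have h3 : ¬ 3 ∣ 2 ^ f := by
    intro h
    have := (Nat.prime_three.dvd_of_dvd_pow h)
    omega
  have : 3 ∣ 2 ^ f + 1 ∨ 3 ∣ 2 ^ f - 1 := by omega
  rcases this with h | h
  · have := (Nat.prime_dvd_prime_iff_eq Nat.prime_three p1).1 h; omega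
  · have := (Nat.prime_dvd_prime_iff_eq Nat.prime_three p2).1 h; omega

theorem Om_four {n : ℕ} (hn : 1 < n) : 3 ≤ Om (4 * n) := by
  rw [Om_mul (by norm_num) (by omega)]
  have h1 := Om_pos hn
  have h2 : Om 4 = 2 := by
    rw [show 4 = 2 * 2 by norm_num, Om_mul (by norm_num) (by norm_num), Om_of_prime Nat.prime_two]
  omega

theorem Om_eight : Om 8 = 3 := by
  rw [show 8 = 2 * (2 * 2) by norm_num, Om_mul (by norm_num) (by norm_num), Om_mul (by norm_num) (by norm_num), Om_of_prime Nat.prime_two]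

end Numerics

section Ker
variable {G : Type} [Group G] [Fintype G]

theorem card_ker {K H : Subgroup G} {A : Type} [Group A] (p : K →* A) (hHK : H ≤ K)
    (hker : ∀ k : K, p k = 1 ↔ (k : G) ∈ H) : Nat.card K = Nat.card H * Nat.card p.range := by
  have e : p.ker = H.subgroupOf K := by
    ext k
    rw [MonoidHom.mem_ker, hker, Subgroup.mem_subgroupOf]
  rw [← Subgroup.index_ker, ← Subgroup.card_mul_index p.ker]
  congr 1
  rw [e]
  exact Nat.card_congr (Subgroup.subgroupOfEquivOfLe hHK).toEquiv

theorem card_ker' {K H : Subgroup G} {A : Type} [Group A] (p : K →* A) (hp : Function.Surjective p) (hHK : H ≤ K)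
    (hker : ∀ k : K, p k = 1 ↔ (k : G) ∈ H) : Nat.card K = Nat.card H * Nat.card A := by
  rw [card_ker p hHK hker, MonoidHom.range_eq_top.2 hp]
  congr 1
  exact Nat.card_congr (Subgroup.topEquiv).toEquiv

end Ker

namespace Stp
section Im
variable {F : Type} [Field F] [Fintype F] [CharP F 2]
variable {G : Type} [Group G] [Fintype G] {N M : Subgroup G} [hNn : N.Normal] [hMn : M.Normal]
variable (S : Stp F N M)

def im (T : Subgroup G) : Subgroup (SL2 F) := (T.subgroupOf M).map S.pr

theorem mem_im {T : Subgroup G} {g : SL2 F} : g ∈ S.im T ↔ ∃ m : M, (m : G) ∈ T ∧ S.pr m = g := by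
  unfold im
  rw [Subgroup.mem_map]
  constructor
  · rintro ⟨m, h, e⟩; exact ⟨m, h, e⟩
  · rintro ⟨m, h, e⟩; exact ⟨m, h, e⟩

theorem pr_eq {m m' : M} (h : S.pr m = S.pr m') : (m : G)⁻¹ * m' ∈ N := by
  have := (S.ker (m⁻¹ * m')).1 (by rw [map_mul, map_inv, h, inv_mul_cancel])
  simpa using this

theorem pr_mem {T : Subgroup G} (hNT : N ≤ T) (m : M) : S.pr m ∈ S.im T ↔ (m : G) ∈ T := by
  rw [mem_im]
  constructor
  · rintro ⟨m', h, e⟩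
    have := T.mul_mem h (hNT (S.pr_eq e))
    simpa using this
  · intro h; exact ⟨m, h, rfl⟩

theorem im_conj (x : SL2 F) (T : Subgroup G) : (S.conj x).im T = cjS x (S.im T) := by
  ext g
  rw [mem_im, mem_cjS, mem_im]
  constructor
  · rintro ⟨m, h, rfl⟩
    refine ⟨m, h, ?_⟩
    rw [conj_pr]; group
  · rintro ⟨m, h, e⟩
    refine ⟨m, h, ?_⟩
    rw [conj_pr, e]; group

/-- restriction of the projection -/
def prT {T : Subgroup G} (hTM : T ≤ M) : ↥T →* SL2 F := S.pr.comp (Subgroup.inclusion hTM)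

theorem prT_ker {T : Subgroup G} (hTM : T ≤ M) (t : T) : S.prT hTM t = 1 ↔ (t : G) ∈ N := by
  unfold prT
  rw [MonoidHom.comp_apply, S.ker]; rfl

theorem prT_range {T : Subgroup G} (hTM : T ≤ M) : (S.prT hTM).range = S.im T := by
  ext g
  rw [MonoidHom.mem_range, mem_im]
  constructor
  · rintro ⟨t, rfl⟩; exact ⟨⟨t, hTM t.2⟩, t.2, rfl⟩
  · rintro ⟨m, h, rfl⟩; exact ⟨⟨m, h⟩, rfl⟩

theorem card_im (S : Stp F N M) {T : Subgroup G} (hNT : N ≤ T) (hTM : T ≤ M) : Nat.card T = Nat.card N * Nat.card (S.im T) := by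
  rw [card_ker (S.prT hTM) hNT (S.prT_ker hTM), prT_range]

theorem card_M (S : Stp F N M) (hNM : N ≤ M) : Nat.card M = Nat.card N * Nat.card (SL2 F) :=
  card_ker' S.pr S.surj hNM S.ker

theorem orb_index (S : Stp F N M) (hNM : N ≤ M) {θ : G → ℂ} (hθ : IrrOn N θ) :
    (orb M θ).card = (S.im (stabIn M θ)).index := by
  have h1 := orb_card M θ
  rw [S.card_im (le_stabIn hNM hθ.charOn) (stabIn_le M θ), S.card_M hNM] at h1
  have h2 := Subgroup.card_mul_index (S.im (stabIn M θ))
  have h3 : 0 < Nat.card N := Nat.card_pos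
  have h4 : 0 < Nat.card (S.im (stabIn M θ)) := Nat.card_pos
  have h5 : Nat.card N * ((orb M θ).card * Nat.card (S.im (stabIn M θ))) =
     Nat.card N * ((S.im (stabIn M θ)).index * Nat.card (S.im (stabIn M θ))) := by
    rw [mul_comm (S.im (stabIn M θ)).index, h2, ← h1]; ring
  exact Nat.eq_of_mul_eq_mul_right h4 (Nat.eq_of_mul_eq_mul_left h3 h5)

theorem D1 (S : Stp F N M) (hNM : N ≤ M) {θ χ : G → ℂ} (hθ : IrrOn N θ) (hχ : IrrOn (⊤ : Subgroup G) χ)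
    (h : ip N χ θ ≠ 0) : ∃ Y η, IrrOn M Y ∧ ip M χ Y ≠ 0 ∧ ip N Y θ ≠ 0 ∧ IrrOn (stabIn M θ) η ∧
      ip (stabIn M θ) Y η ≠ 0 ∧ ip N η θ ≠ 0 ∧ dg Y = (S.im (stabIn M θ)).index * dg η ∧ dg Y ∣ dg χ ∧
      dg θ ∣ dg η := by
  obtain ⟨Y, hY, h1, h2⟩ := exists_mid hχ.charOn hNM le_top hθ h
  obtain ⟨η, hη, h3, h4⟩ := exists_mid hY.charOn (le_stabIn hNM hθ.charOn) (stabIn_le M θ) hθ h2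
  refine ⟨Y, η, hY, h1, h2, hη, h3, h4, ?_, ?_, ?_⟩
  · rw [clifford_corr hNM (nrm_of_normal M N) hY hθ hη h3 h4, S.orb_index hNM hθ]
  · exact clifford_dvd le_top (nrm_of_normal ⊤ M) hχ hY h1
  · exact clifford_dvd (le_stabIn hNM hθ.charOn) (nrm_of_normal _ N) hη hθ h4

theorem im_ne_top (S : Stp F N M) (hNM : N ≤ M) {θ : G → ℂ} (hθ : IrrOn N θ) (hn : ∃ m ∈ M, cj m θ ≠ θ) :
    S.im (stabIn M θ) ≠ ⊤ := by
  obtain ⟨m, hm, h⟩ := hn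
  intro ht
  have h1 : S.pr ⟨m, hm⟩ ∈ S.im (stabIn M θ) := by rw [ht]; trivial
  rw [S.pr_mem (le_stabIn hNM hθ.charOn)] at h1
  exact h (funext (mem_stabIn.1 h1).2)

/-- no degree other than `q` is divisible by `8` when `q` is a degree -/
theorem not8 (S : Stp F N M) {f : ℕ} (hf : 4 ≤ f) (hF : Nat.card F = 2 ^ f) (hG : TwoPrimeHypothesis G)
    {a : ℕ} (ha : a ∈ charDegrees G) (hq : a ≠ Nat.card F) : ¬ 8 ∣ a := by
  intro h8
  have h := tp hG (S.degG f (by omega) hF) ha (Ne.symm hq) (by rw [hF]; positivity)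
    (show 8 ∣ Nat.card F by rw [hF]; exact pow_dvd_pow 2 (show 3 ≤ f by omega)) h8
  rw [Om_eight] at h; omega

theorem q_dvd (S : Stp F N M) {f k a : ℕ} (hF : Nat.card F = 2 ^ f) (H : Subgroup (SL2 F))
   (h1 : H.index ∣ a) (h2 : ¬ 2 ^ (k + 1) ∣ a) : Nat.card F ∣ 2 ^ k * Nat.card H := by
  rw [hF]
  apply pow_split (n := H.index)
  · rw [mul_comm, Subgroup.card_mul_index, card_sl, hF]; exact dvd_mul_right _ _
  · exact fun h => h2 (h.trans h1)
  · exact Subgroup.index_ne_zero_of_finite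

theorem D2 (S : Stp F N M) {f : ℕ} (hf : 4 ≤ f) (hF : Nat.card F = 2 ^ f) (hG : TwoPrimeHypothesis G)
    (hNM : N ≤ M) {θ χ : G → ℂ} (hθ : IrrOn N θ) (hn : ∃ m ∈ M, cj m θ ≠ θ) (hχ : IrrOn (⊤ : Subgroup G) χ)
    (h : ip N χ θ ≠ 0) (hq : dg χ ≠ Nat.card F) : ¬ 8 ∣ dg χ ∧ Nat.card F + 1 ∣ dg χ ∧
      (S.im (stabIn M θ)).index ∣ dg χ ∧ Nat.card F ∣ 4 * Nat.card (S.im (stabIn M θ)) := by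
  obtain ⟨Y, η, hY, h1, h2, hη, h3, h4, h5, h6, h7⟩ := S.D1 hNM hθ hχ h
  have h8 := S.not8 hf hF hG (irr_top_mem hχ) hq
  have h9 : (S.im (stabIn M θ)).index ∣ dg χ := (Dvd.intro _ h5.symm).trans h6
  have h10 := S.q_dvd hF (k := 2) (S.im (stabIn M θ)) h9 (by norm_num; exact h8)
  exact ⟨h8, (index_dvd f hf hF _ (S.im_ne_top hNM hθ hn) h10).trans h9, h9, h10⟩

/-- standard position for the stabiliser -/
structure Pos (S : Stp F N M) (T : Subgroup G) (j z w : ℕ) : Prop where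
  le : S.im T ≤ bor F
  hj : j = 0 ∨ j = 1
  hA : Nat.card F = 2 ^ j * Nat.card (AA (S.im T))
  hz : z = Nat.card (ZZ (S.im T))
  hw : w * z = Nat.card F - 1
  idx : (S.im T).index = 2 ^ j * w * (Nat.card F + 1)
  zj : z = 1 ∨ j = 0

theorem pos_of_le (S : Stp F N M) {f : ℕ} (hf : 4 ≤ f) (hF : Nat.card F = 2 ^ f) (T : Subgroup G)
   (hle : S.im T ≤ bor F) (hd : Nat.card F ∣ 2 * Nat.card (AA (S.im T))) :
   ∃ j z w, Pos S T j z w := by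
  have hA1 : Nat.card (AA (S.im T)) ∣ Nat.card F := by
    exact (AddSubgroup.card_addSubgroup_dvd_card _)
  have hz := ZZ_dvd (S.im T)
  obtain ⟨w, hw⟩ := hz
  have hAp : 0 < Nat.card (AA (S.im T)) := Nat.card_pos
  have hZp : 0 < Nat.card (ZZ (S.im T)) := Nat.card_pos
  have hj : ∃ j, (j = 0 ∨ j = 1) ∧ Nat.card F = 2 ^ j * Nat.card (AA (S.im T)) := by
    obtain ⟨c, hc⟩ := hA1
    rw [hc, mul_comm _ c] at hd
    have := Nat.dvd_of_mul_dvd_mul_right hAp hd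
    have := (Nat.dvd_prime Nat.prime_two).1 this
    rcases this with rfl | rfl
    · exact ⟨0, Or.inl rfl, by rw [hc]; ring⟩
    · exact ⟨1, Or.inr rfl, by rw [hc]; ring⟩
  obtain ⟨j, hj, hjA⟩ := hj
  refine ⟨j, _, w, hle, hj, hjA, rfl, by rw [hw, mul_comm], ?_, ?_⟩
  · have h1 := Subgroup.card_mul_index (S.im T)
    have h2 := card_hb (S.im T)
    rw [inf_eq_left.2 hle] at h2
    rw [card_sl, h2] at h1
    have h3 : Nat.card F ^ 2 - 1 = (Nat.card F + 1) * (Nat.card F - 1) := by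
      have := Nat.sq_sub_sq (Nat.card F) 1
      simpa using this
    rw [h3, hw, ] at h1
    apply Nat.eq_of_mul_eq_mul_left (Nat.mul_pos hAp hZp)
    rw [h1]
    nth_rw 1 [hjA]; ring
  · rcases hj with rfl | rfl
    · exact Or.inr rfl
    · left; apply half_z; rw [hjA]; ring

theorem D3 (S : Stp F N M) {f : ℕ} (hf : 4 ≤ f) (hF : Nat.card F = 2 ^ f) (hG : TwoPrimeHypothesis G)
    (hNM : N ≤ M) {θ χ : G → ℂ} (hθ : IrrOn N θ) (hn : ∃ m ∈ M, cj m θ ≠ θ) (hχ : IrrOn (⊤ : Subgroup G) χ)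
    (h : ip N χ θ ≠ 0) (hq : dg χ ≠ Nat.card F) (h4 : ¬ 4 ∣ dg χ) :
    ∃ S' : Stp F N M, ∃ j z w, Pos S' (stabIn M θ) j z w := by
  obtain ⟨h8, h1, h2, h3⟩ := S.D2 hf hF hG hNM hθ hn hχ h hq
  have h5 := S.q_dvd hF (k := 1) (S.im (stabIn M θ)) h2 (by norm_num; exact h4)
  obtain ⟨x, n, hodd, hc, hor⟩ := claimC f hf hF _ (S.im_ne_top hNM hθ hn) h3
  rw [← S.im_conj] at hc hor
  have h16 : 16 ≤ 2 ^ f := (Nat.pow_le_pow_right (by norm_num) hf : 2 ^ 4 ≤ 2 ^ f)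
  rcases hor with hle | ⟨h16', h60, -⟩
  · refine ⟨S.conj x, (S.conj x).pos_of_le hf hF _ hle ?_⟩
    rw [hc] at h5
    have h6 : Nat.Coprime (Nat.card F) n := by
      rw [hF]; exact Nat.Coprime.pow_left _ (Nat.coprime_two_left.2 hodd)
    apply h6.dvd_of_dvd_mul_right
    convert h5 using 1; ring
  · rw [h16', h60] at h5
    norm_num at h5

end Im
end Stp
end PartE1

section PartE2
open scoped Classical
set_option linter.unusedSectionVars false
set_option linter.unusedSimpArgs false
set_option linter.unusedVariables false

section Reg
variable {G : Type} [Group G] [Fintype G]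
variable {N P T : Subgroup G} {A Z : Type} [CommGroup A] [Finite A] [CommGroup Z] [Finite Z]

theorem cj_tw (p : P →* A) (hPn : Nrm T P) {t : G} (ht : t ∈ T) (τ : A →* A)
    (hτ : ∀ x : P, ∀ hx : t * (x : G) * t⁻¹ ∈ P, p ⟨t * x * t⁻¹, hx⟩ = τ (p x)) (l : A →* ℂˣ) (φ : G → ℂ) :
    cj t (tw p l φ) = tw p (l.comp τ) (cj t φ) := by
  ext x
  simp only [cj, tw]
  congr 1
  by_cases hx : x ∈ P
  · have hx' := (hPn t ht x).1 hx
    rw [lam, ext0_mem hx', lam, ext0_mem hx, hτ ⟨x, hx⟩ hx']; rfl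
  · have hx' : t * x * t⁻¹ ∉ P := fun h => hx ((hPn t ht x).2 h)
    rw [lam, ext0_not hx', lam, ext0_not hx]

theorem fix_unique (p : P →* A) (hPn : Nrm T P) {t : G} (ht : t ∈ T) (τ : A →* A)
    (hτ : ∀ x : P, ∀ hx : t * (x : G) * t⁻¹ ∈ P, p ⟨t * x * t⁻¹, hx⟩ = τ (p x))
    (hs : ∀ a, ∃ b, τ b * b⁻¹ = a) {φ : G → ℂ} (hφ : CharOn P φ) (h1 : cj t φ = φ) (l : A →* ℂˣ)
    (h2 : cj t (tw p l φ) = tw p l φ) : tw p l φ = φ := by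
  have hst : ∀ γ, γ ∈ twStab p hφ → γ.comp τ ∈ twStab p hφ := by
    intro γ hγ
    have hγ' : tw p γ φ = φ := hγ
    have := cj_tw p hPn ht τ hτ γ φ
    rw [hγ', h1] at this
    exact this.symm
  let m : twStab p hφ → twStab p hφ := fun γ => ⟨γ.1.comp τ * γ.1⁻¹,
    (twStab p hφ).mul_mem (hst _ γ.2) ((twStab p hφ).inv_mem γ.2)⟩
  have key : ∀ γ δ : A →* ℂˣ, γ.comp τ * γ⁻¹ = δ.comp τ * δ⁻¹ → γ = δ := by
    intro γ δ h
    ext a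
    obtain ⟨b, rfl⟩ := hs a
    have := DFunLike.congr_fun h b
    simp only [MonoidHom.mul_apply, MonoidHom.comp_apply, MonoidHom.inv_apply] at this
    rw [map_mul, map_mul, map_inv, map_inv, this]
  have hm : Function.Injective m := by
    intro γ δ h
    exact Subtype.ext (key _ _ (congrArg Subtype.val h))
  have hfin : Finite (twStab p hφ) := by
    have := dual_finite A
    infer_instance
  have hsur := Finite.injective_iff_surjective.1 hm
  have hd : l.comp τ * l⁻¹ ∈ twStab p hφ := by
    show tw p (l.comp τ * l⁻¹) φ = φ
    have h3 := cj_tw p hPn ht τ hτ l φ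
    rw [h1, h2] at h3
    rw [show l.comp τ * l⁻¹ = l⁻¹ * l.comp τ from by ext a; simp [mul_comm], ← tw_tw, ← h3, tw_tw,
      show l⁻¹ * l = 1 from inv_mul_cancel l, tw_one p hφ]
  obtain ⟨σ, hσ⟩ := hsur ⟨_, hd⟩
  have : σ.1 = l := key _ _ (congrArg Subtype.val hσ)
  rw [← this]; exact σ.2

theorem exists_reg (p : P →* A) (hPT : P ≤ T) (hPn : Nrm T P)
    (hcomm : ∀ s ∈ T, ∀ t ∈ T, s * t * (t * s)⁻¹ ∈ P)
    (hτ : ∀ t ∈ T, ∃ τ : A →* A,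
      (∀ x : P, ∀ hx : t * (x : G) * t⁻¹ ∈ P, p ⟨t * x * t⁻¹, hx⟩ = τ (p x)) ∧
      (t ∉ P → ∀ a, ∃ b, τ b * b⁻¹ = a))
    {ψ : G → ℂ} (hψ : IrrOn P ψ) (hne : ∃ l : A →* ℂˣ, tw p l ψ ≠ ψ) :
    ∃ l : A →* ℂˣ, stabIn T (tw p l ψ) = P := by
  by_contra hno
  push Not at hno
  have hbad : ∀ l : A →* ℂˣ, ∃ t ∈ T, t ∉ P ∧ cj t (tw p l ψ) = tw p l ψ := by
    intro l
    by_contra hc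
    push Not at hc
    apply hno l
    apply le_antisymm
    · intro t ht
      by_contra hP
      exact hc t ht.1 hP (funext (mem_stabIn.1 ht).2)
    · exact le_stabIn hPT (tw_irr p l hψ).charOn
  obtain ⟨l, hl⟩ := hne
  obtain ⟨t1, ht1, hp1, h1⟩ := hbad 1
  obtain ⟨t2, ht2, hp2, h2⟩ := hbad l
  rw [tw_one p hψ.charOn] at h1
  obtain ⟨τ1, hτ1, hs1⟩ := hτ t1 ht1
  obtain ⟨τ2, hτ2, hs2⟩ := hτ t2 ht2
  -- write `ψ1 = ψ`, `ψ2 = tw l ψ`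
  have hψ2 := tw_irr p l hψ
  have e1 : ψ = tw p l⁻¹ (tw p l ψ) := by
    rw [tw_tw, show l⁻¹ * l = 1 from inv_mul_cancel l, tw_one p hψ.charOn]
  have e2 : cj t2 ψ = tw p (l⁻¹.comp τ2 * l) ψ := by
    conv_lhs => rw [e1]
    rw [cj_tw p hPn ht2 τ2 hτ2, h2, tw_tw]
  have e3 : cj t1 (cj t2 ψ) = cj t2 ψ := by
    rw [cj_cj]
    have : t2 * t1 = (t2 * t1 * (t1 * t2)⁻¹) * (t1 * t2) := by group
    rw [this, ← cj_cj]
    have hc : cj (t2 * t1 * (t1 * t2)⁻¹) ψ = ψ :=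
      funext (hψ.charOn.conj (hcomm t2 ht2 t1 ht1))
    rw [hc, ← cj_cj, h1]
  have e4 : cj t2 ψ = ψ := by
    rw [e2] at e3 ⊢
    exact fix_unique p hPn ht1 τ1 hτ1 (hs1 hp1) hψ.charOn h1 _ e3
  exact hl (fix_unique p hPn ht2 τ2 hτ2 (hs2 hp2) hψ.charOn e4 _ h2)

theorem tw_over (p : P →* A) (hNP : N ≤ P) (hker : ∀ k : P, p k = 1 ↔ (k : G) ∈ N) {θ : G → ℂ}
    (hθ : IrrOn N θ) (l : A →* ℂˣ) (ψ : G → ℂ) : ip N (tw p l ψ) θ = ip N ψ θ := by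
  unfold ip
  congr 1
  refine Finset.sum_congr rfl fun g _ => ?_
  by_cases hg : g ∈ N
  · have : lam p l g = 1 := by
      rw [lam, ext0_mem (hNP hg), (hker ⟨g, hNP hg⟩).2 hg]; simp
    rw [tw, this, one_mul]
  · have : θ g⁻¹ = 0 := hθ.charOn.off (fun h => hg (by simpa using N.inv_mem h))
    rw [this, mul_zero, mul_zero]

/-- the abstract degree lemma -/
theorem reg_deg (p : P →* A) (hp : Function.Surjective p) (hNP : N ≤ P)
    (hker : ∀ k : P, p k = 1 ↔ (k : G) ∈ N)
    (s : T →* Z) (hs : Function.Surjective s) (hPT : P ≤ T) (hker' : ∀ k : T, s k = 1 ↔ (k : G) ∈ P)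
    (hτ : ∀ t ∈ T, ∃ τ : A →* A,
      (∀ x : P, ∀ hx : t * (x : G) * t⁻¹ ∈ P, p ⟨t * x * t⁻¹, hx⟩ = τ (p x)) ∧
      (t ∉ P → ∀ a, ∃ b, τ b * b⁻¹ = a))
    {θ η : G → ℂ} (hθ : IrrOn N θ) (hinv : ∀ t ∈ T, cj t θ = θ) (hη : IrrOn T η) (h : ip N η θ ≠ 0) :
    ∃ e k : ℕ, e ^ 2 ∣ Nat.card A ∧ k ∣ Nat.card Z ∧ dg η = k * e * dg θ ∧
      (e ^ 2 < Nat.card A → ∃ η', IrrOn T η' ∧ ip N η' θ ≠ 0 ∧ dg η' = Nat.card Z * e * dg θ) := by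
  have hPn : Nrm T P := nrm_of_ker s hPT hker'
  obtain ⟨ψ, hψ, h1, h2⟩ := exists_mid hη.charOn hNP hPT hθ h
  have ho : orb P θ = {θ} := orb_eq_singleton (fun t ht => hinv t (hPT ht))
  have hdψ := clifford_deg hNP (nrm_of_ker p hNP hker) hψ hθ h2
  have htc := twStab_card' p hp hNP hker hψ hθ h2
  have hca := clifford_abel p hp hNP hker hψ hθ h2
  rw [ho, Finset.card_singleton, mul_one] at hdψ htc hca
  have hdη := clifford_deg hPT hPn hη hψ h1
  have hcz := clifford_abel s hs hPT hker' hη hψ h1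
  refine ⟨mu N ψ θ, mu P η ψ * (orb T ψ).card, hca, ?_, by rw [hdη, hdψ]; ring, ?_⟩
  · refine dvd_trans ?_ hcz
    exact mul_dvd_mul_right (dvd_pow_self _ (by norm_num)) _
  · intro hlt
    have hne : ∃ l : A →* ℂˣ, tw p l ψ ≠ ψ := by
      by_contra hc
      push Not at hc
      have : twStab p hψ.charOn = ⊤ := by
        rw [Subgroup.eq_top_iff']
        exact hc
      rw [this] at htc
      have h3 : Nat.card (⊤ : Subgroup (A →* ℂˣ)) = Nat.card A := by
        rw [Subgroup.card_top, CommGroup.card_monoidHom_of_hasEnoughRootsOfUnity A ℂ]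
      omega
    have hcomm : ∀ s ∈ T, ∀ t ∈ T, s * t * (t * s)⁻¹ ∈ P := by
      intro a ha b hb
      have := (hker' (⟨a, ha⟩ * ⟨b, hb⟩ * (⟨b, hb⟩ * ⟨a, ha⟩)⁻¹)).1 (by
        rw [map_mul, map_inv, map_mul, map_mul, mul_comm (s ⟨b, hb⟩), mul_inv_cancel])
      exact this
    obtain ⟨l, hl⟩ := exists_reg p hPT hPn hcomm hτ hψ hne
    have hψ' := tw_irr p l hψ
    obtain ⟨η', hη', h3⟩ := exists_over hPT hψ'
    have h4 : ip N (tw p l ψ) θ ≠ 0 := by rw [tw_over p hNP hker hθ]; exact h2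
    refine ⟨η', hη', over_trans hη'.charOn hNP hPT hθ hψ' h3 h4, ?_⟩
    have h5 := orb_card T (tw p l ψ)
    rw [hl, card_ker' s hs hPT hker', mul_comm] at h5
    have h6 : (orb T (tw p l ψ)).card = Nat.card Z := Nat.eq_of_mul_eq_mul_left Nat.card_pos h5
    have h7 := clifford_abel s hs hPT hker' hη' hψ' h3
    rw [h6] at h7
    have h8 : mu P η' (tw p l ψ) = 1 := by
      have hz : 0 < Nat.card Z := Nat.card_pos
      have h9 : mu P η' (tw p l ψ) ^ 2 ∣ 1 := by
        apply Nat.dvd_of_mul_dvd_mul_right hz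
        rwa [one_mul]
      have := Nat.dvd_one.1 h9
      simpa using this
    rw [clifford_deg hPT hPn hη' hψ' h3, h8, h6]
    have h9 : dg (tw p l ψ) = dg ψ := by
      unfold dg tw; rw [lam_one, one_mul]
    rw [h9, hdψ]; ring

end Reg
end PartE2

section PartE3
open scoped Classical
set_option linter.unusedSectionVars false
set_option linter.unusedSimpArgs false
set_option linter.unusedVariables false

namespace Stp
section Conc
variable {F : Type} [Field F] [Fintype F] [CharP F 2]
variable {G : Type} [Group G] [Fintype G] {N M : Subgroup G} [hNn : N.Normal] [hMn : M.Normal]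
variable (S : Stp F N M)

/-- the part of `T` above the unipotent subgroup -/
def PP (T : Subgroup G) : Subgroup G := T ⊓ ((uni F).comap S.pr).map M.subtype

theorem mem_PP {T : Subgroup G} {g : G} : g ∈ S.PP T ↔ g ∈ T ∧ ∃ hm : g ∈ M, S.pr ⟨g, hm⟩ ∈ uni F := by
  unfold PP
  rw [Subgroup.mem_inf, Subgroup.mem_map]
  constructor
  · rintro ⟨h, m, hm, rfl⟩; exact ⟨h, m.2, hm⟩
  · rintro ⟨h, hm, hu⟩; exact ⟨h, ⟨g, hm⟩, hu, rfl⟩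

theorem prPP {T : Subgroup G} (x : S.PP T) : ∃ a ∈ AA (S.im T), ∃ hm : (x : G) ∈ M, S.pr ⟨x, hm⟩ = uu a := by
  obtain ⟨h, hm, a, ha⟩ := S.mem_PP.1 x.2
  refine ⟨a, ?_, hm, ha⟩
  rw [mem_AA, mem_im]
  exact ⟨⟨x, hm⟩, h, ha⟩

theorem PP_le {T : Subgroup G} : S.PP T ≤ T := inf_le_left

theorem N_le_PP {T : Subgroup G} (hNM : N ≤ M) (hNT : N ≤ T) : N ≤ S.PP T := by
  intro x hx
  rw [mem_PP]
  refine ⟨hNT hx, hNM hx, ?_⟩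
  rw [(S.ker ⟨x, hNM hx⟩).2 hx]; exact (uni F).one_mem

noncomputable def pA (T : Subgroup G) : ↥(S.PP T) →* Multiplicative (AA (S.im T)) where
  toFun x := Multiplicative.ofAdd ⟨Classical.choose (S.prPP x), (Classical.choose_spec (S.prPP x)).1⟩
  map_one' := by
    obtain ⟨h1, h2, h3⟩ := Classical.choose_spec (S.prPP (1 : S.PP T))
    have h4 : S.pr ⟨((1 : S.PP T) : G), h2⟩ = 1 := map_one S.pr
    rw [h4, ← uu_zero] at h3
    have := uu_inj h3
    apply Multiplicative.toAdd.injective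
    exact Subtype.ext this.symm
  map_mul' := by
    intro x y
    obtain ⟨h1, h2, h3⟩ := Classical.choose_spec (S.prPP x)
    obtain ⟨k1, k2, k3⟩ := Classical.choose_spec (S.prPP y)
    obtain ⟨l1, l2, l3⟩ := Classical.choose_spec (S.prPP (x * y))
    have h4 : S.pr ⟨((x * y : S.PP T) : G), l2⟩ = S.pr ⟨x, h2⟩ * S.pr ⟨y, k2⟩ := by
      rw [← map_mul]; rfl
    rw [h4, h3, k3, ← uu_add] at l3
    have := uu_inj l3
    apply Multiplicative.toAdd.injective
    exact Subtype.ext this.symm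

theorem pA_spec {T : Subgroup G} (x : S.PP T) (hm : (x : G) ∈ M) :
    S.pr ⟨x, hm⟩ = uu ((Multiplicative.toAdd (S.pA T x) : AA (S.im T)) : F) := by
  obtain ⟨h1, h2, h3⟩ := Classical.choose_spec (S.prPP x)
  exact h3

theorem pA_eq {T : Subgroup G} (x : S.PP T) (hm : (x : G) ∈ M) {a : Multiplicative (AA (S.im T))}
    (h : S.pr ⟨x, hm⟩ = uu ((Multiplicative.toAdd a : AA (S.im T)) : F)) : S.pA T x = a := by
  rw [S.pA_spec x hm] at h
  apply Multiplicative.toAdd.injective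
  exact Subtype.ext (uu_inj h)

theorem pA_surj {T : Subgroup G} : Function.Surjective (S.pA T) := by
  intro a
  have h1 := (Multiplicative.toAdd a).2
  rw [mem_AA, mem_im] at h1
  obtain ⟨m, hm, e⟩ := h1
  refine ⟨⟨m, S.mem_PP.2 ⟨hm, m.2, _, e⟩⟩, S.pA_eq _ m.2 e⟩

theorem pA_ker {T : Subgroup G} (x : S.PP T) : S.pA T x = 1 ↔ (x : G) ∈ N := by
  obtain ⟨h, hm, hu⟩ := S.mem_PP.1 x.2
  have h1 := S.pA_spec x hm
  have h2 := S.ker ⟨x, hm⟩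
  rw [← h2]
  constructor
  · intro h3; rw [h1, h3]; exact uu_zero
  · intro h3
    apply S.pA_eq x hm
    rw [h3]; exact uu_zero.symm

/-- the torus part -/
noncomputable def sZ {T : Subgroup G} (hTM : T ≤ M) (hle : S.im T ≤ bor F) : ↥T →* ZZ (S.im T) :=
  (((del F).comp ((S.prT hTM).codRestrict (bor F) (fun t => hle (by
      rw [← S.prT_range hTM]; exact ⟨t, rfl⟩))))).codRestrict (ZZ (S.im T)) (fun t => by
    rw [mem_ZZ]
    refine ⟨S.prT hTM t, by rw [← S.prT_range hTM]; exact ⟨t, rfl⟩, ?_, rfl⟩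
    exact hle (by rw [← S.prT_range hTM]; exact ⟨t, rfl⟩))

theorem sZ_val {T : Subgroup G} (hTM : T ≤ M) (hle : S.im T ≤ bor F) (t : T) :
    ((S.sZ hTM hle t : Fˣ) : F) = (S.pr ⟨t, hTM t.2⟩).1 0 0 := rfl

theorem sZ_surj {T : Subgroup G} (hTM : T ≤ M) (hle : S.im T ≤ bor F) : Function.Surjective (S.sZ hTM hle) := by
  intro z
  obtain ⟨g, hg, h1, h2⟩ := mem_ZZ.1 z.2
  obtain ⟨m, hm, rfl⟩ := S.mem_im.1 hg
  exact ⟨⟨m, hm⟩, Subtype.ext (Units.ext h2)⟩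

theorem sZ_ker {T : Subgroup G} (hTM : T ≤ M) (hle : S.im T ≤ bor F) (t : T) :
    S.sZ hTM hle t = 1 ↔ (t : G) ∈ S.PP T := by
  have hb : S.pr ⟨t, hTM t.2⟩ ∈ bor F := hle (S.mem_im.2 ⟨_, t.2, rfl⟩)
  have h1 := del_ker ⟨_, hb⟩
  rw [mem_PP]
  constructor
  · intro h
    exact ⟨t.2, hTM t.2, h1.1 (congrArg Subtype.val h)⟩
  · rintro ⟨_, _, h⟩
    exact Subtype.ext (h1.2 h)

theorem tau_ex {T : Subgroup G} (hTM : T ≤ M) (hle : S.im T ≤ bor F) (t : G) (ht : t ∈ T) :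
    ∃ τ : Multiplicative (AA (S.im T)) →* Multiplicative (AA (S.im T)),
      (∀ x : S.PP T, ∀ hx : t * (x : G) * t⁻¹ ∈ S.PP T, S.pA T ⟨t * x * t⁻¹, hx⟩ = τ (S.pA T x)) ∧
      (t ∉ S.PP T → ∀ a, ∃ b, τ b * b⁻¹ = a) := by
  set α := S.sZ hTM hle ⟨t, ht⟩ with hα
  have hαv : ((α : Fˣ) : F) = (S.pr ⟨t, hTM ht⟩).1 0 0 := S.sZ_val hTM hle ⟨t, ht⟩
  have hb : S.pr ⟨t, hTM ht⟩ ∈ bor F := hle (S.mem_im.2 ⟨⟨t, hTM ht⟩, ht, rfl⟩)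
  let τ0 : AA (S.im T) →+ AA (S.im T) :=
    { toFun := fun a => ⟨((α : Fˣ) : F) ^ 2 * a, ZZ_smul α.2 a.2⟩
      map_zero' := Subtype.ext (by simp)
      map_add' := fun a b => Subtype.ext (by simp [mul_add]) }
  refine ⟨AddMonoidHom.toMultiplicative τ0, ?_, ?_⟩
  · intro x hx
    obtain ⟨_, hm, _⟩ := S.mem_PP.1 x.2
    obtain ⟨_, hm', _⟩ := S.mem_PP.1 hx
    apply S.pA_eq _ hm'
    have h1 : S.pr ⟨t * x * t⁻¹, hm'⟩ = S.pr ⟨t, hTM ht⟩ * S.pr ⟨x, hm⟩ * (S.pr ⟨t, hTM ht⟩)⁻¹ := by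
      rw [← map_inv, ← map_mul, ← map_mul]; rfl
    show S.pr ⟨t * x * t⁻¹, hm'⟩ = _
    rw [h1, S.pA_spec x hm, mem_bor_conj_uu hb, ← hαv]
    rfl
  · intro htP a
    have hα1 : ((α : Fˣ) : F) ^ 2 - 1 ≠ 0 := by
      intro h
      have h2 : ((α : Fˣ) : F) = 1 := sq_inj2 (by rw [one_pow]; exact sub_eq_zero.1 h)
      exact htP ((S.sZ_ker hTM hle ⟨t, ht⟩).1 (Subtype.ext (Units.ext h2)))
    have hinj : Function.Injective (fun b : AA (S.im T) => τ0 b - b) := by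
      intro b b' h
      have h' : ((α : Fˣ) : F) ^ 2 * (b : F) - b = ((α : Fˣ) : F) ^ 2 * (b' : F) - b' := congrArg Subtype.val h
      apply Subtype.ext
      apply mul_left_cancel₀ hα1
      linear_combination h'
    obtain ⟨b, hb⟩ := Finite.injective_iff_surjective.1 hinj (Multiplicative.toAdd a)
    refine ⟨Multiplicative.ofAdd b, ?_⟩
    apply Multiplicative.toAdd.injective
    rw [← hb]
    show τ0 b + -b = τ0 b - b
    rw [sub_eq_add_neg]

/-- degrees over the quotient `G/M` -/
theorem top_deg (S : Stp F N M) {f : ℕ} (hf : 4 ≤ f) (hF : Nat.card F = 2 ^ f) (hNM : N ≤ M) {Y χ : G → ℂ}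
    (hχ : IrrOn (⊤ : Subgroup G) χ) (hY : IrrOn M Y) (h : ip M χ Y ≠ 0) :
    ∃ r, r ∣ f ∧ dg χ = r * dg Y := by
  obtain ⟨hab, hcard⟩ := S.quot_abel hNM f (by omega) hF
  let _i : CommGroup (G ⧸ M) := { (inferInstance : Group (G ⧸ M)) with
    mul_comm := by
      intro a b
      obtain ⟨a, rfl⟩ := QuotientGroup.mk_surjective a
      obtain ⟨b, rfl⟩ := QuotientGroup.mk_surjective b
      rw [← QuotientGroup.mk_mul, ← QuotientGroup.mk_mul, QuotientGroup.eq]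
      have := hab (b⁻¹) (a⁻¹)
      convert this using 1
      group }
  let p : (⊤ : Subgroup G) →* G ⧸ M := (QuotientGroup.mk' M).comp (⊤ : Subgroup G).subtype
  have hp : Function.Surjective p := by
    intro a
    obtain ⟨a, rfl⟩ := QuotientGroup.mk_surjective a
    exact ⟨⟨a, trivial⟩, rfl⟩
  have hker : ∀ k : (⊤ : Subgroup G), p k = 1 ↔ (k : G) ∈ M := fun k => QuotientGroup.eq_one_iff _
  have h1 := clifford_abel p hp le_top hker hχ hY h
  have h2 := clifford_deg le_top (nrm_of_ker p le_top hker) hχ hY h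
  refine ⟨_, ?_, h2⟩
  refine dvd_trans ?_ (h1.trans hcard)
  exact mul_dvd_mul_right (dvd_pow_self _ (by norm_num)) _

/-- the numerical data attached to a degree not divisible by four -/
structure Dat (f : ℕ) (G : Type) [Group G] (a d z : ℕ) : Prop where
  ex : ∃ w k r r' s a0 : ℕ, w * z = 2 ^ f - 1 ∧ k ∣ z ∧ r ∣ f ∧ r' ∣ f ∧ (s = 1 ∨ s = 2) ∧
    a = (2 ^ f + 1) * w * s * k * r * d ∧ a0 ∈ charDegrees G ∧
    a0 = (2 ^ f + 1) * (2 ^ f - 1) * s * r' * d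

theorem D5 (S : Stp F N M) {f : ℕ} (hf : 4 ≤ f) (hF : Nat.card F = 2 ^ f)
    (hNM : N ≤ M) {θ χ : G → ℂ} (hθ : IrrOn N θ) (hχ : IrrOn (⊤ : Subgroup G) χ)
    (h : ip N χ θ ≠ 0) (h4 : ¬ 4 ∣ dg χ) {j z w : ℕ} (hP : Pos S (stabIn M θ) j z w) :
    Dat f G (dg χ) (dg θ) z := by
  obtain ⟨Y, η, hY, h1, h2, hη, h3, h4', h5, h6, h7⟩ := S.D1 hNM hθ hχ h
  set T := stabIn M θ with hT
  have hNT : N ≤ T := le_stabIn hNM hθ.charOn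
  have hTM : T ≤ M := stabIn_le M θ
  have hinv : ∀ t ∈ T, cj t θ = θ := fun t ht => funext (mem_stabIn.1 ht).2
  obtain ⟨e, k, he, hk, hd, hreg⟩ := reg_deg (S.pA T) S.pA_surj (S.N_le_PP hNM hNT) S.pA_ker
    (S.sZ hTM hP.le) (S.sZ_surj hTM hP.le) S.PP_le (S.sZ_ker hTM hP.le)
    (fun t ht => S.tau_ex hTM hP.le t ht) hθ hinv hη h4'
  have hcA : Nat.card (Multiplicative (AA (S.im T))) = Nat.card (AA (S.im T)) := rfl
  rw [hcA] at he hreg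
  rw [← hP.hz] at hk hreg
  obtain ⟨r, hr, hr2⟩ := S.top_deg hf hF hNM hχ hY h1
  have hA := hP.hA
  have h16 : 16 ≤ 2 ^ f := (Nat.pow_le_pow_right (by norm_num) hf : 2 ^ 4 ≤ 2 ^ f)
  have htot : dg χ = (2 ^ f + 1) * w * (2 ^ j * e) * k * r * dg θ := by
    rw [hr2, h5, hd, hP.idx, hF]; ring
  have hs : 2 ^ j * e = 1 ∨ 2 ^ j * e = 2 := by
    have he2 : e ∣ 2 ^ f := by
      rw [← hF, hA]
      exact Dvd.dvd.mul_left ((dvd_pow_self e (by norm_num)).trans he) _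
    obtain ⟨i, _, hi⟩ := (Nat.dvd_prime_pow Nat.prime_two).1 he2
    rw [hi, ← pow_add] at htot ⊢
    have : j + i ≤ 1 := by
      by_contra hc
      apply h4
      have h9 : 4 ∣ 2 ^ (j + i) := pow_dvd_pow 2 (show 2 ≤ j + i by omega)
      rw [htot]
      exact Dvd.dvd.mul_right (Dvd.dvd.mul_right (Dvd.dvd.mul_right (Dvd.dvd.mul_left h9 _) _) _) _
    have h10 : j + i = 0 ∨ j + i = 1 := by omega
    rcases h10 with h10 | h10 <;> rw [h10] <;> simp
  have hlt : e ^ 2 < Nat.card (AA (S.im T)) := by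
    have he2 : e ≤ 2 := by
      have : 0 < 2 ^ j := by positivity
      have h9 : e ≤ 2 ^ j * e := Nat.le_mul_of_pos_left e this
      omega
    have h8 : 2 ^ j ≤ 2 := by rcases hP.hj with h | h <;> rw [h] <;> norm_num
    rw [hF] at hA
    have : e ^ 2 ≤ 4 := by nlinarith
    have : 16 ≤ 2 * Nat.card (AA (S.im T)) := by
      calc 16 ≤ 2 ^ f := h16
        _ = 2 ^ j * Nat.card (AA (S.im T)) := hA
        _ ≤ _ := Nat.mul_le_mul_right _ h8
    omega
  obtain ⟨η', hη', h8, h9⟩ := hreg hlt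
  obtain ⟨Y', hY', h10⟩ := exists_over hTM hη'
  have h11 := clifford_corr hNM (nrm_of_normal M N) hY' hθ hη' h10 h8
  rw [S.orb_index hNM hθ] at h11
  obtain ⟨χ', hχ', h12⟩ := exists_over (K := ⊤) le_top hY'
  obtain ⟨r', hr', hr2'⟩ := S.top_deg hf hF hNM hχ' hY' h12
  have hw := hP.hw
  rw [hF] at hw
  refine ⟨w, k, r, r', 2 ^ j * e, dg χ', hw, hk, hr, hr', hs, htot, irr_top_mem hχ', ?_⟩
  rw [hr2', h11, h9, ← hw, ← hT, hP.idx, hF]; ring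

end Conc
end Stp
end PartE3

section PartE4
open scoped Classical
set_option linter.unusedSectionVars false
set_option linter.unusedSimpArgs false
set_option linter.unusedVariables false

section SLc
variable {F : Type} [Field F] [Fintype F] [CharP F 2]

theorem conj10 (x g : SL2 F) : (x * g * x⁻¹).1 1 0 =
    x.1 1 1 * (x.1 1 0 * g.1 0 0 + x.1 1 1 * g.1 1 0) - x.1 1 0 * (x.1 1 0 * g.1 0 1 + x.1 1 1 * g.1 1 1) := by
  rw [sl_mul, sl_mul, sl_mul, sl_inv00, sl_inv10]; ring

theorem dd_conj10 {x : SL2 F} {α : Fˣ} (hα : α ≠ 1) (h : x * dd α * x⁻¹ ∈ bor F) :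
    x.1 1 0 = 0 ∨ x.1 1 1 = 0 := by
  rw [mem_bor, conj10] at h
  simp at h
  have h1 : (α : F) - (α : F)⁻¹ ≠ 0 := by
    intro h2
    apply hα
    apply Units.ext
    apply sq_inj2
    have := α.ne_zero
    have h3 : (α : F) = (α : F)⁻¹ := sub_eq_zero.1 h2
    field_simp at h3
    simpa using h3
  have h2 : x.1 1 0 * x.1 1 1 * ((α : F) - (α : F)⁻¹) = 0 := by linear_combination h
  rcases mul_eq_zero.1 h2 with h3 | h3
  · exact mul_eq_zero.1 h3
  · exact absurd h3 h1

theorem not_both {x : SL2 F} {α : Fˣ} (hα : α ≠ 1) (h : x * dd α * x⁻¹ ∈ bor F) (h' : x * w0 * x⁻¹ ∈ bor F) : False := by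
  rw [mem_bor, conj10] at h'
  simp at h'
  have hd := sl_det x
  rcases dd_conj10 hα h with h1 | h1
  · rw [h1] at h' hd
    have h2 : x.1 1 1 = 0 := by simpa using h'
    rw [h2] at hd; simp at hd
  · rw [h1] at h' hd
    have h2 : x.1 1 0 = 0 := by simpa using h'
    rw [h2] at hd; simp at hd

theorem dd_fix {x v : SL2 F} {α : Fˣ} (hα : α ≠ 1) (h : dd α ∈ cjS x (bor F)) (hv : v ∈ cjS x (uni F)) :
    (∃ a, v = uu a) ∨ (∃ a, v = ll a) := by
  rw [mem_cjS] at h hv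
  obtain ⟨b, hb⟩ := hv
  have hb' : v = x * uu b * x⁻¹ := by rw [← hb]; group
  have h1 := dd_conj10 (x := x⁻¹) hα (by rwa [inv_inv])
  rw [sl_inv10, sl_inv11, neg_eq_zero] at h1
  have hd := sl_det x
  rcases h1 with h1 | h1
  · left; exact ⟨_, by rw [hb', mem_bor_conj_uu h1]⟩
  · right
    refine ⟨- (x.1 1 0 ^ 2 * b), ?_⟩
    rw [hb']
    rw [h1] at hd
    apply sl_ext
    · simp [sl_mul, sl_inv00, sl_inv01, sl_inv10, sl_inv11, h1]; linear_combination hd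
    · simp [sl_mul, sl_inv00, sl_inv01, sl_inv10, sl_inv11, h1]
    · rw [conj_uu10]; simp
    · simp [sl_mul, sl_inv00, sl_inv01, sl_inv10, sl_inv11, h1]; linear_combination hd

theorem w0_sq : (w0 : SL2 F) * w0 = 1 := by
  apply sl_ext <;> simp [sl_mul, sl_one]

theorem w0_inv : (w0 : SL2 F)⁻¹ = w0 := inv_eq_of_mul_eq_one_left w0_sq

theorem w0_uu (a : F) : (w0 : SL2 F) * uu a * w0⁻¹ = ll a := by
  rw [w0_inv]; apply sl_ext <;> simp [sl_mul]

theorem w0_ll (a : F) : (w0 : SL2 F) * ll a * w0⁻¹ = uu a := by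
  rw [w0_inv]; apply sl_ext <;> simp [sl_mul]

theorem w0_dd (α : Fˣ) : (w0 : SL2 F) * dd α * w0⁻¹ = dd α⁻¹ := by
  rw [w0_inv]; apply sl_ext <;> simp [sl_mul]

theorem dd_pow3 {α : Fˣ} (h : α ^ 3 = 1) : dd α ^ 3 = 1 := by
  have h' : (α : F) ^ 3 = 1 := by
    have := congrArg Units.val h
    rwa [Units.val_pow_eq_pow_val, Units.val_one] at this
  have h2 : (α : F)⁻¹ ^ 3 = 1 := by rw [inv_pow, h', inv_one]
  rw [pow_succ, pow_two]
  apply sl_ext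
  · simp [sl_mul, sl_one]; linear_combination h'
  · simp [sl_mul, sl_one]
  · simp [sl_mul, sl_one]
  · simp [sl_mul, sl_one]; linear_combination h2


theorem K_ll {K : Subgroup (SL2 F)} (hw : w0 ∈ K) (hu : ∀ a, uu a ∈ K → a = 0) {a : F} (h : ll a ∈ K) : a = 0 := by
  apply hu
  rw [← w0_ll]
  exact K.mul_mem (K.mul_mem hw h) (K.inv_mem hw)

theorem K_q {f : ℕ} (hf : 4 ≤ f) (hF : Nat.card F = 2 ^ f) {K : Subgroup (SL2 F)} (hw : w0 ∈ K)
    (hu : ∀ a, uu a ∈ K → a = 0) (hi : K.index ∣ Nat.card F) : False := by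
  have h16 : 16 ≤ 2 ^ f := (Nat.pow_le_pow_right (by norm_num) hf : 2 ^ 4 ≤ 2 ^ f)
  have hodd : Odd (Nat.card F ^ 2 - 1) := by
    rw [hF, ← pow_mul]
    exact Nat.Even.sub_odd Nat.one_le_two_pow (by rw [Nat.even_pow]; exact ⟨even_two, by omega⟩) odd_one
  have hc := Subgroup.card_mul_index K
  rw [card_sl] at hc
  have h1 : Nat.Coprime (Nat.card F ^ 2 - 1) K.index := by
    apply Nat.Coprime.coprime_dvd_right hi
    rw [hF]; rw [hF] at hodd
    exact Nat.Coprime.pow_right _ (Nat.coprime_two_right.2 hodd)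
  have h2 : Nat.card F ^ 2 - 1 ∣ Nat.card K :=
    h1.dvd_of_dvd_mul_right (by rw [hc]; exact dvd_mul_left _ _)
  have h3 : 2 ∣ Nat.card K := by
    have h4 : orderOf (⟨w0, hw⟩ : K) = 2 := by
      apply orderOf_eq_prime
      · rw [pow_two]; exact Subtype.ext w0_sq
      · intro h
        have := congrArg (fun g : K => g.1.1 0 0) h
        simp [sl_one] at this
    have h5 := orderOf_dvd_natCard (⟨w0, hw⟩ : K)
    rwa [h4] at h5
  have h4 : 2 * (Nat.card F ^ 2 - 1) ∣ Nat.card K :=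
    Nat.Coprime.mul_dvd_of_dvd_of_dvd (Nat.coprime_two_left.2 hodd) h3 h2
  have hdis : Disjoint K (uni F) := by
    rw [Subgroup.disjoint_def]
    rintro x hx ⟨a, rfl⟩
    rw [hu a hx, uu_zero]
  have h5 := Nat.card_le_card_of_injective _ (Subgroup.mul_injective_of_disjoint hdis)
  rw [Nat.card_prod, card_uni, card_sl] at h5
  have h6 := Nat.le_of_dvd Nat.card_pos h4
  have h7 : 0 < Nat.card F ^ 2 - 1 := hodd.pos
  have h8 : 0 < Nat.card F := Nat.card_pos
  rw [mul_comm] at h5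
  have := Nat.le_of_mul_le_mul_left h5 h8
  omega

theorem K_claim {f : ℕ} (hf : 4 ≤ f) (hF : Nat.card F = 2 ^ f) {K : Subgroup (SL2 F)} (hw : w0 ∈ K)
    (hu : ∀ a, uu a ∈ K → a = 0) (Z : Subgroup Fˣ) (hZ : ∀ α ∈ Z, dd α ∈ K) (hz : Nat.card Z ≠ 1)
    (hd : Nat.card F ∣ 4 * Nat.card K) : Nat.card F = 16 ∧ ¬ 3 ∣ Nat.card Z := by
  have hK : K ≠ ⊤ := by
    rintro rfl
    exact one_ne_zero (hu 1 trivial)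
  obtain ⟨x, n, -, -, hor⟩ := claimC f hf hF K hK hd
  have hZ1 : ∃ α ∈ Z, α ≠ 1 := by
    by_contra hc
    push Not at hc
    apply hz
    rw [(Subgroup.eq_bot_iff_forall Z).2 hc]; simp
  rcases hor with hle | ⟨h1, h2, h3⟩
  · obtain ⟨α, hα, hα1⟩ := hZ1
    exact (not_both hα1 (hle (cjS_mem (hZ α hα))) (hle (cjS_mem hw))).elim
  · refine ⟨h1, fun h => ?_⟩
    have : Fact (Nat.Prime 3) := ⟨Nat.prime_three⟩
    obtain ⟨⟨α, hα⟩, ho⟩ := exists_prime_orderOf_dvd_card' 3 h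
    have ho' : orderOf α = 3 := by rw [← ho]; exact (Subgroup.orderOf_mk α hα).symm
    have hα1 : α ≠ 1 := by rintro rfl; simp at ho'
    have hα3 : α ^ 3 = 1 := by rw [← ho']; exact pow_orderOf_eq_one α
    obtain ⟨y, hy, v, hv, hv1, hvy⟩ := h3 (dd α) (hZ α hα) (dd_pow3 hα3)
    rcases dd_fix hα1 hy hvy with ⟨a, rfl⟩ | ⟨a, rfl⟩
    · exact hv1 (by rw [hu a hv, uu_zero])
    · apply hv1
      rw [K_ll hw hu hv]
      apply sl_ext <;> simp [sl_one]

end SLc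

namespace Stp
section Lin
variable {F : Type} [Field F] [Fintype F] [CharP F 2]
variable {G : Type} [Group G] [Fintype G] {N M : Subgroup G} [hNn : N.Normal] [hMn : M.Normal]

theorem D6 (S : Stp F N M) {f : ℕ} (hf : 4 ≤ f) (hF : Nat.card F = 2 ^ f) (hG : TwoPrimeHypothesis G)
    (hNM : N ≤ M) {θ : G → ℂ} (hθ : IrrOn N θ) (hd : dg θ = 1) {j z w : ℕ}
    (hP : Pos S (stabIn M θ) j z w) (hz1 : z ≠ 1) : f = 4 ∧ z = 5 := by
  have hj : j = 0 := hP.zj.resolve_left hz1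
  have hθ1 : θ 1 = 1 := by rw [← hθ.charOn.dg_eq, hd]; simp
  have hNT : N ≤ stabIn M θ := le_stabIn hNM hθ.charOn
  have hlin := hθ.linear hθ1
  have hnz : ∀ x ∈ N, θ x ≠ 0 := by
    intro x hx h0
    have := hlin x hx x⁻¹ (N.inv_mem hx)
    rw [mul_inv_cancel, hθ1, h0, zero_mul] at this
    exact one_ne_zero this
  set H := S.im (stabIn M θ) with hH
  have hU : ∀ a, uu a ∈ H := by
    have h1 : AA H = ⊤ := by
      apply AddSubgroup.eq_top_of_card_eq
      have := hP.hA
      rw [hj] at this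
      rw [this]; simp [hH]
    intro a
    rw [← mem_AA, h1]; trivial
  have hDD : ∀ α ∈ ZZ H, dd α ∈ H := by
    intro α hα
    obtain ⟨g, hg, h1, h2⟩ := mem_ZZ.1 hα
    have h3 : g = dd α * uu (g.1 0 1 * (α : F)⁻¹) := by
      have hdet := bor_ne h1
      rw [h2] at hdet
      have hα0 := α.ne_zero
      apply sl_ext
      · simp [sl_mul, h2]
      · simp [sl_mul, h2]; field_simp
      · simp [sl_mul, h1]
      · simp [sl_mul]; field_simp; linear_combination hdet
    have h4 : dd α = g * (uu (g.1 0 1 * (α : F)⁻¹))⁻¹ := by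
      rw [eq_mul_inv_iff_mul_eq]; exact h3.symm
    rw [h4]
    exact H.mul_mem hg (H.inv_mem (hU _))
  obtain ⟨ω, hω⟩ := S.surj w0
  have hNc : ∀ g x : G, x ∈ N → g * x * g⁻¹ ∈ N := fun g x hx => hNn.conj_mem x hx g
  have hNc' : ∀ g x : G, g * x * g⁻¹ ∈ N → x ∈ N := fun g x hx => by
    have := hNn.conj_mem _ hx g⁻¹
    simpa [mul_assoc] using this
  set μ : G → ℂ := fun x => θ x * θ (ω * x * (ω : G)⁻¹) with hμ
  have hμi : IrrOn N μ := by
    apply linear_irr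
    · simp [hμ, hθ1]
    · intro x hx
      simp [hμ, hθ.charOn.off hx]
    · intro x hx y hy
      simp only [hμ]
      have : (ω : G) * (x * y) * (ω : G)⁻¹ = (ω * x * (ω : G)⁻¹) * (ω * y * (ω : G)⁻¹) := by group
      rw [this, hlin x hx y hy, hlin _ (hNc _ _ hx) _ (hNc _ _ hy)]; ring
  have hNT' : N ≤ stabIn M μ := le_stabIn hNM hμi.charOn
  set K := S.im (stabIn M μ) with hK
  -- elements of `H` fix `θ`
  have hfix : ∀ m : M, S.pr m ∈ H → ∀ x, θ (m * x * (m : G)⁻¹) = θ x := by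
    intro m hm
    rw [S.pr_mem hNT] at hm
    exact (mem_stabIn.1 hm).2
  have hdd : ∀ α ∈ ZZ H, dd α ∈ K := by
    intro α hα
    obtain ⟨m, hm⟩ := S.surj (dd α)
    rw [← hm, S.pr_mem hNT']
    refine mem_stabIn.2 ⟨m.2, fun x => ?_⟩
    simp only [hμ]
    rw [hfix m (by rw [hm]; exact hDD α hα)]
    have h1 := hfix (ω * m * ω⁻¹) (by
      rw [map_mul, map_mul, map_inv, hω, hm, w0_dd]
      exact hDD _ ((ZZ H).inv_mem hα)) (ω * x * (ω : G)⁻¹)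
    rw [← h1]
    congr 2
    push_cast
    group
  have hw0 : w0 ∈ K := by
    rw [← hω, S.pr_mem hNT']
    refine mem_stabIn.2 ⟨ω.2, fun x => ?_⟩
    simp only [hμ]
    have h1 : (ω : G) * ω ∈ N := (S.ker (ω * ω)).1 (by rw [map_mul, hω, w0_sq])
    have h2 := hθ.charOn.conj h1 x
    rw [mul_comm, ← h2]
    congr 2
    group
  have huu : ∀ a, uu a ∈ K → a = 0 := by
    intro a ha
    obtain ⟨m, hm⟩ := S.surj (uu a)
    rw [← hm, S.pr_mem hNT'] at ha
    have h1 := (mem_stabIn.1 ha).2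
    have h2 := hfix m (by rw [hm]; exact hU a)
    have h3 : ∀ x, θ (ω * (m * x * (m : G)⁻¹) * (ω : G)⁻¹) = θ (ω * x * (ω : G)⁻¹) := by
      intro x
      by_cases hx : x ∈ N
      · have h4 := h1 x
        simp only [hμ] at h4
        rw [h2] at h4
        exact mul_left_cancel₀ (hnz x hx) h4
      · rw [hθ.charOn.off (fun h => hx (hNc' _ _ (hNc' _ _ h))), hθ.charOn.off (fun h => hx (hNc' _ _ h))]
    have h4 : S.pr (ω * m * ω⁻¹) ∈ H := by
      rw [S.pr_mem hNT]
      refine mem_stabIn.2 ⟨(ω * m * ω⁻¹ : M).2, fun y => ?_⟩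
      have h5 := h3 ((ω : G)⁻¹ * y * ω)
      have e1 : (ω : G) * (m * ((ω : G)⁻¹ * y * ω) * (m : G)⁻¹) * (ω : G)⁻¹ =
        (ω * m * ω⁻¹ : M) * y * ((ω * m * ω⁻¹ : M) : G)⁻¹ := by push_cast; group
      have e2 : (ω : G) * ((ω : G)⁻¹ * y * ω) * (ω : G)⁻¹ = y := by group
      rw [e1, e2] at h5
      exact h5
    have h5 := hP.le h4
    rw [map_mul, map_mul, map_inv, hω, hm, w0_uu, mem_bor] at h5
    simpa using h5
  obtain ⟨χ, hχ, hχμ⟩ := exists_over (K := ⊤) le_top hμi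
  have hidx : K.index ∣ dg χ := by
    obtain ⟨Y, η, hY, h1, h2, hη, h3, h4', h5, h6, h7⟩ := S.D1 hNM hμi hχ hχμ
    exact (Dvd.intro _ h5.symm).trans h6
  have hq : dg χ ≠ Nat.card F := by
    intro h
    rw [h] at hidx
    exact K_q hf hF hw0 huu hidx
  have h8 := S.not8 hf hF hG (irr_top_mem hχ) hq
  have h4 := S.q_dvd hF (k := 2) K hidx (by norm_num; exact h8)
  obtain ⟨h16, h3⟩ := K_claim hf hF hw0 huu (ZZ H) hdd (by rw [← hP.hz]; exact hz1) h4
  rw [← hP.hz] at h3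
  have hw := hP.hw
  rw [h16] at hw
  constructor
  · rw [h16] at hF
    have : 2 ^ f = 2 ^ 4 := by omega
    exact Nat.pow_right_injective (le_refl 2) this
  · have hz15 : z ∣ 15 := Dvd.intro_left w (by omega)
    have hzle := Nat.le_of_dvd (by norm_num) hz15
    clear * - hz15 hzle h3 hz1
    interval_cases z <;> omega

end Lin
end Stp
end PartE4

section PartE5
open scoped Classical
set_option linter.unusedSectionVars false
set_option linter.unusedSimpArgs false
set_option linter.unusedVariables false

section Fin

def oddp (n : ℕ) : ℕ := n / 2 ^ (n.factorization 2)

theorem oddp_eq {i m : ℕ} (hm : Odd m) : oddp (2 ^ i * m) = m := by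
  have h : (2 ^ i * m).factorization 2 = i := by
    rw [Nat.factorization_mul (by positivity) hm.pos.ne']
    simp [Nat.prime_two.factorization, Nat.factorization_eq_zero_of_not_dvd (Odd.not_two_dvd_nat hm)]
  rw [oddp, h]
  exact Nat.mul_div_cancel_left _ (by positivity)

noncomputable def Sset (f R : ℕ) : Finset ℕ :=
  if R = 1 then {2 * (2 ^ f + 1), 51, 102} else {(2 ^ f + 1) * R, 2 * (2 ^ f + 1) * R}

theorem Sset_card (f R : ℕ) : (Sset f R).card ≤ 3 := by
  unfold Sset
  split_ifs
  · exact Finset.card_le_three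
  · exact Finset.card_le_two.trans (by norm_num)

theorem pow_small {i m a : ℕ} (h : ¬ 4 ∣ a) (h1 : 2 ^ i ∣ a) : 2 ^ i = 1 ∨ 2 ^ i = 2 := by
  have : i ≤ 1 := by
    by_contra hc
    exact h ((pow_dvd_pow 2 (show 2 ≤ i by omega) : 4 ∣ 2 ^ i).trans h1)
  interval_cases i <;> simp

theorem dat_arith {G : Type} [Group G] (hG : TwoPrimeHypothesis G) {f : ℕ} (hf : 4 ≤ f) {a d z : ℕ}
    (ha : a ∈ charDegrees G) (ha0 : a ≠ 0) (h4 : ¬ 4 ∣ a) (hD : Stp.Dat f G a d z)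
    (hl : d = 1 → z ≠ 1 → f = 4 ∧ z = 5) :
    ∃ a0 ∈ charDegrees G, a0 ≠ 0 ∧ (2 ^ f + 1) * (2 ^ f - 1) ∣ a0 ∧
      (a = a0 ∨ a ∈ Sset f (oddp (a0 / ((2 ^ f + 1) * (2 ^ f - 1))))) := by
  obtain ⟨w, k, r, r', s, a0, hw, hk, hr, hr', hs, hae, ha0m, ha0e⟩ := hD.ex
  have h16 : 16 ≤ 2 ^ f := (Nat.pow_le_pow_right (by norm_num) hf : 2 ^ 4 ≤ 2 ^ f)
  have hd0 : d ≠ 0 := by rintro rfl; simp at hae; exact ha0 hae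
  have hk0 : k ≠ 0 := by rintro rfl; simp at hae; exact ha0 hae
  have hw0 : w ≠ 0 := by rintro rfl; simp at hae; exact ha0 hae
  have hr0 : r' ≠ 0 := by rintro rfl; simp at hr'; omega
  have hs0 : s ≠ 0 := by omega
  have hQ : 0 < (2 ^ f + 1) * (2 ^ f - 1) := Nat.mul_pos (by omega) (by omega)
  have hdiv : a0 / ((2 ^ f + 1) * (2 ^ f - 1)) = s * r' * d := by
    rw [ha0e, mul_assoc, mul_assoc, Nat.mul_div_cancel_left _ hQ, mul_assoc]
  have hQd : (2 ^ f + 1) * (2 ^ f - 1) ∣ a0 := by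
    rw [ha0e, mul_assoc, mul_assoc]; exact dvd_mul_right _ _
  have ha00 : a0 ≠ 0 := by
    rw [ha0e]
    exact mul_ne_zero (mul_ne_zero (mul_ne_zero hQ.ne' hs0) hr0) hd0
  refine ⟨a0, ha0m, ha00, hQd, ?_⟩
  by_cases hne : a = a0
  · exact Or.inl hne
  right
  rw [hdiv]
  have hst : ∃ t, s = 2 ^ t := by
    rcases hs with rfl | rfl
    · exact ⟨0, rfl⟩
    · exact ⟨1, rfl⟩
  obtain ⟨t, ht⟩ := hst
  have hom : Om ((2 ^ f + 1) * w * k * d) ≤ 2 := by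
    apply tp hG ha ha0m hne ha0
    · rw [hae]; exact ⟨s * r, by ring⟩
    · obtain ⟨k', rfl⟩ := hk
      rw [ha0e, ← hw]; exact ⟨k' * s * r', by ring⟩
  rw [Om_mul (mul_ne_zero (mul_ne_zero (by omega) hw0) hk0) hd0, Om_mul (mul_ne_zero (by omega) hw0) hk0,
    Om_mul (by omega) hw0] at hom
  have hq1 : 1 ≤ Om (2 ^ f + 1) := Om_pos (by omega)
  by_cases hd1 : d = 1
  · subst hd1
    by_cases hz : z = 1
    · exfalso
      rw [hz, mul_one] at hw
      rw [← hw] at hQd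
      have h1 := tp hG ha ha0m hne ha0 (d := (2 ^ f + 1) * w) (by rw [hae]; exact ⟨s * k * r, by ring⟩) hQd
      rw [hw] at h1
      have := Om_sq hf
      omega
    · obtain ⟨rfl, rfl⟩ := hl rfl hz
      have hw3 : w = 3 := by norm_num at hw; omega
      subst hw3
      have h3 := Om_pos (show 1 < 3 by norm_num)
      have hk1 : k = 1 := by
        by_contra hc
        have := Om_pos (show 1 < k by omega)
        omega
      subst hk1
      obtain ⟨i, _, hi⟩ := (Nat.dvd_prime_pow Nat.prime_two).1 (show r ∣ 2 ^ 2 from hr)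
      obtain ⟨i', _, hi'⟩ := (Nat.dvd_prime_pow Nat.prime_two).1 (show r' ∣ 2 ^ 2 from hr')
      have hR : oddp (s * r' * 1) = 1 := by
        rw [ht, hi', ← pow_add]; exact oddp_eq odd_one
      rw [hR, Sset, if_pos rfl]
      have hae' : a = 51 * 2 ^ (t + i) := by rw [hae, ht, hi]; ring
      rcases pow_small (m := 0) h4 (Dvd.intro_left _ hae'.symm) with h | h
      · rw [hae', h]; simp
      · rw [hae', h]; simp
  · have hd2 := Om_pos (show 1 < d by omega)
    have hw1 : w = 1 := by
      by_contra hc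
      have := Om_pos (show 1 < w by omega)
      omega
    have hk1 : k = 1 := by
      by_contra hc
      have := Om_pos (show 1 < k by omega)
      omega
    have hqp : (2 ^ f + 1).Prime := Om_prime (by omega) (by omega)
    have hdp : d.Prime := Om_prime (by omega) (by omega)
    subst hw1 hk1
    obtain ⟨m, hm⟩ := Nat.pow_of_pow_add_prime (by norm_num) (by omega) hqp
    rw [hm] at hr hr'
    obtain ⟨i, _, hi⟩ := (Nat.dvd_prime_pow Nat.prime_two).1 hr
    obtain ⟨i', _, hi'⟩ := (Nat.dvd_prime_pow Nat.prime_two).1 hr'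
    have hae' : a = (2 ^ f + 1) * d * 2 ^ (t + i) := by rw [hae, ht, hi]; ring
    rcases hdp.eq_two_or_odd' with h2 | ho
    · have hR : oddp (s * r' * d) = 1 := by
        rw [ht, hi', h2, ← pow_add, ← pow_succ]
        exact (mul_one (2 ^ (t + i' + 1))) ▸ oddp_eq odd_one
      rw [hR, Sset, if_pos rfl]
      have hae2 : a = (2 ^ f + 1) * 2 ^ (t + i + 1) := by rw [hae', h2]; ring
      have h5 := pow_small (m := 0) h4 (Dvd.intro_left _ hae2.symm)
      have h6 : 2 ^ (t + i + 1) = 2 * 2 ^ (t + i) := by ring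
      have h7 : 0 < 2 ^ (t + i) := by positivity
      have h8 : 2 ^ (t + i + 1) = 2 := by omega
      rw [hae2, h8, mul_comm]; simp
    · have hR : oddp (s * r' * d) = d := by
        rw [ht, hi', ← pow_add]; exact oddp_eq ho
      rw [hR, Sset, if_neg hd1]
      rcases pow_small (m := 0) h4 (Dvd.intro_left _ hae'.symm) with h | h
      · rw [hae', h]; simp
      · rw [hae', h]; simp; right; ring

end Fin

section Main
variable {F : Type} [Field F] [Fintype F] [CharP F 2]
variable {G : Type} [Group G] [Fintype G] {N M : Subgroup G} [hNn : N.Normal] [hMn : M.Normal]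

theorem main_aux (S : Stp F N M) {f : ℕ} (hf : 4 ≤ f) (hF : Nat.card F = 2 ^ f) (hG : TwoPrimeHypothesis G)
    (hNM : N ≤ M) (B : Set ℕ)
    (hB : ∀ n ∈ B, ∃ θ χ : G → ℂ, IrrOn N θ ∧ (∃ m ∈ M, cj m θ ≠ θ) ∧ IrrOn (⊤ : Subgroup G) χ ∧
      ip N χ θ ≠ 0 ∧ dg χ = n ∧ n ≠ Nat.card F) : B.ncard ≤ 5 := by
  have h16 : 16 ≤ 2 ^ f := (Nat.pow_le_pow_right (by norm_num) hf : 2 ^ 4 ≤ 2 ^ f)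
  set Q := (2 ^ f + 1) * (2 ^ f - 1) with hQ
  have hex1 : ∃ c : ℕ, ∀ n ∈ charDegrees G, n ≠ 0 → 4 * (2 ^ f + 1) ∣ n → n = c := by
    by_cases h : ∃ c ∈ charDegrees G, c ≠ 0 ∧ 4 * (2 ^ f + 1) ∣ c
    · obtain ⟨c, hc, hc0, hcd⟩ := h
      refine ⟨c, fun n hn hn0 hd => ?_⟩
      by_contra hne
      have := tp hG hn hc hne hn0 hd hcd
      have := Om_four (show 1 < 2 ^ f + 1 by omega)
      omega
    · exact ⟨0, fun n hn hn0 hd => (h ⟨n, hn, hn0, hd⟩).elim⟩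
  have hex2 : ∃ c : ℕ, ∀ n ∈ charDegrees G, n ≠ 0 → Q ∣ n → n = c := by
    by_cases h : ∃ c ∈ charDegrees G, c ≠ 0 ∧ Q ∣ c
    · obtain ⟨c, hc, hc0, hcd⟩ := h
      refine ⟨c, fun n hn hn0 hd => ?_⟩
      by_contra hne
      have h1 := tp hG hn hc hne hn0 hd hcd
      have h2 := Om_sq hf
      rw [← hQ] at h2
      omega
    · exact ⟨0, fun n hn hn0 hd => (h ⟨n, hn, hn0, hd⟩).elim⟩
  obtain ⟨c1, hc1⟩ := hex1
  obtain ⟨c2, hc2⟩ := hex2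
  have hsub : B ⊆ ↑(({c1, c2} : Finset ℕ) ∪ Sset f (oddp (c2 / Q))) := by
    intro n hn
    obtain ⟨θ, χ, hθ, hni, hχ, hov, rfl, hq⟩ := hB n hn
    have hmem := irr_top_mem hχ
    have hpos := hχ.dg_pos.ne'
    simp only [Finset.coe_union, Set.mem_union, Finset.mem_coe, Finset.mem_insert, Finset.mem_singleton]
    by_cases h4 : 4 ∣ dg χ
    · left; left
      obtain ⟨-, h1, -, -⟩ := S.D2 hf hF hG hNM hθ hni hχ hov hq
      rw [hF] at h1
      apply hc1 _ hmem hpos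
      apply Nat.Coprime.mul_dvd_of_dvd_of_dvd _ h4 h1
      have : Odd (2 ^ f + 1) := Even.add_one (by rw [Nat.even_pow]; exact ⟨even_two, by omega⟩)
      exact Nat.Coprime.pow_left 2 (Nat.coprime_two_left.2 this)
    · obtain ⟨S', j, z, w, hP⟩ := S.D3 hf hF hG hNM hθ hni hχ hov hq h4
      have hD := S'.D5 hf hF hNM hθ hχ hov h4 hP
      obtain ⟨a0, ha0, ha00, hd, hor⟩ := dat_arith hG hf hmem hpos h4 hD
        (fun h1 h2 => S'.D6 hf hF hG hNM hθ h1 hP h2)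
      have := hc2 a0 ha0 ha00 hd
      rw [this] at hor
      rcases hor with h | h
      · left; right; exact h
      · right; exact h
  calc B.ncard ≤ (↑(({c1, c2} : Finset ℕ) ∪ Sset f (oddp (c2 / Q))) : Set ℕ).ncard :=
        Set.ncard_le_ncard hsub (Finset.finite_toSet _)
    _ = (({c1, c2} : Finset ℕ) ∪ Sset f (oddp (c2 / Q))).card := Set.ncard_coe_finset _
    _ ≤ ({c1, c2} : Finset ℕ).card + (Sset f (oddp (c2 / Q))).card := Finset.card_union_le _ _
    _ ≤ 2 + 3 := Nat.add_le_add Finset.card_le_two (Sset_card _ _)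

end Main
end PartE5

/-- Let `q = 2^f` with `f ≥ 4` and `G` a finite group satisfying the two-prime hypothesis
with normal subgroups `N ≤ M` such that `M/N ≅ PSL₂(q)` and the centralizer of `M/N` in
`G/N` is trivial.  Then the union `B₂`, over all irreducible characters `θ` of `N` that are
not `M`-invariant, of `cd(G|θ) \ cd(G/N)`, has at most `5` elements. -/
theorem B2_bound_psl2_even
    (f : ℕ) (hf : 4 ≤ f)
    (F : Type) [Field F] [Fintype F] (hF : Fintype.card F = 2 ^ f)
    (G : Type) [Group G] [Finite G] (hG : TwoPrimeHypothesis G)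
    (N M : Subgroup G) [N.Normal] [M.Normal] (hNM : N ≤ M)
    (hiso : Nonempty ((M.map (QuotientGroup.mk' N)) ≃* PSL2 F))
    (hcent : Subgroup.centralizer ((M.map (QuotientGroup.mk' N)) : Set (G ⧸ N)) = ⊥) :
    {n | ∃ θ : FDRep ℂ N, Simple θ ∧ ¬ IsMInvariant M θ ∧
      n ∈ charDegreesOver G N θ ∧ n ∉ charDegrees (G ⧸ N)}.ncard ≤ 5 := by
  have hchar : CharP F 2 := by
    obtain ⟨p, hp⟩ := CharP.exists F
    obtain ⟨n, hpp, hn⟩ := FiniteField.card F p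
    have h1 : p ∣ 2 ^ f := by
      rw [← hF, hn]; exact dvd_pow_self p n.pos.ne'
    have h2 := (Nat.prime_dvd_prime_iff_eq hpp Nat.prime_two).1 (hpp.dvd_of_dvd_pow h1)
    rw [← h2]; exact hp
  have hF' : Nat.card F = 2 ^ f := by rw [Nat.card_eq_fintype_card, hF]
  have := Fintype.ofFinite G
  obtain ⟨S⟩ := exists_stp (F := F) hNM hiso hcent
  apply main_aux S hf hF' hG hNM
  rintro n ⟨θ, hθ, hni, ⟨V, hV, rfl, hov⟩, hnot⟩
  obtain ⟨h1, h2⟩ := irr_of_top V hV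
  refine ⟨ext0 N θ.character, V.character, ⟨θ, hθ, rfl⟩, ?_, h1, ?_, h2, ?_⟩
  · by_contra hc
    push Not at hc
    apply hni
    intro m hm x hx
    have h3 := congrFun (hc m hm) (x : G)
    simp only [cj] at h3
    rw [ext0_mem hx, ext0_mem x.2] at h3
    exact h3
  · exact (over_iff V θ).1 hov
  · intro h
    apply hnot
    rw [h]; exact S.degGN hNM f (by omega) hF'
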